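/- arXiv:2306.10922 — 2 statements merged into one kernel-verified Lean document; each statement's English description precedes it below -/
import Mathlib

section
/- Let B^H = {B^H(t), t ∈ [0,1]} be a d-dimensional fractional Brownian motion of Hurst index H ∈ (0,1) and let I = [a,b] with 0 < a < b ≤ 1. Then there exist a function f : I → ℝ^d that is (H−τ)-Hölder continuous for every τ ∈ (0,H) but not H-Hölder continuous, and compact sets E ⊆ I and F ⊆ ℝ^d, such that C^{d}_{ρ_{d_H}}(E × F) = ℋ^{d}_{ρ_{d_H}}(E × F) = 0 while ℙ{(B^H + f)(E) ∩ F ≠ ∅} > 0. In particular the two-sided hitting estimate c^{−1} C^{d}_{ρ_{d_H}}(E×F) ≤ ℙ{(B^H+f)(E)∩F≠∅} ≤ c ℋ^{d}_{ρ_{d_H}}(E×F) fails for such a drift f. -/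
open MeasureTheory Set ENNReal

/-- The `β`-dimensional Hausdorff measure of `G` with respect to the distance
function `ρ`, defined via countable coverings by `ρ`-balls of radii at most `δ`,
letting `δ → 0` (i.e. taking the supremum over `δ > 0`). -/
noncomputable def hMeasure {X : Type*} (ρ : X → X → ℝ) (β : ℝ) (G : Set X) : ℝ≥0∞ :=
  ⨆ (δ : ℝ) (_ : 0 < δ), ⨅ (c : ℕ → X) (r : ℕ → ℝ)
    (_ : ∀ n, 0 < r n ∧ r n ≤ δ) (_ : G ⊆ ⋃ n, {y | ρ y (c n) < r n}),
    ∑' n, ENNReal.ofReal ((2 * r n) ^ β)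

/-- The radial kernel `φ_α` : `r^{-α}` for `α > 0`, `log(e / (r ⊓ 1))` for `α = 0`,
and `1` for `α < 0`. -/
noncomputable def radialKernel (α : ℝ) (r : ℝ) : ℝ≥0∞ :=
  if 0 < α then ENNReal.ofReal r ^ (-α)
  else if α = 0 then ENNReal.ofReal (Real.log (Real.exp 1 / min r 1))
  else 1

/-- The `φ_α`-energy of a measure `μ` with respect to the distance function `ρ`. -/
noncomputable def energy {X : Type*} [MeasurableSpace X] (ρ : X → X → ℝ) (α : ℝ)
    (μ : MeasureTheory.Measure X) : ℝ≥0∞ :=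
  ∫⁻ u, ∫⁻ v, radialKernel α (ρ u v) ∂μ ∂μ

/-- The Bessel–Riesz capacity of order `α` of `G` with respect to the distance
function `ρ`: the reciprocal of the infimum of `φ_α`-energies over probability
measures carried by `G` (equal to `0` if every such energy is infinite). -/
noncomputable def capacity {X : Type*} [MeasurableSpace X] (ρ : X → X → ℝ) (α : ℝ)
    (G : Set X) : ℝ≥0∞ :=
  (⨅ (μ : MeasureTheory.Measure X) (_ : MeasureTheory.IsProbabilityMeasure μ)
    (_ : μ Gᶜ = 0), energy ρ α μ)⁻¹

/-- Covariance function of fractional Brownian motion of Hurst index `H`. -/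
noncomputable def fbmCov (H s t : ℝ) : ℝ :=
  (|s| ^ (2 * H) + |t| ^ (2 * H) - |t - s| ^ (2 * H)) / 2

/-- `B` is a `d`-dimensional fractional Brownian motion of Hurst index `H` on `[0,1]`
under the probability measure `ℙ`: its coordinates are independent copies of a
real-valued centered Gaussian process with continuous sample paths, starting at `0`,
whose covariance is `fbmCov H`. -/
structure IsFBM {Ω : Type*} [MeasurableSpace Ω] (ℙ : MeasureTheory.Measure Ω)
    (H : ℝ) (d : ℕ) (B : Ω → ℝ → EuclideanSpace ℝ (Fin d)) : Prop where
  meas : ∀ t : ℝ, Measurable fun ω => B ω t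
  cont : ∀ ω, ContinuousOn (fun t => B ω t) (Set.Icc 0 1)
  start : ∀ ω, B ω 0 = 0
  indep : ProbabilityTheory.iIndepFun
      (fun (i : Fin d) (ω : Ω) => fun t : ℝ => B ω t i) ℙ
  gaussian : ∀ i : Fin d, ∀ (n : ℕ) (t : Fin n → ℝ) (a : Fin n → ℝ),
      (∀ j, t j ∈ Set.Icc (0 : ℝ) 1) →
      ∃ v : NNReal, (v : ℝ) = ∑ j, ∑ k, a j * a k * fbmCov H (t j) (t k) ∧
        MeasureTheory.Measure.map (fun ω => ∑ j, a j * B ω (t j) i) ℙ =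
          ProbabilityTheory.gaussianReal 0 v

/-- The parabolic metric `ρ_{d_H}((s,x),(t,y)) = max(|t-s|^H, ‖x-y‖)` on `ℝ × ℝ^d`. -/
noncomputable def parabolicDist (H : ℝ) {d : ℕ}
    (p q : ℝ × EuclideanSpace ℝ (Fin d)) : ℝ :=
  max (|p.1 - q.1| ^ H) (dist p.2 q.2)

/-- `f` is `γ`-Hölder continuous on `s`. -/
def HolderWithExp {E : Type*} [NormedAddCommGroup E] (f : ℝ → E) (γ : ℝ) (s : Set ℝ) : Prop :=
  ∃ K : ℝ, ∀ x ∈ s, ∀ y ∈ s, ‖f x - f y‖ ≤ K * |x - y| ^ γ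

noncomputable def cS (c : ℕ → ℝ) (x : ℝ) : ℝ := ∑' m, c m * (⌊2 ^ m * x⌋₊ : ℝ)

section detS
variable {c : ℕ → ℝ} {ρ : ℝ}

lemma cS_geo (hc : ∀ k, 0 < c k) (hρ0 : 0 < ρ) (hr : ∀ k, c (k+1) ≤ ρ * c k) (k i : ℕ) :
    c (i + k) ≤ ρ ^ i * c k := by
  induction i with
  | zero => simp
  | succ n ih =>
    calc c (n + 1 + k) = c (n + k + 1) := by ring_nf
      _ ≤ ρ * c (n + k) := hr _
      _ ≤ ρ * (ρ ^ n * c k) := by gcongr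
      _ = _ := by ring

lemma cS_summable (hc : ∀ k, 0 < c k) (hρ0 : 0 < ρ) (hρ : ρ < 1/2) (hr : ∀ k, c (k+1) ≤ ρ * c k)
    {x : ℝ} (hx : x ∈ Icc (0:ℝ) 1) : Summable (fun m => c m * (⌊2 ^ m * x⌋₊ : ℝ)) := by
  refine Summable.of_nonneg_of_le (f := fun m => c 0 * (2 * ρ) ^ m) ?_ ?_ ?_
  · intro m; have := hc m; positivity
  · intro m
    have h1 := cS_geo hc hρ0 hr 0 m
    have h2 : (⌊2 ^ m * x⌋₊ : ℝ) ≤ 2 ^ m := by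
      calc (⌊2 ^ m * x⌋₊ : ℝ) ≤ 2 ^ m * x := Nat.floor_le (by have := hx.1; positivity)
        _ ≤ 2 ^ m * 1 := by gcongr; exact hx.2
        _ = _ := by ring
    calc _ ≤ (ρ ^ m * c 0) * 2 ^ m := by
          have := hc 0
          gcongr; simpa using h1
      _ = _ := by rw [mul_pow]; ring
  · exact (summable_geometric_of_lt_one (by positivity) (by linarith)).mul_left _

lemma cS_mono (hc : ∀ k, 0 < c k) (hρ0 : 0 < ρ) (hρ : ρ < 1/2) (hr : ∀ k, c (k+1) ≤ ρ * c k)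
    {x y : ℝ} (hx : x ∈ Icc (0:ℝ) 1) (hy : y ∈ Icc (0:ℝ) 1) (hxy : x ≤ y) : cS c x ≤ cS c y := by
  refine Summable.tsum_le_tsum ?_ (cS_summable hc hρ0 hρ hr hx) (cS_summable hc hρ0 hρ hr hy)
  intro m; have := hc m; gcongr

lemma cS_gap (hc : ∀ k, 0 < c k) (hρ0 : 0 < ρ) (hρ : ρ < 1/2) (hr : ∀ k, c (k+1) ≤ ρ * c k)
    {x y : ℝ} (hx : x ∈ Icc (0:ℝ) 1) (hy : y ∈ Icc (0:ℝ) 1) (hxy : x ≤ y) (k : ℕ)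
    (hk : ⌊2 ^ k * x⌋₊ < ⌊2 ^ k * y⌋₊) : cS c x + c k ≤ cS c y := by
  have s1 := cS_summable hc hρ0 hρ hr hx
  have s2 := cS_summable hc hρ0 hρ hr hy
  have h : c k * (⌊2 ^ k * y⌋₊ : ℝ) - c k * (⌊2 ^ k * x⌋₊ : ℝ) ≤
      ∑' m, (c m * (⌊2 ^ m * y⌋₊ : ℝ) - c m * (⌊2 ^ m * x⌋₊ : ℝ)) := by
    refine (s2.sub s1).le_tsum k ?_
    intro m _
    rw [sub_nonneg]
    have := hc m; gcongr
  rw [s2.tsum_sub s1] at h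
  have h3 : (⌊2 ^ k * x⌋₊ : ℝ) + 1 ≤ ⌊2 ^ k * y⌋₊ := by exact_mod_cast hk
  have := hc k
  unfold cS
  nlinarith

lemma floor_mono_level {x y : ℝ} {k m : ℕ} (hmk : m ≤ k) (h : ⌊2 ^ k * x⌋₊ = ⌊2 ^ k * y⌋₊) :
    ⌊2 ^ m * x⌋₊ = ⌊2 ^ m * y⌋₊ := by
  have key : ∀ z : ℝ, ⌊2 ^ m * z⌋₊ = ⌊2 ^ k * z⌋₊ / 2 ^ (k - m) := by
    intro z
    rw [← Nat.floor_div_natCast]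
    congr 1
    push_cast
    rw [_root_.eq_div_iff (by positivity), mul_right_comm, ← pow_add]
    congr 2; omega
  rw [key, key, h]

lemma cS_close (hc : ∀ k, 0 < c k) (hρ0 : 0 < ρ) (hρ : ρ < 1/2) (hr : ∀ k, c (k+1) ≤ ρ * c k)
    {x y : ℝ} (hx : x ∈ Icc (0:ℝ) 1) (hy : y ∈ Icc (0:ℝ) 1) (k : ℕ)
    (hk : ⌊2 ^ k * x⌋₊ = ⌊2 ^ k * y⌋₊) : |cS c x - cS c y| ≤ 2 / (1 - 2 * ρ) * c k := by
  wlog hxy : y ≤ x generalizing x y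
  · rw [abs_sub_comm]; exact this hy hx hk.symm (by linarith)
  rw [abs_of_nonneg (sub_nonneg.2 (cS_mono hc hρ0 hρ hr hy hx hxy))]
  have s1 := cS_summable hc hρ0 hρ hr hx
  have s2 := cS_summable hc hρ0 hρ hr hy
  have s3 := s1.sub s2
  unfold cS
  rw [← s1.tsum_sub s2, ← s3.sum_add_tsum_nat_add k, Finset.sum_eq_zero, zero_add]
  · have hg : Summable (fun i : ℕ => 2 * c k * (2 * ρ) ^ i) :=
      (summable_geometric_of_lt_one (by positivity) (by linarith)).mul_left _
    calc _ ≤ ∑' i : ℕ, 2 * c k * (2 * ρ) ^ i := by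
          refine Summable.tsum_le_tsum ?_ ((summable_nat_add_iff k).2 s3) hg
          intro i
          have hxk : x - y ≤ 1 / 2 ^ k := by
            have h1 : 2 ^ k * x < ⌊2 ^ k * x⌋₊ + 1 := Nat.lt_floor_add_one _
            have h2 : (⌊2 ^ k * y⌋₊ : ℝ) ≤ 2 ^ k * y := Nat.floor_le (by have := hy.1; positivity)
            rw [hk] at h1
            rw [le_div_iff₀ (by positivity)]
            nlinarith
          have h1 : (⌊2 ^ (i+k) * x⌋₊ : ℝ) ≤ 2 ^ (i+k) * x := Nat.floor_le (by have := hx.1; positivity)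
          have h2 : 2 ^ (i+k) * y < (⌊2 ^ (i+k) * y⌋₊ : ℝ) + 1 := Nat.lt_floor_add_one _
          have h3 : (2:ℝ) ^ (i+k) * (x - y) ≤ 2 ^ i := by
            calc (2:ℝ) ^ (i+k) * (x - y) ≤ 2 ^ (i+k) * (1 / 2 ^ k) := by gcongr
              _ = _ := by rw [pow_add]; field_simp
          have h4 : (⌊2 ^ (i+k) * x⌋₊ : ℝ) - ⌊2 ^ (i+k) * y⌋₊ ≤ 2 * 2 ^ i := by
            have : (1:ℝ) ≤ 2 ^ i := one_le_pow₀ (by norm_num)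
            nlinarith
          have h5 := cS_geo hc hρ0 hr k i
          have := hc k
          have := hc (i+k)
          calc _ = c (i+k) * ((⌊2 ^ (i+k) * x⌋₊ : ℝ) - ⌊2 ^ (i+k) * y⌋₊) := by ring
            _ ≤ c (i+k) * (2 * 2 ^ i) := by gcongr
            _ ≤ (ρ ^ i * c k) * (2 * 2 ^ i) := by gcongr
            _ = _ := by rw [mul_pow]; ring
      _ = _ := by
        rw [tsum_mul_left, tsum_geometric_of_lt_one (by positivity) (by linarith)]
        field_simp
  · intro m hm
    rw [floor_mono_level (Finset.mem_range.1 hm).le hk, sub_self]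

lemma cS_zero : cS c 0 = 0 := by simp [cS]

lemma cS_le (hc : ∀ k, 0 < c k) (hρ0 : 0 < ρ) (hρ : ρ < 1/2) (hr : ∀ k, c (k+1) ≤ ρ * c k)
    {x : ℝ} (hx : x ∈ Icc (0:ℝ) 1) : cS c x ∈ Icc 0 (2 / (1 - 2 * ρ) * c 0) := by
  constructor
  · rw [← cS_zero (c := c)]; exact cS_mono hc hρ0 hρ hr (by simp) hx hx.1
  · have hg : Summable (fun i : ℕ => 2 * c 0 * (2 * ρ) ^ i) :=
      (summable_geometric_of_lt_one (by positivity) (by linarith)).mul_left _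
    calc _ ≤ ∑' i : ℕ, 2 * c 0 * (2 * ρ) ^ i := by
          refine Summable.tsum_le_tsum ?_ (cS_summable hc hρ0 hρ hr hx) hg
          intro m
          have h1 := cS_geo hc hρ0 hr 0 m
          have h2 : (⌊2 ^ m * x⌋₊ : ℝ) ≤ 2 ^ m := by
            calc (⌊2 ^ m * x⌋₊ : ℝ) ≤ 2 ^ m * x := Nat.floor_le (by have := hx.1; positivity)
              _ ≤ 2 ^ m * 1 := by gcongr; exact hx.2
              _ = _ := by ring
          have := hc 0
          calc _ ≤ (ρ ^ m * c 0) * (2 * 2 ^ m) := by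
                gcongr; simpa using h1
                linarith [show (0:ℝ) ≤ 2 ^ m by positivity]
            _ = _ := by rw [mul_pow]; ring
      _ = _ := by
        rw [tsum_mul_left, tsum_geometric_of_lt_one (by positivity) (by linarith)]
        field_simp

lemma exists_floor_lt {x y : ℝ} (hx : 0 ≤ x) (hxy : x < y) : ∃ k : ℕ, ⌊2 ^ k * x⌋₊ < ⌊2 ^ k * y⌋₊ := by
  obtain ⟨k, hk⟩ := pow_unbounded_of_one_lt (1 / (y - x)) (one_lt_two (α := ℝ))
  refine ⟨k, ?_⟩
  rw [div_lt_iff₀ (by linarith)] at hk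
  have h1 : (⌊2 ^ k * x⌋₊ : ℝ) ≤ 2 ^ k * x := Nat.floor_le (by positivity)
  rw [← Nat.add_one_le_iff]
  apply Nat.le_floor
  push_cast
  nlinarith

lemma cS_strict (hc : ∀ k, 0 < c k) (hρ0 : 0 < ρ) (hρ : ρ < 1/2) (hr : ∀ k, c (k+1) ≤ ρ * c k)
    {x y : ℝ} (hx : x ∈ Icc (0:ℝ) 1) (hy : y ∈ Icc (0:ℝ) 1) (hxy : x < y) : cS c x < cS c y := by
  obtain ⟨k, hk⟩ := exists_floor_lt hx.1 hxy
  have := cS_gap hc hρ0 hρ hr hx hy hxy.le k hk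
  linarith [hc k]

noncomputable def gInv (c : ℕ → ℝ) (a t : ℝ) : ℝ := sSup {x | x ∈ Icc (0:ℝ) 1 ∧ a + cS c x ≤ t}

lemma gInv_apply (hc : ∀ k, 0 < c k) (hρ0 : 0 < ρ) (hρ : ρ < 1/2) (hr : ∀ k, c (k+1) ≤ ρ * c k)
    (a : ℝ) {x : ℝ} (hx : x ∈ Icc (0:ℝ) 1) : gInv c a (a + cS c x) = x := by
  have : {y | y ∈ Icc (0:ℝ) 1 ∧ a + cS c y ≤ a + cS c x} = Icc 0 x := by
    ext y
    constructor
    · rintro ⟨hy, h⟩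
      refine ⟨hy.1, ?_⟩
      by_contra! hlt
      linarith [cS_strict hc hρ0 hρ hr hx hy hlt]
    · intro hy
      have hy' : y ∈ Icc (0:ℝ) 1 := ⟨hy.1, hy.2.trans hx.2⟩
      exact ⟨hy', by linarith [cS_mono hc hρ0 hρ hr hy' hx hy.2]⟩
  rw [gInv, this, csSup_Icc hx.1]

lemma gInv_bdd (a t : ℝ) : BddAbove {x | x ∈ Icc (0:ℝ) 1 ∧ a + cS c x ≤ t} :=
  ⟨1, fun _ h => h.1.2⟩

lemma gInv_ne {a t : ℝ} (h : a ≤ t) : (0:ℝ) ∈ {x | x ∈ Icc (0:ℝ) 1 ∧ a + cS c x ≤ t} := by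
  simp [cS_zero, h]

lemma gInv_mem {a t : ℝ} (h : a ≤ t) : gInv c a t ∈ Icc (0:ℝ) 1 :=
  ⟨le_csSup (gInv_bdd a t) (gInv_ne h), csSup_le ⟨0, gInv_ne h⟩ fun _ h => h.1.2⟩

lemma gInv_mono {a s t : ℝ} (h : a ≤ s) (hst : s ≤ t) : gInv c a s ≤ gInv c a t :=
  csSup_le_csSup (gInv_bdd a t) ⟨0, gInv_ne h⟩ fun _ hx => ⟨hx.1, hx.2.trans hst⟩

lemma gInv_mod (hc : ∀ k, 0 < c k) (hρ0 : 0 < ρ) (hρ : ρ < 1/2) (hr : ∀ k, c (k+1) ≤ ρ * c k)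
    {a s t : ℝ} (h : a ≤ s) (hst : s ≤ t) (k : ℕ) (hk : t - s < c k) :
    gInv c a t - gInv c a s ≤ (1/2) ^ k := by
  by_contra! hlt
  have h1 : gInv c a s + (1/2) ^ k < sSup {x | x ∈ Icc (0:ℝ) 1 ∧ a + cS c x ≤ t} := by
    rw [← gInv]; linarith
  obtain ⟨y, hy, hlt'⟩ := exists_lt_of_lt_csSup ⟨0, gInv_ne (h.trans hst)⟩ h1
  have hp : (0:ℝ) < (1/2)^k := by positivity
  have hs := (gInv_mem (c := c) h).1
  set x := y - (1/2)^k with hxdef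
  have hx : x ∈ Icc (0:ℝ) 1 := ⟨by linarith, by linarith [hy.1.2]⟩
  have hxs : s < a + cS c x := by
    by_contra! hle
    have : x ≤ gInv c a s := le_csSup (gInv_bdd a s) ⟨hx, hle⟩
    linarith
  have hf : ⌊2 ^ k * x⌋₊ < ⌊2 ^ k * y⌋₊ := by
    have h2 : (⌊2 ^ k * x⌋₊ : ℝ) ≤ 2 ^ k * x := Nat.floor_le (by have := hx.1; positivity)
    rw [← Nat.add_one_le_iff]
    apply Nat.le_floor
    push_cast
    have : (2:ℝ)^k * (1/2)^k = 1 := by rw [← mul_pow]; norm_num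
    rw [hxdef] at h2 ⊢
    nlinarith
  have := cS_gap hc hρ0 hρ hr hx hy.1 (by linarith) k hf
  linarith [hy.2]
end detS

/-! the fat Cantor set -/
noncomputable def fatK (η : ℝ) : Set ℝ :=
  {x | x ∈ Icc (0:ℝ) 1 ∧ ∀ k : ℕ, ∀ j ∈ Finset.range (2 ^ k + 1), η * (1/2)^k / (k+1)^2 ≤ |x - j / 2 ^ k|}

lemma fatK_compact (η : ℝ) : IsCompact (fatK η) := by
  have : fatK η = Icc (0:ℝ) 1 ∩ ⋂ (k : ℕ), ⋂ j ∈ Finset.range (2 ^ k + 1),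
      {x : ℝ | η * (1/2)^k / (k+1)^2 ≤ |x - j / 2 ^ k|} := by
    ext x; simp [fatK]
  rw [this]
  refine isCompact_Icc.inter_right (isClosed_iInter fun k => isClosed_biInter fun j _ => ?_)
  exact isClosed_le continuous_const (by fun_prop)

lemma fatK_pos : ∃ η : ℝ, 0 < η ∧ 0 < volume (fatK η) := by
  have hs : Summable (fun k : ℕ => 1 / ((k:ℝ)+1)^2) := by
    have := (summable_nat_add_iff 1).2 (Real.summable_one_div_nat_pow.2 (le_refl 2))
    simpa using this
  set S := ∑' k : ℕ, 1 / ((k:ℝ)+1)^2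
  have hS : 0 ≤ S := tsum_nonneg fun k => by positivity
  set η := 1 / (8 * (S + 1)) with hη
  have hη0 : 0 < η := by positivity
  refine ⟨η, hη0, ?_⟩
  by_contra! h0
  have hsub : Icc (0:ℝ) 1 ⊆ fatK η ∪ ⋃ (k : ℕ), ⋃ j ∈ Finset.range (2 ^ k + 1),
      Metric.ball ((j:ℝ) / 2 ^ k) (η * (1/2)^k / (k+1)^2) := by
    intro x hx
    by_cases hK : x ∈ fatK η
    · exact Or.inl hK
    · right
      simp only [fatK, mem_ofPred_eq, not_and, not_forall] at hK
      obtain ⟨k, j, hj, hlt⟩ := hK hx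
      simp only [mem_iUnion]
      exact ⟨k, j, hj, by rw [Metric.mem_ball, Real.dist_eq]; exact not_le.1 hlt⟩
  have h1 : volume (Icc (0:ℝ) 1) ≤ 0 + ∑' k : ℕ, ENNReal.ofReal (4 * η * (1 / ((k:ℝ)+1)^2)) := by
    refine (measure_mono hsub).trans ((measure_union_le _ _).trans ?_)
    refine add_le_add h0 ((measure_iUnion_le _).trans (ENNReal.tsum_le_tsum fun k => ?_))
    refine (measure_biUnion_finset_le _ _).trans ?_
    simp only [Real.volume_ball, Finset.sum_const, Finset.card_range, nsmul_eq_mul]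
    rw [← ENNReal.ofReal_natCast, ← ENNReal.ofReal_mul (by positivity)]
    apply ENNReal.ofReal_le_ofReal
    push_cast
    have h2 : (1:ℝ) ≤ 2 ^ k := one_le_pow₀ (by norm_num)
    have h3 : (2:ℝ)^k * (1/2)^k = 1 := by rw [← mul_pow]; norm_num
    calc ((2:ℝ)^k + 1) * (2 * (η * (1/2)^k / (k+1)^2)) ≤ (2 * 2^k) * (2 * (η * (1/2)^k / (k+1)^2)) := by
          gcongr; linarith
      _ = ((2:ℝ)^k * (1/2)^k) * (4 * η * (1 / ((k:ℝ)+1)^2)) := by ring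
      _ = _ := by rw [h3, one_mul]
  rw [zero_add, ← ENNReal.ofReal_tsum_of_nonneg (fun k => by positivity) (hs.mul_left _), tsum_mul_left,
    Real.volume_Icc] at h1
  have h2 := (ENNReal.ofReal_le_ofReal_iff (by positivity)).1 h1
  have h3 : 4 * η * S < 1 := by
    rw [hη, mul_one_div, div_mul_eq_mul_div, div_lt_one (by positivity)]; linarith
  linarith

lemma fatK_sep {η : ℝ} {x y : ℝ} (hx : x ∈ fatK η) (hy : y ∈ fatK η) (k : ℕ)
    (hk : ⌊2 ^ k * x⌋₊ ≠ ⌊2 ^ k * y⌋₊) : η * (1/2)^k / (k+1)^2 ≤ |x - y| := by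
  wlog hlt : ⌊2 ^ k * x⌋₊ < ⌊2 ^ k * y⌋₊ generalizing x y
  · rw [abs_sub_comm]; exact this hy hx hk.symm (by omega)
  have hy0 := hy.1.1
  have hy1 := hy.1.2
  have h1 : (⌊2 ^ k * y⌋₊ : ℝ) ≤ 2 ^ k * y := Nat.floor_le (by positivity)
  have h2 : 2 ^ k * x < (⌊2 ^ k * y⌋₊ : ℝ) := (Nat.floor_lt (by have := hx.1.1; positivity)).1 hlt
  have h3 : ⌊2 ^ k * y⌋₊ ≤ 2 ^ k := by
    have : (⌊2 ^ k * y⌋₊ : ℝ) ≤ 2 ^ k := h1.trans (by nlinarith [show (0:ℝ) < 2 ^ k by positivity])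
    exact_mod_cast this
  have h4 := hx.2 k ⌊2 ^ k * y⌋₊ (by simp; omega)
  refine h4.trans ?_
  have h5 : x < (⌊2 ^ k * y⌋₊ : ℝ) / 2 ^ k := by rw [lt_div_iff₀ (by positivity)]; linarith
  have h6 : (⌊2 ^ k * y⌋₊ : ℝ) / 2 ^ k ≤ y := by rw [div_le_iff₀ (by positivity)]; linarith
  rw [abs_of_neg (by linarith), abs_of_neg (by linarith)]
  linarith

lemma fatK_lt_one {η : ℝ} (hη : 0 < η) {x : ℝ} (hx : x ∈ fatK η) : x < 1 := by
  have := hx.2 0 1 (by simp)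
  rcases lt_or_eq_of_le hx.1.2 with h | h
  · exact h
  · simp [h] at this; linarith

lemma hMeasure_zero_of_fin {X : Type*} [Nonempty X] (ρ : X → X → ℝ) (d : ℕ) (hd : 0 < d) (G : Set X)
    (h : ∀ δ > 0, ∀ ε > 0, ∃ (N : ℕ) (c : Fin N → X) (r : ℝ), 0 < r ∧ r ≤ δ ∧
      (∀ y ∈ G, ∃ i, ρ y (c i) < r) ∧ N * (2 * r) ^ d ≤ ε) :
    hMeasure ρ (d:ℝ) G = 0 := by
  unfold hMeasure
  simp only [ENNReal.iSup_eq_zero]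
  intro δ hδ
  refine le_antisymm (ENNReal.le_of_forall_pos_le_add fun ε hε _ => ?_) bot_le
  rw [zero_add]
  obtain ⟨N, c, r, hr, hrδ, hcov, hN⟩ := h δ hδ (ε/2) (by positivity)
  have hd' : (0:ℝ) < d := by exact_mod_cast hd
  have hεr : (0:ℝ) < ε := hε
  have hx : ∀ n : ℕ, (0:ℝ) < ((ε:ℝ)/2 * (1/2) * (1/2)^n) ^ (1/(d:ℝ)) := fun n => by positivity
  let r' : ℕ → ℝ := fun n => if n < N then r else min δ (((ε:ℝ)/2 * (1/2) * (1/2)^n) ^ (1/(d:ℝ)) / 2)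
  let c' : ℕ → X := fun n => if h : n < N then c ⟨n, h⟩ else Classical.arbitrary X
  refine (iInf₂_le c' r').trans ((iInf₂_le ?_ ?_).trans ?_)
  · intro n
    simp only [r']
    split_ifs
    · exact ⟨hr, hrδ⟩
    · exact ⟨lt_min hδ (by have := hx n; positivity), min_le_left _ _⟩
  · intro y hy
    obtain ⟨i, hi⟩ := hcov y hy
    refine mem_iUnion.2 ⟨i, ?_⟩
    simp [r', c', hi]
  · have hb : ∀ n, ENNReal.ofReal ((2 * r' n) ^ (d:ℝ)) ≤
        (if n < N then ENNReal.ofReal ((2 * r)^d) else 0) + ENNReal.ofReal ((ε:ℝ)/2 * (1/2) * (1/2)^n) := by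
      intro n
      by_cases hn : n < N
      · simp [r', hn]
      · simp only [r', hn, if_false, zero_add]
        apply ENNReal.ofReal_le_ofReal
        calc _ ≤ (((ε:ℝ)/2 * (1/2) * (1/2)^n) ^ (1/(d:ℝ))) ^ (d:ℝ) := by
              have hm : (0:ℝ) < min δ (((ε:ℝ)/2 * (1/2) * (1/2)^n) ^ (1/(d:ℝ)) / 2) :=
                lt_min hδ (by have := hx n; positivity)
              refine Real.rpow_le_rpow (by positivity) ?_ hd'.le
              linarith [min_le_right δ (((ε:ℝ)/2 * (1/2) * (1/2)^n) ^ (1/(d:ℝ)) / 2)]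
          _ = _ := by
            rw [← Real.rpow_mul (by positivity), one_div_mul_cancel hd'.ne', Real.rpow_one]
    refine (ENNReal.tsum_le_tsum hb).trans ?_
    rw [ENNReal.tsum_add]
    have e1 : ∑' n, (if n < N then ENNReal.ofReal ((2 * r)^d) else 0) ≤ ENNReal.ofReal (ε/2) := by
      rw [tsum_eq_sum (s := Finset.range N)]
      · rw [Finset.sum_congr rfl (g := fun _ => ENNReal.ofReal ((2 * r)^d))]
        · simp only [Finset.sum_const, Finset.card_range, nsmul_eq_mul]
          rw [← ENNReal.ofReal_natCast, ← ENNReal.ofReal_mul (by positivity)]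
          exact ENNReal.ofReal_le_ofReal hN
        · intro n hn; simp [Finset.mem_range.1 hn]
      · intro n hn; simp at hn; simp [hn]
    have e2 : ∑' n : ℕ, ENNReal.ofReal ((ε:ℝ)/2 * (1/2) * (1/2)^n) = ENNReal.ofReal (ε/2) := by
      rw [← ENNReal.ofReal_tsum_of_nonneg (fun n => by positivity)
        ((summable_geometric_of_lt_one (by norm_num) (by norm_num)).mul_left _), tsum_mul_left,
        tsum_geometric_of_lt_one (by norm_num) (by norm_num)]
      congr 1; ring
    rw [e2]
    refine (add_le_add_left e1 _).trans ?_
    rw [← ENNReal.ofReal_add (by positivity) (by positivity), add_halves]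
    simp

lemma parabolic_tri {H : ℝ} (hH : H ∈ Ioo (0:ℝ) 1) {d : ℕ} (p q r : ℝ × EuclideanSpace ℝ (Fin d)) :
    parabolicDist H p r ≤ parabolicDist H p q + parabolicDist H r q := by
  unfold parabolicDist
  apply max_le
  · calc |p.1 - r.1| ^ H ≤ (|p.1 - q.1| + |r.1 - q.1|) ^ H := by
          refine Real.rpow_le_rpow (abs_nonneg _) ?_ hH.1.le
          rw [abs_sub_comm r.1]; exact abs_sub_le _ _ _
      _ ≤ |p.1 - q.1| ^ H + |r.1 - q.1| ^ H := Real.rpow_add_le_add_rpow (abs_nonneg _) (abs_nonneg _) hH.1.le hH.2.le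
      _ ≤ _ := add_le_add (le_max_left _ _) (le_max_left _ _)
  · calc dist p.2 r.2 ≤ dist p.2 q.2 + dist r.2 q.2 := dist_triangle_right _ _ _
      _ ≤ _ := add_le_add (le_max_right _ _) (le_max_right _ _)

lemma capacity_zero {H : ℝ} (hH : H ∈ Ioo (0:ℝ) 1) {d : ℕ} (hd : 0 < d)
    (G : Set (ℝ × EuclideanSpace ℝ (Fin d))) (h0 : hMeasure (parabolicDist H) (d:ℝ) G = 0) :
    capacity (parabolicDist H) (d:ℝ) G = 0 := by
  have hd' : (0:ℝ) < d := by exact_mod_cast hd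
  unfold capacity
  rw [ENNReal.inv_eq_zero]
  simp only [iInf_eq_top]
  intro μ hμ hG
  by_contra hfin
  let U : ℝ × EuclideanSpace ℝ (Fin d) → ℝ≥0∞ := fun u => ∫⁻ v, radialKernel d (parabolicDist H u v) ∂μ
  have hker : ∀ r, radialKernel d r = ENNReal.ofReal r ^ (-(d:ℝ)) := fun r => by simp [radialKernel, hd]
  have hmeas : Measurable U := by
    refine Measurable.lintegral_prod_right' (f := fun p : (ℝ × EuclideanSpace ℝ (Fin d)) × (ℝ × EuclideanSpace ℝ (Fin d)) =>
      radialKernel d (parabolicDist H p.1 p.2)) ?_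
    simp only [hker, parabolicDist]
    have : Measurable fun p : (ℝ × EuclideanSpace ℝ (Fin d)) × (ℝ × EuclideanSpace ℝ (Fin d)) =>
        max (|p.1.1 - p.2.1| ^ H) (dist p.1.2 p.2.2) := by
      refine Measurable.max (by fun_prop) ?_
      exact (measurable_fst.snd).dist (measurable_snd.snd)
    exact this.ennreal_ofReal.pow_const _
  have hae : ∀ᵐ u ∂μ, U u < ⊤ := ae_lt_top hmeas hfin
  have hG' : ∀ᵐ u ∂μ, u ∈ G := by
    rw [ae_iff]; exact hG
  -- level sets
  have hnull : ∀ N : ℕ, μ (G ∩ {u | U u ≤ N}) = 0 := by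
    intro N
    refine le_antisymm (ENNReal.le_of_forall_pos_le_add fun ε hε _ => ?_) bot_le
    rw [zero_add]
    have h1 : (⨅ (c : ℕ → ℝ × EuclideanSpace ℝ (Fin d)) (r : ℕ → ℝ)
      (_ : ∀ n, 0 < r n ∧ r n ≤ 1) (_ : G ⊆ ⋃ n, {y | parabolicDist H y (c n) < r n}),
      ∑' n, ENNReal.ofReal ((2 * r n) ^ (d:ℝ))) = 0 := by
      refine le_antisymm ?_ bot_le
      rw [← h0]
      exact le_iSup₂_of_le (1:ℝ) one_pos le_rfl
    have h2 : (⨅ (c : ℕ → ℝ × EuclideanSpace ℝ (Fin d)) (r : ℕ → ℝ)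
      (_ : ∀ n, 0 < r n ∧ r n ≤ 1) (_ : G ⊆ ⋃ n, {y | parabolicDist H y (c n) < r n}),
      ∑' n, ENNReal.ofReal ((2 * r n) ^ (d:ℝ))) < ε / (N + 1) := by
      rw [h1]; exact ENNReal.div_pos (by exact_mod_cast hε.ne') (by simp)
    simp only [iInf_lt_iff] at h2
    obtain ⟨c, r, hr, hcov, hlt⟩ := h2
    have hball : ∀ n, μ (G ∩ {u | U u ≤ N} ∩ {y | parabolicDist H y (c n) < r n}) ≤
        N * ENNReal.ofReal ((2 * r n) ^ (d:ℝ)) := by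
      intro n
      rcases Set.eq_empty_or_nonempty (G ∩ {u | U u ≤ N} ∩ {y | parabolicDist H y (c n) < r n}) with he | ⟨u, hu⟩
      · simp [he]
      have hr2 : 0 < 2 * r n := by linarith [(hr n).1]
      set s := {y | parabolicDist H u y ≤ 2 * r n} with hs
      have hsub : G ∩ {u | U u ≤ N} ∩ {y | parabolicDist H y (c n) < r n} ⊆ s := by
        intro y hy
        have h1 : parabolicDist H y (c n) < r n := hy.2
        have h2 : parabolicDist H u (c n) < r n := hu.2
        have := parabolic_tri hH u (c n) y
        show parabolicDist H u y ≤ 2 * r n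
        linarith
      refine (measure_mono hsub).trans ?_
      have hk : ENNReal.ofReal (2 * r n) ^ (-(d:ℝ)) * μ s ≤ N := by
        calc _ = ∫⁻ v in s, ENNReal.ofReal (2 * r n) ^ (-(d:ℝ)) ∂μ := by simp
          _ ≤ ∫⁻ v in s, radialKernel d (parabolicDist H u v) ∂μ := by
            refine setLIntegral_mono' ?_ ?_
            · refine measurableSet_le ?_ measurable_const
              change Measurable fun y : ℝ × EuclideanSpace ℝ (Fin d) =>
                max (|u.1 - y.1| ^ H) (dist u.2 y.2)
              refine Measurable.max (by fun_prop) ?_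
              exact measurable_const.dist measurable_snd
            · intro v hv
              rw [hker, ENNReal.rpow_neg, ENNReal.rpow_neg]
              apply ENNReal.inv_le_inv.2
              exact ENNReal.rpow_le_rpow (ENNReal.ofReal_le_ofReal hv) hd'.le
          _ ≤ U u := setLIntegral_le_lintegral _ _
          _ ≤ N := hu.1.2
      rw [ENNReal.rpow_neg, ENNReal.ofReal_rpow_of_pos hr2, mul_comm, ← div_eq_mul_inv] at hk
      have hp : 0 < (2 * r n) ^ (d:ℝ) := by positivity
      rwa [ENNReal.div_le_iff (by simpa using hp) (by simp)] at hk
    calc μ (G ∩ {u | U u ≤ N}) ≤ μ (⋃ n, (G ∩ {u | U u ≤ N} ∩ {y | parabolicDist H y (c n) < r n})) := by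
          apply measure_mono
          rw [← inter_iUnion]
          exact fun y hy => ⟨hy, hcov hy.1⟩
      _ ≤ ∑' n, N * ENNReal.ofReal ((2 * r n) ^ (d:ℝ)) := (measure_iUnion_le _).trans (ENNReal.tsum_le_tsum hball)
      _ = N * ∑' n, ENNReal.ofReal ((2 * r n) ^ (d:ℝ)) := ENNReal.tsum_mul_left
      _ ≤ (N + 1) * (ε / (N + 1)) := by gcongr; exact le_self_add
      _ = ε := ENNReal.mul_div_cancel (by simp) (by simp)
  have : μ univ = 0 := by
    have hU : ∀ᵐ u ∂μ, False := by
      have hn : ∀ᵐ u ∂μ, ∀ N : ℕ, u ∉ G ∩ {u | U u ≤ N} := by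
        rw [ae_all_iff]; intro N
        exact measure_eq_zero_iff_ae_notMem.1 (hnull N)
      filter_upwards [hae, hG', hn] with u h1 h2 h3
      obtain ⟨N, hN⟩ := ENNReal.exists_nat_gt h1.ne
      exact h3 N ⟨h2, hN.le⟩
    rw [ae_iff] at hU
    simpa only [not_false_eq_true, Set.ofPred_true] using hU
  simp at this

lemma cT_contOn {c : ℕ → ℝ} {ρ : ℝ} (hc : ∀ k, 0 < c k) (hρ0 : 0 < ρ) (hρ : ρ < 1/2)
    (hr : ∀ k, c (k+1) ≤ ρ * c k) {η : ℝ} (hη : 0 < η) (a : ℝ) :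
    ContinuousOn (fun x => a + cS c x) (fatK η) := by
  rw [Metric.continuousOn_iff]
  intro x hx ε hε
  have hD : 0 < 2 / (1 - 2 * ρ) := by apply div_pos two_pos; linarith
  obtain ⟨k, hk⟩ : ∃ k : ℕ, 2 / (1 - 2 * ρ) * c k < ε := by
    have hc0 := hc 0
    obtain ⟨k, hk⟩ := exists_pow_lt_of_lt_one (show 0 < ε / (2 / (1 - 2 * ρ) * c 0) by positivity) (show ρ < 1 by linarith)
    refine ⟨k, ?_⟩
    rw [lt_div_iff₀ (by positivity)] at hk
    have := cS_geo hc hρ0 hr 0 k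
    calc 2 / (1 - 2 * ρ) * c k ≤ 2 / (1 - 2 * ρ) * (ρ ^ k * c 0) := by gcongr; simpa using this
      _ = ρ ^ k * (2 / (1 - 2 * ρ) * c 0) := by ring
      _ < ε := hk
  refine ⟨η * (1/2)^k / (k+1)^2, by positivity, fun y hy hd => ?_⟩
  rw [Real.dist_eq] at hd ⊢
  have : ⌊2 ^ k * y⌋₊ = ⌊2 ^ k * x⌋₊ := by
    by_contra hne
    linarith [fatK_sep hy hx k hne]
  have := cS_close hc hρ0 hρ hr hy.1 hx.1 k this
  rw [add_sub_add_left_eq_sub]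
  linarith

lemma dyad_mem {x : ℝ} (hx : x ∈ Icc (0:ℝ) 1) (k : ℕ) : (⌊2 ^ k * x⌋₊ : ℝ) / 2 ^ k ∈ Icc (0:ℝ) 1 := by
  have h1 : (⌊2 ^ k * x⌋₊ : ℝ) ≤ 2 ^ k * x := Nat.floor_le (by have := hx.1; positivity)
  refine ⟨by positivity, ?_⟩
  rw [div_le_one (by positivity)]
  nlinarith [hx.2, show (0:ℝ) < 2 ^ k by positivity]

lemma dyad_floor (j k : ℕ) : ⌊(2:ℝ) ^ k * ((j:ℝ) / 2 ^ k)⌋₊ = j := by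
  rw [mul_div_cancel₀ _ (by positivity)]; simp

/-- chaining -/
lemma chain_bound {c : ℕ → ℝ} {ρ : ℝ} (hc : ∀ k, 0 < c k) (hρ0 : 0 < ρ) (hρ : ρ < 1/2)
    (hr : ∀ k, c (k+1) ≤ ρ * c k) (a R : ℝ) (hR : 0 ≤ R) (β : ℝ → ℝ)
    (hab : ∀ x ∈ Icc (0:ℝ) 1, a + cS c x ∈ Icc (0:ℝ) 1)
    (hβ : ContinuousOn β (Icc 0 1))
    (hA : ∀ k j : ℕ, j < 2 ^ (k+1) → |β (a + cS c ((j:ℝ) / 2 ^ (k+1))) - β (a + cS c (((j/2:ℕ):ℝ) / 2 ^ k))| ≤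
      4 * (k+1) * (R * ((1/2)^k / (k+1)^3)))
    {x : ℝ} (hx : x ∈ Ico (0:ℝ) 1) (k : ℕ) :
    |β (a + cS c x) - β (a + cS c ((⌊2 ^ k * x⌋₊ : ℝ) / 2 ^ k))| ≤ 8 * R * ((1/2)^k / (k+1)^2) := by
  have hx' : x ∈ Icc (0:ℝ) 1 := ⟨hx.1, hx.2.le⟩
  let u : ℕ → ℝ := fun n => β (a + cS c ((⌊2 ^ (k+n) * x⌋₊ : ℝ) / 2 ^ (k+n)))
  have hstep : ∀ n, dist (u n) (u (n+1)) ≤ (4 * R * ((1/2)^k / (k+1)^2)) * (1/2)^n := by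
    intro n
    have hlt : ⌊2 ^ (k+n+1) * x⌋₊ < 2 ^ (k+n+1) := by
      rw [Nat.floor_lt (by have := hx.1; positivity)]
      push_cast
      nlinarith [hx.2, show (0:ℝ) < 2 ^ (k+n+1) by positivity]
    have h := hA (k+n) _ hlt
    have hdiv : ⌊2 ^ (k+n+1) * x⌋₊ / 2 = ⌊2 ^ (k+n) * x⌋₊ := by
      rw [← Nat.floor_div_ofNat]
      congr 1
      rw [pow_succ]; ring
    rw [hdiv] at h
    rw [dist_comm, Real.dist_eq]
    refine h.trans ?_
    push_cast
    calc 4 * ((k:ℝ)+n+1) * (R * ((1/2)^(k+n) / ((k:ℝ)+n+1)^3)) = 4 * R * (1/2)^(k+n) / ((k:ℝ)+n+1)^2 := by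
          field_simp
      _ ≤ 4 * R * (1/2)^(k+n) / ((k:ℝ)+1)^2 := by
          gcongr; linarith [show (0:ℝ) ≤ n by positivity]
      _ = _ := by rw [pow_add]; ring
  have hlim : Filter.Tendsto u Filter.atTop (nhds (β (a + cS c x))) := by
    have hw := hβ _ (hab x hx')
    refine Filter.Tendsto.comp (f := fun n : ℕ => a + cS c ((⌊2 ^ (k+n) * x⌋₊ : ℝ) / 2 ^ (k+n))) hw ?_
    refine tendsto_nhdsWithin_iff.2 ⟨?_, Filter.Eventually.of_forall fun n => hab _ (dyad_mem hx' _)⟩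
    rw [tendsto_iff_dist_tendsto_zero]
    have hD : 0 < 2 / (1 - 2 * ρ) := by apply div_pos two_pos; linarith
    have hc0 := hc k
    refine squeeze_zero (g := fun n : ℕ => 2 / (1 - 2 * ρ) * (ρ ^ n * c k)) (fun n => dist_nonneg) ?_ ?_
    · intro n
      rw [Real.dist_eq, add_sub_add_left_eq_sub]
      refine (cS_close hc hρ0 hρ hr (dyad_mem hx' (k+n)) hx' (k+n) (dyad_floor _ _)).trans ?_
      gcongr
      rw [add_comm]; exact cS_geo hc hρ0 hr k n
    · have := (tendsto_pow_atTop_nhds_zero_of_lt_one hρ0.le (show ρ < 1 by linarith)).mul_const (c k)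
      simpa using this.const_mul (2 / (1 - 2 * ρ))
  have := dist_le_of_le_geometric_of_tendsto₀ (1/2) _ (by norm_num) hstep hlim
  rw [dist_comm, Real.dist_eq] at this
  simp only [u, add_zero] at this
  refine this.trans (le_of_eq ?_)
  ring

lemma lip_bound {c : ℕ → ℝ} {ρ : ℝ} (hc : ∀ k, 0 < c k) (hρ0 : 0 < ρ) (hρ : ρ < 1/2)
    (hr : ∀ k, c (k+1) ≤ ρ * c k) (a R : ℝ) (hR : 0 ≤ R) (β : ℝ → ℝ)
    (hab : ∀ x ∈ Icc (0:ℝ) 1, a + cS c x ∈ Icc (0:ℝ) 1)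
    (hβ : ContinuousOn β (Icc 0 1))
    (hA : ∀ k j : ℕ, j < 2 ^ (k+1) → |β (a + cS c ((j:ℝ) / 2 ^ (k+1))) - β (a + cS c (((j/2:ℕ):ℝ) / 2 ^ k))| ≤
      4 * (k+1) * (R * ((1/2)^k / (k+1)^3)))
    {η : ℝ} (hη : 0 < η) {x y : ℝ} (hx : x ∈ fatK η) (hy : y ∈ fatK η) :
    |β (a + cS c x) - β (a + cS c y)| ≤ 128 * R / η * |x - y| := by
  wlog hxy : x < y generalizing x y
  · rcases eq_or_lt_of_le (not_lt.1 hxy) with h | h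
    · simp [h]
    · rw [abs_sub_comm, abs_sub_comm x]; exact this hy hx h
  have hx1 := fatK_lt_one hη hx
  have hy1 := fatK_lt_one hη hy
  have hex : ∃ k : ℕ, ⌊2 ^ k * x⌋₊ ≠ ⌊2 ^ k * y⌋₊ := by
    obtain ⟨k, hk⟩ := exists_floor_lt hx.1.1 hxy
    exact ⟨k, hk.ne⟩
  classical
  obtain ⟨k, hk⟩ : ∃ k, Nat.find hex = k + 1 := by
    refine Nat.exists_eq_succ_of_ne_zero fun h0 => ?_
    have := Nat.find_spec hex
    rw [h0] at this
    apply this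
    rw [pow_zero, one_mul, one_mul, Nat.floor_eq_zero.2 hx1, Nat.floor_eq_zero.2 hy1]
  have h1 := Nat.find_spec hex
  rw [hk] at h1
  have h2 : ⌊2 ^ k * x⌋₊ = ⌊2 ^ k * y⌋₊ := by
    have := Nat.find_min hex (m := k) (by omega)
    simpa using this
  have b1 := chain_bound hc hρ0 hρ hr a R hR β hab hβ hA ⟨hx.1.1, hx1⟩ k
  have b2 := chain_bound hc hρ0 hρ hr a R hR β hab hβ hA ⟨hy.1.1, hy1⟩ k
  rw [h2] at b1
  have b3 := fatK_sep hx hy (k+1) h1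
  have b4 : |β (a + cS c x) - β (a + cS c y)| ≤ 16 * R * ((1/2)^k / (k+1)^2) := by
    rw [abs_sub_comm (β (a + cS c y))] at b2
    have := abs_sub_le (β (a + cS c x)) (β (a + cS c ((⌊2 ^ k * y⌋₊ : ℝ) / 2 ^ k))) (β (a + cS c y))
    linarith
  refine b4.trans ?_
  calc 16 * R * ((1/2)^k / ((k:ℝ)+1)^2) = 128 * R / η * (η * (1/2)^(k+1) / (2 * ((k:ℝ)+1))^2) := by
        have e : ((1:ℝ)/2)^(k+1) = (1/2)^k / 2 := by rw [pow_succ]; ring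
        rw [e]; field_simp; ring
    _ ≤ 128 * R / η * (η * (1/2)^(k+1) / (((k+1:ℕ):ℝ)+1)^2) := by
        gcongr; push_cast; linarith [show (0:ℝ) ≤ k by positivity]
    _ ≤ _ := by gcongr

/-- a function expanding on a set of positive measure has image of positive measure -/
lemma expand_pos {K : Set ℝ} {ψ : ℝ → ℝ} (hK : 0 < volume K)
    (h : ∀ x ∈ K, ∀ y ∈ K, |x - y| ≤ |ψ x - ψ y|) : 0 < volume (ψ '' K) := by
  have hinj : InjOn ψ K := fun x hx y hy hxy => by
    have := h x hx y hy
    rw [hxy, sub_self, abs_zero] at this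
    exact sub_eq_zero.1 (abs_nonpos_iff.1 this)
  have hl : LipschitzOnWith 1 (Function.invFunOn ψ K) (ψ '' K) := by
    refine LipschitzOnWith.of_dist_le_mul ?_
    rintro _ ⟨x, hx, rfl⟩ _ ⟨y, hy, rfl⟩
    rw [hinj.leftInvOn_invFunOn hx, hinj.leftInvOn_invFunOn hy]
    simpa [Real.dist_eq] using h x hx y hy
  have := hl.hausdorffMeasure_image_le (d := 1) zero_le_one
  rw [hinj.leftInvOn_invFunOn.image_image, hausdorffMeasure_real] at this
  simp at this
  exact hK.trans_le this

lemma tail_bound {Ω : Type*} [MeasurableSpace Ω] (P : Measure Ω) [IsProbabilityMeasure P]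
    (X : Ω → ℝ) (v : NNReal) (hX : P.map X = ProbabilityTheory.gaussianReal 0 v) (σ : ℝ) (hσ : 0 < σ)
    (hv : (v:ℝ) ≤ σ ^ 2) (k : ℕ) :
    P {ω | 4 * ((k:ℝ)+1) * σ < |X ω|} ≤ ENNReal.ofReal (4 * (1/16)^(k+1)) := by
  have hint : ∀ t, Integrable (fun ω => Real.exp (t * X ω)) P := by
    intro t
    rw [← ProbabilityTheory.mgf_pos_iff, ProbabilityTheory.mgf_gaussianReal hX]
    exact Real.exp_pos _
  set l := 4 * ((k:ℝ)+1) * σ with hl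
  have hvs : (v:ℝ) * (1/σ)^2 / 2 ≤ 1/2 := by
    have : (v:ℝ) * (1/σ)^2 ≤ σ^2 * (1/σ)^2 := by gcongr
    have h2 : σ^2 * (1/σ)^2 = 1 := by field_simp
    linarith
  have hnum : Real.exp (-(4 * ((k:ℝ)+1))) * Real.exp (1/2) ≤ 2 * (1/16)^(k+1) := by
    have h1 : Real.exp (-(4 * ((k:ℝ)+1))) = (Real.exp (-4))^(k+1) := by
      rw [← Real.exp_nat_mul]; congr 1; push_cast; ring
    have he := Real.exp_one_gt_d9
    have he' := Real.exp_one_lt_d9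
    have h2 : Real.exp (-4) ≤ 1/16 := by
      rw [Real.exp_neg, one_div]
      apply inv_anti₀ (by norm_num)
      have : Real.exp 4 = Real.exp 1 ^ 4 := by rw [← Real.exp_nat_mul]; norm_num
      rw [this]
      calc (16:ℝ) = 2^4 := by norm_num
        _ ≤ _ := by gcongr; linarith
    have h3 : Real.exp (1/2) ≤ 2 := by
      have : Real.exp (1/2) ^ 2 = Real.exp 1 := by rw [← Real.exp_nat_mul]; norm_num
      nlinarith [Real.exp_pos (1/2)]
    rw [h1, mul_comm]
    have := Real.exp_pos (-4)
    gcongr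
  have e1 : (1/σ) * l = 4 * ((k:ℝ)+1) := by rw [hl]; field_simp
  have b1 : P.real {ω | l ≤ X ω} ≤ 2 * (1/16)^(k+1) := by
    refine (ProbabilityTheory.measure_ge_le_exp_mul_mgf l (t := 1/σ) (by positivity) (hint _)).trans ?_
    rw [ProbabilityTheory.mgf_gaussianReal hX, neg_mul, e1, zero_mul, zero_add]
    refine le_trans ?_ hnum
    gcongr
  have b2 : P.real {ω | X ω ≤ -l} ≤ 2 * (1/16)^(k+1) := by
    refine (ProbabilityTheory.measure_le_le_exp_mul_mgf (-l) (t := -(1/σ)) (by rw [neg_nonpos]; positivity) (hint _)).trans ?_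
    rw [ProbabilityTheory.mgf_gaussianReal hX, neg_mul, neg_mul_neg, e1, zero_mul, zero_add, neg_sq]
    refine le_trans ?_ hnum
    gcongr
  calc _ ≤ P ({ω | l ≤ X ω} ∪ {ω | X ω ≤ -l}) := by
        apply measure_mono
        intro ω hω
        rcases lt_abs.1 (show l < |X ω| from hω) with h | h
        · exact Or.inl h.le
        · right; show X ω ≤ -l; linarith
    _ ≤ P {ω | l ≤ X ω} + P {ω | X ω ≤ -l} := measure_union_le _ _
    _ ≤ ENNReal.ofReal (2 * (1/16)^(k+1)) + ENNReal.ofReal (2 * (1/16)^(k+1)) := by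
        rw [← ofReal_measureReal (s := {ω | l ≤ X ω}), ← ofReal_measureReal (s := {ω | X ω ≤ -l})]
        gcongr
    _ = _ := by rw [← ENNReal.ofReal_add (by positivity) (by positivity)]; congr 1; ring

lemma fbm_incr {Ω : Type*} [MeasurableSpace Ω] (P : Measure Ω) {H : ℝ} (hH : 0 < H) {d : ℕ}
    {B : Ω → ℝ → EuclideanSpace ℝ (Fin d)} (hB : IsFBM P H d B) (i : Fin d) {s t : ℝ}
    (hs : s ∈ Icc (0:ℝ) 1) (ht : t ∈ Icc (0:ℝ) 1) :
    ∃ v : NNReal, (v:ℝ) = (|s - t| ^ H) ^ 2 ∧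
      P.map (fun ω => B ω s i - B ω t i) = ProbabilityTheory.gaussianReal 0 v := by
  obtain ⟨v, hv, hm⟩ := hB.gaussian i 2 ![s, t] ![1, -1] (by intro j; fin_cases j <;> simp [hs.1, hs.2, ht.1, ht.2])
  refine ⟨v, ?_, ?_⟩
  · rw [hv]
    simp only [Fin.sum_univ_two, fbmCov, Matrix.cons_val_zero, Matrix.cons_val_one, sub_self, abs_zero]
    rw [Real.zero_rpow (by linarith : 2 * H ≠ 0), abs_sub_comm t s, ← Real.rpow_natCast, ← Real.rpow_mul (abs_nonneg _)]
    push_cast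
    rw [mul_comm H 2]
    ring
  · rw [← hm]
    congr 1
    ext ω
    simp [Fin.sum_univ_two]
    ring

lemma fubini_hit {Ω : Type*} [MeasurableSpace Ω] (P : Measure Ω) [IsProbabilityMeasure P]
    (ψ : Ω → ℝ → ℝ) (K : Set ℝ) (hK : IsCompact K) (hm : ∀ x, Measurable fun ω => ψ ω x)
    (hcont : ∀ ω, ContinuousOn (ψ ω) K) (A : Set Ω) (hA : P Aᶜ < 1)
    (hpos : ∀ ω ∈ A, 0 < volume (ψ ω '' K)) : ∃ z : ℝ, 0 < P {ω | ∃ x ∈ K, ψ ω x = z} := by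
  by_contra! hz
  obtain ⟨s, hsc, hsd⟩ := TopologicalSpace.exists_countable_dense K
  let G : Set (Ω × ℝ) := {p | ∃ x ∈ K, ψ p.1 x = p.2}
  have hG : G = ⋂ n : ℕ, ⋃ q ∈ s, {p : Ω × ℝ | |ψ p.1 q - p.2| < 1 / ((n:ℝ)+1)} := by
    ext ⟨ω, z⟩
    have hc : Continuous fun q : K => ψ ω q := (hcont ω).domRestrict
    constructor
    · rintro ⟨x, hx, hxz⟩
      simp only [mem_iInter, mem_iUnion]
      intro n
      have hop : IsOpen {q : K | |ψ ω q - z| < 1 / ((n:ℝ)+1)} := by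
        exact isOpen_lt ((hc.sub continuous_const).abs) continuous_const
      obtain ⟨q, hq, hqs⟩ := hsd.inter_open_nonempty _ hop ⟨⟨x, hx⟩, by
        show |ψ ω x - z| < _
        rw [show ψ ω x = z from hxz, sub_self, abs_zero]; positivity⟩
      exact ⟨q, hqs, hq⟩
    · intro h
      simp only [mem_iInter, mem_iUnion] at h
      have hcl : z ∈ closure (ψ ω '' K) := by
        rw [Metric.mem_closure_iff]
        intro ε hε
        obtain ⟨n, hn⟩ := exists_nat_one_div_lt hε
        obtain ⟨q, hqs, hq⟩ := h n
        refine ⟨ψ ω q, mem_image_of_mem _ q.2, ?_⟩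
        rw [dist_comm, Real.dist_eq]
        exact lt_trans hq hn
      rw [(hK.image_of_continuousOn (hcont ω)).isClosed.closure_eq] at hcl
      exact hcl
  have hGm : MeasurableSet G := by
    rw [hG]
    refine MeasurableSet.iInter fun n => MeasurableSet.biUnion hsc fun q _ => ?_
    refine measurableSet_lt ?_ measurable_const
    have := (hm q).comp (measurable_fst : Measurable (Prod.fst : Ω × ℝ → Ω))
    exact (this.sub measurable_snd).abs
  have h0 : (P.prod (volume : Measure ℝ)) G = 0 := by
    rw [Measure.prod_apply_symm hGm]
    rw [lintegral_eq_zero_iff (measurable_measure_prodMk_right hGm)]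
    exact Filter.Eventually.of_forall fun z => le_antisymm (hz z) bot_le
  rw [Measure.measure_prod_null hGm] at h0
  have h1 : ∀ᵐ ω ∂P, ω ∈ Aᶜ := by
    filter_upwards [h0] with ω hω hωA
    have := hpos ω hωA
    have e : Prod.mk ω ⁻¹' G = ψ ω '' K := by ext z; rfl
    rw [e] at hω
    simp at hω
    rw [hω] at this
    exact lt_irrefl _ this
  have h2 : P Aᶜ = 1 := by
    rw [← measure_univ (μ := P)]
    apply measure_congr
    filter_upwards [h1] with ω hω
    exact propext ⟨fun _ => trivial, fun _ => hω⟩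
  rw [h2] at hA
  exact lt_irrefl _ hA

lemma cover_zero {H : ℝ} (hH : H ∈ Ioo (0:ℝ) 1) {d : ℕ} (i0 : Fin d)
    {c : ℕ → ℝ} {ρ : ℝ} (hc : ∀ k, 0 < c k) (hρ0 : 0 < ρ) (hρ : ρ < 1/2)
    (hr : ∀ k, c (k+1) ≤ ρ * c k) (a R : ℝ) (hR : 0 < R)
    (hcR : ∀ k : ℕ, (2 / (1 - 2 * ρ) * c k) ^ H ≤ R * ((1/2)^k / ((k:ℝ)+1)^3))
    {η : ℝ} (hη : 0 < η) (z M : ℝ) (hM : 0 < M) :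
    hMeasure (parabolicDist H) (d:ℝ) (((fun x => a + cS c x) '' fatK η) ×ˢ
      {v : EuclideanSpace ℝ (Fin d) | v i0 = z ∧ ‖v‖ ≤ M}) = 0 := by
  have hd : 0 < d := i0.pos
  have hdr : (0:ℝ) < d := by exact_mod_cast hd
  apply hMeasure_zero_of_fin _ _ hd
  intro δ hδ ε hε
  set Q := 2 * M * d + 2 with hQ
  have hQ0 : 0 < Q := by positivity
  obtain ⟨k, hk⟩ : ∃ k : ℕ, (2 * R / δ + 2 * R + Q ^ (d-1) * 2 ^ d * (2 * R) / ε) < k := exists_nat_gt _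
  have hk0 : (0:ℝ) ≤ k := by positivity
  have t1 : 0 < 2 * R / δ := by positivity
  have t2 : 0 < Q ^ (d-1) * 2 ^ d * (2 * R) / ε := by positivity
  have hk3 : (k:ℝ) ≤ ((k:ℝ)+1)^3 := by nlinarith [mul_nonneg hk0 hk0, mul_nonneg (mul_nonneg hk0 hk0) hk0]
  set r := 2 * R * ((1/2)^k / ((k:ℝ)+1)^3) with hrdef
  have hr0 : 0 < r := by positivity
  have h2k : (2:ℝ)^k * (1/2)^k = 1 := by rw [← mul_pow]; norm_num
  have hrle : r ≤ 2 * R / ((k:ℝ)+1)^3 := by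
    rw [hrdef, ← mul_div_assoc]
    have : ((1:ℝ)/2)^k ≤ 1 := pow_le_one₀ (by norm_num) (by norm_num)
    exact div_le_div_of_nonneg_right (by nlinarith) (by positivity)
  have hr1 : r ≤ 1 := by
    refine hrle.trans ?_
    rw [div_le_one (by positivity)]
    linarith
  have hrδ : r ≤ δ := by
    refine hrle.trans ?_
    rw [div_le_iff₀ (by positivity)]
    have : 2 * R / δ ≤ ((k:ℝ)+1)^3 := by linarith
    rw [div_le_iff₀ hδ] at this
    linarith
  set n := ⌊2 * M * d / r⌋₊ + 1 with hn
  have hn0 : (0:ℝ) < n := by rw [hn]; positivity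
  have hn1 : 2 * M * d / r < n := by rw [hn]; push_cast; exact Nat.lt_floor_add_one _
  have hn2 : ((n+1 : ℕ):ℝ) ≤ Q / r := by
    rw [hn]; push_cast
    have : (⌊2 * M * d / r⌋₊:ℝ) ≤ 2 * M * d / r := Nat.floor_le (by positivity)
    rw [hQ, add_div]
    have : 2 ≤ 2 / r := by rw [le_div_iff₀ hr0]; linarith
    linarith
  set s := 2 * M / n with hsdef
  have hs0 : 0 < s := by positivity
  have hsr : d * s < r := by
    rw [div_lt_iff₀ hr0] at hn1
    rw [hsdef, ← mul_div_assoc, div_lt_iff₀ hn0]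
    linarith
  classical
  let ι := Fin (2^k) × ({i : Fin d // i ≠ i0} → Fin (n+1))
  let cc : ι → ℝ × EuclideanSpace ℝ (Fin d) := fun p =>
    (a + cS c ((p.1:ℕ) / 2 ^ k), WithLp.toLp 2 fun i => if h : i = i0 then z else -M + (p.2 ⟨i, h⟩ : ℕ) * s)
  refine ⟨Fintype.card ι, cc ∘ (Fintype.equivFin ι).symm, r, hr0, hrδ, ?_, ?_⟩
  · rintro ⟨t, v⟩ ⟨⟨x, hx, hxt⟩, hv0, hvM⟩
    simp only at hxt hv0 hvM
    subst hxt
    have hx1 := fatK_lt_one hη hx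
    have hjlt : ⌊2 ^ k * x⌋₊ < 2 ^ k := by
      rw [Nat.floor_lt (by have := hx.1.1; positivity)]
      push_cast
      nlinarith [show (0:ℝ) < 2 ^ k by positivity]
    have hvi : ∀ i, |v i| ≤ M := fun i => by
      have := PiLp.norm_apply_le v i
      rw [Real.norm_eq_abs] at this
      exact this.trans hvM
    have hml : ∀ i, ⌊(v i + M) / s⌋₊ < n + 1 := by
      intro i
      rw [Nat.lt_succ_iff]
      have h1 := (abs_le.1 (hvi i)).2
      have h2 := (abs_le.1 (hvi i)).1
      have : (v i + M) / s ≤ n := by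
        rw [div_le_iff₀ hs0, hsdef, mul_div_cancel₀ _ hn0.ne']; linarith
      exact_mod_cast (Nat.floor_le (div_nonneg (by linarith) hs0.le)).trans this
    refine ⟨Fintype.equivFin ι (⟨_, hjlt⟩, fun i => ⟨_, hml i⟩), ?_⟩
    simp only [Function.comp, Equiv.symm_apply_apply, cc, parabolicDist]
    apply max_lt
    · have h1 := cS_close hc hρ0 hρ hr hx.1 (dyad_mem hx.1 k) k (dyad_floor _ _).symm
      rw [add_sub_add_left_eq_sub]
      have h2 := (Real.rpow_le_rpow (abs_nonneg _) h1 hH.1.le).trans (hcR k)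
      refine lt_of_le_of_lt h2 ?_
      rw [hrdef]
      have : 0 < R * ((1/2)^k / ((k:ℝ)+1)^3) := by positivity
      linarith
    · refine lt_of_le_of_lt ?_ hsr
      rw [EuclideanSpace.dist_eq]
      apply Real.sqrt_le_iff.2
      refine ⟨by positivity, ?_⟩
      calc _ ≤ ∑ i : Fin d, s ^ 2 := by
            apply Finset.sum_le_sum
            intro i _
            gcongr
            simp only
            by_cases h : i = i0
            · simp [h, hv0, hs0.le]
            · simp only [h, dite_false, Real.dist_eq]
              have h2 := (abs_le.1 (hvi i)).1
              have f1 : (⌊(v i + M) / s⌋₊:ℝ) ≤ (v i + M) / s := Nat.floor_le (div_nonneg (by linarith) hs0.le)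
              have f2 : (v i + M) / s < ⌊(v i + M) / s⌋₊ + 1 := Nat.lt_floor_add_one _
              rw [le_div_iff₀ hs0] at f1
              rw [div_lt_iff₀ hs0] at f2
              rw [abs_le]; constructor <;> linarith
        _ = d * s ^ 2 := by simp
        _ ≤ (d * s) ^ 2 := by
          rw [mul_pow]
          gcongr
          have : (1:ℝ) ≤ d := by exact_mod_cast hd
          nlinarith
  · have hcard : (Fintype.card ι : ℝ) = 2 ^ k * ((n+1:ℕ):ℝ) ^ (d-1) := by
      have : Fintype.card ι = 2 ^ k * (n+1) ^ (d-1) := by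
        simp [ι]
      rw [this]; push_cast; ring
    rw [hcard]
    calc 2 ^ k * ((n+1:ℕ):ℝ) ^ (d-1) * (2 * r) ^ d ≤ 2 ^ k * (Q / r) ^ (d-1) * (2 * r) ^ d := by gcongr
      _ = 2 ^ k * Q ^ (d-1) * 2 ^ d * r := by
        obtain ⟨e, rfl⟩ : ∃ e, d = e + 1 := ⟨d - 1, by omega⟩
        simp only [Nat.add_sub_cancel]
        clear_value r
        rw [div_pow, mul_pow 2 r, pow_succ r]
        field_simp
      _ = (2 ^ k * (1/2)^k) * (Q ^ (d-1) * 2 ^ d * (2 * R)) / ((k:ℝ)+1)^3 := by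
        rw [hrdef]; ring
      _ = (Q ^ (d-1) * 2 ^ d * (2 * R)) / ((k:ℝ)+1)^3 := by rw [h2k, one_mul]
      _ ≤ ε := by
        rw [div_le_iff₀ (by positivity)]
        have : Q ^ (d-1) * 2 ^ d * (2 * R) / ε ≤ ((k:ℝ)+1)^3 := by linarith
        rw [div_le_iff₀ hε] at this
        linarith

lemma exists_c {H : ℝ} (hH : H ∈ Ioo (0:ℝ) 1) {l : ℝ} (hl : 0 < l) :
    ∃ (c : ℕ → ℝ) (ρ κ R : ℝ), (∀ k, 0 < c k) ∧ 0 < ρ ∧ ρ < 1/2 ∧ (∀ k, c (k+1) ≤ ρ * c k) ∧ 0 < R ∧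
      (∀ k : ℕ, (2 / (1 - 2 * ρ) * c k) ^ H ≤ R * ((1/2)^k / ((k:ℝ)+1)^3)) ∧
      2 / (1 - 2 * ρ) * c 0 ≤ l ∧ 0 < κ ∧
      ∀ k : ℕ, c k = κ * ((1/2)^k / ((k:ℝ)+1)^3) ^ (1/H) := by
  have h0 := hH.1
  have h1 := hH.2
  set ρ : ℝ := (1/2) ^ (1/H) with hρd
  have hρ0 : 0 < ρ := by positivity
  have hρ : ρ < 1/2 := by
    calc ρ < (1/2) ^ (1:ℝ) := by
          apply Real.rpow_lt_rpow_of_exponent_gt (by norm_num) (by norm_num)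
          rw [lt_div_iff₀ h0]; linarith
      _ = 1/2 := by simp
  set D := 2 / (1 - 2 * ρ) with hD
  have hD0 : 0 < D := by apply div_pos two_pos; linarith
  set κ := min 1 (l / D) with hκ
  have hκ0 : 0 < κ := lt_min one_pos (by positivity)
  refine ⟨fun k => κ * ((1/2)^k / ((k:ℝ)+1)^3) ^ (1/H), ρ, κ, D ^ H, ?_, hρ0, hρ, ?_, by positivity, ?_, ?_, hκ0, fun _ => rfl⟩
  · intro k; positivity
  · intro k
    have : ((1/2)^(k+1) / (((k+1:ℕ):ℝ)+1)^3) ^ (1/H) ≤ ((1/2) * ((1/2)^k / ((k:ℝ)+1)^3)) ^ (1/H) := by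
      refine Real.rpow_le_rpow (by positivity) ?_ (by positivity)
      rw [← mul_div_assoc, ← pow_succ']
      gcongr
      push_cast; linarith
    rw [Real.mul_rpow (by norm_num) (by positivity)] at this
    calc _ ≤ κ * ((1/2) ^ (1/H) * ((1/2)^k / ((k:ℝ)+1)^3) ^ (1/H)) := mul_le_mul_of_nonneg_left this hκ0.le
      _ = _ := by rw [← hρd]; ring
  · intro k
    have hw : (0:ℝ) < (1/2)^k / ((k:ℝ)+1)^3 := by positivity
    rw [Real.mul_rpow hD0.le (by positivity), Real.mul_rpow hκ0.le (by positivity), ← Real.rpow_mul hw.le,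
      one_div_mul_cancel h0.ne', Real.rpow_one]
    have : κ ^ H ≤ 1 := Real.rpow_le_one hκ0.le (min_le_left _ _) h0.le
    have h3 : κ ^ H * ((1/2)^k / ((k:ℝ)+1)^3) ≤ 1 * ((1/2)^k / ((k:ℝ)+1)^3) := by gcongr
    rw [one_mul] at h3
    gcongr
  · have : κ ≤ l / D := min_le_right _ _
    rw [le_div_iff₀ hD0] at this
    simp
    linarith

lemma holder_aux {H : ℝ} (hH : H ∈ Ioo (0:ℝ) 1) {c : ℕ → ℝ} {κ : ℝ} (hκ : 0 < κ)
    (hcκ : ∀ k : ℕ, c k = κ * ((1/2)^k / ((k:ℝ)+1)^3) ^ (1/H)) {τ : ℝ} (hτ : τ ∈ Ioo 0 H) :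
    ∃ Q : ℝ, 0 ≤ Q ∧ ∀ k, (1/2)^k ≤ Q * c k ^ (H - τ) := by
  have h0 := hH.1
  set e := (H - τ) / H with he
  have he0 : 0 < e := div_pos (by linarith [hτ.2]) h0
  have he1 : e < 1 := by rw [he, div_lt_one h0]; linarith [hτ.1]
  set θ : ℝ := (1/2) ^ (1 - e) with hθ
  have hθ0 : 0 < θ := by positivity
  have hθ1 : θ < 1 := Real.rpow_lt_one (by norm_num) (by norm_num) (by linarith)
  have hlim := tendsto_pow_const_mul_const_pow_of_abs_lt_one 3 (show |θ| < 1 by rwa [abs_of_pos hθ0])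
  obtain ⟨Q, hQ⟩ := hlim.bddAbove_range
  have hQ' : ∀ n : ℕ, (n:ℝ)^3 * θ ^ n ≤ Q := fun n => hQ ⟨n, rfl⟩
  have hQ0 : 0 ≤ Q := le_trans (by positivity) (hQ' 1)
  refine ⟨Q / θ / κ ^ (H - τ), by positivity, fun k => ?_⟩
  have hp : (0:ℝ) < κ ^ (H - τ) := by positivity
  have hw : (0:ℝ) < (1/2)^k / ((k:ℝ)+1)^3 := by positivity
  have hck : c k ^ (H - τ) = κ ^ (H - τ) * ((1/2)^k / ((k:ℝ)+1)^3) ^ e := by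
    rw [hcκ, Real.mul_rpow hκ.le (by positivity), ← Real.rpow_mul hw.le]
    congr 2; rw [he]; ring
  have h3 : ((1/2)^k / ((k:ℝ)+1)^3) ^ e ≥ ((1/2:ℝ)^k) ^ e / ((k:ℝ)+1)^3 := by
    rw [Real.div_rpow (by positivity) (by positivity)]
    have h1 : (1:ℝ) ≤ ((k:ℝ)+1)^3 := one_le_pow₀ (by linarith [show (0:ℝ) ≤ k by positivity])
    have : (((k:ℝ)+1)^3) ^ e ≤ ((k:ℝ)+1)^3 := by
      calc _ ≤ (((k:ℝ)+1)^3) ^ (1:ℝ) := Real.rpow_le_rpow_of_exponent_le h1 he1.le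
        _ = _ := Real.rpow_one _
    show _ ≤ _
    gcongr
  have h4 : ((1/2:ℝ)^k) = θ ^ k * ((1/2:ℝ)^k) ^ e := by
    have hh : (0:ℝ) < (1/2)^k := by positivity
    rw [hθ, ← Real.rpow_natCast ((1/2:ℝ)^(1-e)), ← Real.rpow_mul (by norm_num), mul_comm (1 - e), Real.rpow_mul (by norm_num),
      Real.rpow_natCast, ← Real.rpow_add hh]
    simp
  have h5 := hQ' (k+1)
  have h6 : ((k:ℝ)+1)^3 * θ ^ k ≤ Q / θ := by
    rw [le_div_iff₀ hθ0]
    push_cast at h5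
    rw [pow_succ θ] at h5
    linarith
  rw [hck]
  calc ((1/2:ℝ)^k) = (((k:ℝ)+1)^3 * θ ^ k) * (((1/2:ℝ)^k) ^ e / ((k:ℝ)+1)^3) := by
        refine h4.trans ?_
        generalize ((1/2:ℝ)^k) ^ e = u
        field_simp
    _ ≤ (Q / θ) * (((1/2)^k / ((k:ℝ)+1)^3) ^ e) := by gcongr
    _ = _ := by field_simp

/-- Theorem 4.4, sharpness: there exist a drift `f` which is
`(H-τ)`-Hölder continuous for every `τ ∈ (0,H)` but not `H`-Hölder continuous, and
compact sets `E ⊆ I`, `F ⊆ ℝ^d` with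
`C^d_{ρ_H}(E×F) = ℋ^d_{ρ_H}(E×F) = 0` while `ℙ((B^H+f)(E) ∩ F ≠ ∅) > 0`;
i.e. the two-sided hitting estimate of Theorem 3.1 fails for such a drift. -/
theorem statement14 {Ω : Type*} [MeasurableSpace Ω] (ℙ : Measure Ω) [IsProbabilityMeasure ℙ]
    (H : ℝ) (hH : H ∈ Set.Ioo (0 : ℝ) 1) (d : ℕ) (hd : 0 < d)
    (B : Ω → ℝ → EuclideanSpace ℝ (Fin d)) (hB : IsFBM ℙ H d B)
    (a b : ℝ) (ha : 0 < a) (hab : a < b) (hb : b ≤ 1) :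
    ∃ f : ℝ → EuclideanSpace ℝ (Fin d),
      (∀ τ : ℝ, τ ∈ Set.Ioo 0 H → HolderWithExp f (H - τ) (Set.Icc a b)) ∧
      ¬ HolderWithExp f H (Set.Icc a b) ∧
      ∃ (E : Set ℝ) (F : Set (EuclideanSpace ℝ (Fin d))),
        IsCompact E ∧ E ⊆ Set.Icc a b ∧ IsCompact F ∧
        capacity (parabolicDist H) d (E ×ˢ F) = 0 ∧
        hMeasure (parabolicDist H) d (E ×ˢ F) = 0 ∧
        0 < ℙ {ω | ∃ t ∈ E, B ω t + f t ∈ F} := by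
  classical
  obtain ⟨c, ρ, κ, R, hc, hρ0, hρ, hr, hR, hcR, hcl, hκ, hcκ⟩ := exists_c hH (sub_pos.2 hab)
  obtain ⟨η, hη, hvol⟩ := fatK_pos
  have h0 := hH.1
  let i0 : Fin d := ⟨0, hd⟩
  have hTab : ∀ x ∈ Icc (0:ℝ) 1, a + cS c x ∈ Icc a b := fun x hx => by
    have := cS_le hc hρ0 hρ hr hx
    exact ⟨by linarith [this.1], by linarith [this.2]⟩
  have hT01 : ∀ x ∈ Icc (0:ℝ) 1, a + cS c x ∈ Icc (0:ℝ) 1 := fun x hx =>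
    ⟨by linarith [(hTab x hx).1], by linarith [(hTab x hx).2]⟩
  set Λ := 128 * R / η + 1 with hΛ
  have hΛ0 : 0 < Λ := by positivity
  let f : ℝ → EuclideanSpace ℝ (Fin d) := fun t => EuclideanSpace.single i0 (Λ * gInv c a t)
  have hfsub : ∀ s t, ‖f s - f t‖ = Λ * |gInv c a s - gInv c a t| := by
    intro s t
    have : f s - f t = EuclideanSpace.single i0 (Λ * (gInv c a s - gInv c a t)) := by
      ext i
      by_cases h : i = i0
      · subst h; simp [f]; ring
      · simp [f, h]
    rw [this, EuclideanSpace.norm_single, Real.norm_eq_abs, abs_mul, abs_of_pos hΛ0]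
  have hincr : ∀ (k j : ℕ), j < 2 ^ (k+1) → ((j:ℝ) / 2 ^ (k+1)) ∈ Icc (0:ℝ) 1 ∧ ((((j/2:ℕ):ℕ):ℝ) / 2 ^ k) ∈ Icc (0:ℝ) 1 ∧
      |(a + cS c ((j:ℝ) / 2 ^ (k+1))) - (a + cS c ((((j/2:ℕ):ℕ):ℝ) / 2 ^ k))| ^ H ≤ R * ((1/2)^k / ((k:ℝ)+1)^3) := by
    intro k j hj
    have hj' : (j:ℝ) ≤ 2 ^ (k+1) := by exact_mod_cast hj.le
    have m1 : ((j:ℝ) / 2 ^ (k+1)) ∈ Icc (0:ℝ) 1 := ⟨by positivity, (div_le_one (by positivity)).2 hj'⟩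
    have hfl : ⌊(2:ℝ) ^ k * ((j:ℝ) / 2 ^ (k+1))⌋₊ = j / 2 := by
      rw [show (2:ℝ) ^ k * ((j:ℝ) / 2 ^ (k+1)) = (j:ℝ) / (2:ℕ) by rw [pow_succ]; push_cast; field_simp]
      rw [Nat.floor_div_natCast, Nat.floor_natCast]
    have m2 := dyad_mem m1 k
    rw [hfl] at m2
    refine ⟨m1, m2, ?_⟩
    rw [add_sub_add_left_eq_sub]
    refine (Real.rpow_le_rpow (abs_nonneg _) ?_ h0.le).trans (hcR k)
    exact cS_close hc hρ0 hρ hr m1 m2 k (by rw [hfl, dyad_floor])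
  let X : ℕ → ℕ → Ω → ℝ := fun k j ω => B ω (a + cS c ((j:ℝ) / 2 ^ (k+1))) i0 - B ω (a + cS c ((((j/2:ℕ):ℕ):ℝ) / 2 ^ k)) i0
  let A : Set Ω := {ω | ∀ k j : ℕ, j < 2 ^ (k+1) → |X k j ω| ≤ 4 * ((k:ℝ)+1) * (R * ((1/2)^k / ((k:ℝ)+1)^3))}
  have hA : ℙ Aᶜ < 1 := by
    have hsub : Aᶜ ⊆ ⋃ k : ℕ, ⋃ j ∈ Finset.range (2 ^ (k+1)),
        {ω | 4 * ((k:ℝ)+1) * (R * ((1/2)^k / ((k:ℝ)+1)^3)) < |X k j ω|} := by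
      intro ω hω
      have hω' : ¬ ∀ k j : ℕ, j < 2 ^ (k+1) → |X k j ω| ≤ 4 * ((k:ℝ)+1) * (R * ((1/2)^k / ((k:ℝ)+1)^3)) := hω
      push Not at hω'
      obtain ⟨k, j, hj, hlt⟩ := hω'
      simp only [mem_iUnion]
      exact ⟨k, j, Finset.mem_range.2 hj, hlt⟩
    have hone : ∀ k j : ℕ, j < 2 ^ (k+1) →
        ℙ {ω | 4 * ((k:ℝ)+1) * (R * ((1/2)^k / ((k:ℝ)+1)^3)) < |X k j ω|} ≤ ENNReal.ofReal (4 * (1/16)^(k+1)) := by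
      intro k j hj
      obtain ⟨m1, m2, hle⟩ := hincr k j hj
      obtain ⟨v, hv, hm⟩ := fbm_incr ℙ h0 hB i0 (hT01 _ m1) (hT01 _ m2)
      refine tail_bound ℙ (X k j) v hm _ (by positivity) ?_ k
      rw [hv]
      gcongr
    calc ℙ Aᶜ ≤ ∑' k : ℕ, ENNReal.ofReal (1/2 * (1/8)^k) := by
          refine (measure_mono hsub).trans ((measure_iUnion_le _).trans (ENNReal.tsum_le_tsum fun k => ?_))
          refine (measure_biUnion_finset_le _ _).trans ?_
          refine (Finset.sum_le_sum fun j hj => hone k j (Finset.mem_range.1 hj)).trans ?_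
          simp only [Finset.sum_const, Finset.card_range, nsmul_eq_mul]
          rw [← ENNReal.ofReal_natCast, ← ENNReal.ofReal_mul (by positivity)]
          apply ENNReal.ofReal_le_ofReal
          apply le_of_eq
          push_cast
          rw [mul_left_comm, ← mul_pow, pow_succ]
          norm_num
          ring
      _ = ENNReal.ofReal (4/7) := by
          rw [← ENNReal.ofReal_tsum_of_nonneg (fun k => by positivity)
            ((summable_geometric_of_lt_one (by norm_num) (by norm_num)).mul_left _), tsum_mul_left,
            tsum_geometric_of_lt_one (by norm_num) (by norm_num)]
          norm_num
      _ < 1 := by rw [ENNReal.ofReal_lt_one]; norm_num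
  have hcoord : ∀ ω, ContinuousOn (fun t => B ω t i0) (Icc 0 1) := fun ω =>
    (EuclideanSpace.proj (𝕜 := ℝ) i0).continuous.comp_continuousOn (hB.cont ω)
  have hTc := cT_contOn hc hρ0 hρ hr hη a
  obtain ⟨z, hz⟩ := fubini_hit ℙ (fun ω x => B ω (a + cS c x) i0 + Λ * x) (fatK η) (fatK_compact η)
    (fun x => by
      have h1 := hB.meas (a + cS c x)
      have h2 : Measurable fun ω => B ω (a + cS c x) i0 :=
        (EuclideanSpace.proj (𝕜 := ℝ) i0).continuous.measurable.comp h1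
      exact h2.add_const _)
    (fun ω => by
      refine ContinuousOn.add ?_ (by fun_prop)
      exact (hcoord ω).comp hTc fun x hx => hT01 x hx.1)
    A hA
    (fun ω hω => by
      refine expand_pos hvol fun x hx y hy => ?_
      have hl := lip_bound hc hρ0 hρ hr a R hR.le (fun t => B ω t i0) hT01 (hcoord ω) hω hη hx hy
      simp only at hl
      set p := B ω (a + cS c x) i0
      set q := B ω (a + cS c y) i0
      have h1 : Λ * |x - y| = |(p + Λ * x - (q + Λ * y)) - (p - q)| := by
        rw [show (p + Λ * x - (q + Λ * y)) - (p - q) = Λ * (x - y) by ring, abs_mul, abs_of_pos hΛ0]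
      have h2 := abs_sub (p + Λ * x - (q + Λ * y)) (p - q)
      rw [← h1, hΛ, add_mul, one_mul] at h2
      linarith)
  set E := (fun x => a + cS c x) '' fatK η with hE
  let F : ℕ → Set (EuclideanSpace ℝ (Fin d)) := fun n => {v | v i0 = z ∧ ‖v‖ ≤ (n:ℝ) + 1}
  obtain ⟨n, hn⟩ : ∃ n : ℕ, 0 < ℙ {ω | ∃ t ∈ E, B ω t + f t ∈ F n} := by
    by_contra! hcon
    have h1 : ℙ (⋃ n : ℕ, {ω | ∃ t ∈ E, B ω t + f t ∈ F n}) = 0 :=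
      measure_iUnion_null fun n => le_antisymm (hcon n) bot_le
    have h2 : {ω | ∃ x ∈ fatK η, B ω (a + cS c x) i0 + Λ * x = z} ⊆
        ⋃ n : ℕ, {ω | ∃ t ∈ E, B ω t + f t ∈ F n} := by
      rintro ω ⟨x, hx, hxz⟩
      obtain ⟨n, hn⟩ := exists_nat_gt ‖B ω (a + cS c x) + f (a + cS c x)‖
      refine mem_iUnion.2 ⟨n, a + cS c x, mem_image_of_mem _ hx, ?_, by linarith⟩
      simp only [f, gInv_apply hc hρ0 hρ hr a hx.1]
      simpa using hxz
    exact absurd (measure_mono_null h2 h1) hz.ne'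
  have hzero : hMeasure (parabolicDist H) d (E ×ˢ F n) = 0 :=
    cover_zero hH i0 hc hρ0 hρ hr a R hR hcR hη z ((n:ℝ)+1) (by positivity)
  refine ⟨f, ?_, ?_, E, F n, (fatK_compact η).image_of_continuousOn hTc, ?_, ?_,
    capacity_zero hH hd _ hzero, hzero, hn⟩
  · intro τ hτ
    obtain ⟨Q, hQ0, hQ⟩ := holder_aux hH hκ hcκ hτ
    have hγ : 0 < H - τ := by linarith [hτ.2]
    refine ⟨Λ * (2 * Q), ?_⟩
    intro s hs t ht
    wlog hst : t < s generalizing s t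
    · rcases eq_or_lt_of_le (not_lt.1 hst) with h | h
      · rw [h]; simp [Real.zero_rpow hγ.ne']
      · rw [norm_sub_rev, abs_sub_comm]; exact this t ht s hs h
    rw [hfsub, mul_assoc]
    gcongr
    rw [abs_of_nonneg (sub_nonneg.2 (gInv_mono ht.1 hst.le)), abs_of_pos (sub_pos.2 hst)]
    have hex : ∃ k, c k ≤ s - t := by
      have hc0 := hc 0
      obtain ⟨k, hk⟩ := exists_pow_lt_of_lt_one (show 0 < (s - t) / c 0 from div_pos (by linarith) hc0) (show ρ < 1 by linarith)
      rw [lt_div_iff₀ hc0] at hk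
      exact ⟨k, by have := cS_geo hc hρ0 hr 0 k; simp at this; linarith⟩
    have hck := Nat.find_spec hex
    have hmin := fun m => Nat.find_min hex (m := m)
    set k := Nat.find hex
    have hg : gInv c a s - gInv c a t ≤ 2 * (1/2)^k := by
      rcases Nat.eq_zero_or_pos k with h | h
      · rw [h]
        have g1 := gInv_mem (c := c) hs.1
        have g2 := gInv_mem (c := c) ht.1
        norm_num
        linarith [g1.2, g2.1]
      · obtain ⟨m, hm⟩ : ∃ m, k = m + 1 := ⟨k - 1, by omega⟩
        have h1 := not_le.1 (hmin m (by omega))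
        have := gInv_mod hc hρ0 hρ hr ht.1 hst.le m h1
        rw [hm, pow_succ]
        linarith
    have hpow : c k ^ (H - τ) ≤ (s - t) ^ (H - τ) := Real.rpow_le_rpow (hc k).le hck hγ.le
    calc _ ≤ 2 * (1/2)^k := hg
      _ ≤ 2 * (Q * c k ^ (H - τ)) := by gcongr; exact hQ k
      _ ≤ 2 * (Q * (s - t) ^ (H - τ)) := by gcongr
      _ = _ := by ring
  · rintro ⟨Q, hQ⟩
    obtain ⟨k, hk⟩ := exists_nat_gt (2 * (|Q| * R) / Λ)
    have m0 : (0:ℝ) ∈ Icc (0:ℝ) 1 := by simp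
    have m1 : ((1/2:ℝ)^(k+1)) ∈ Icc (0:ℝ) 1 := ⟨by positivity, pow_le_one₀ (by norm_num) (by norm_num)⟩
    have h1 := hQ _ (hTab _ m1) _ (hTab _ m0)
    rw [hfsub, gInv_apply hc hρ0 hρ hr a m1, gInv_apply hc hρ0 hρ hr a m0, sub_zero, abs_of_nonneg m1.1,
      add_sub_add_left_eq_sub] at h1
    have hfl : ⌊(2:ℝ) ^ k * (1/2)^(k+1)⌋₊ = ⌊(2:ℝ) ^ k * 0⌋₊ := by
      rw [pow_succ, ← mul_assoc, ← mul_pow]; norm_num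
    have h2 := cS_close hc hρ0 hρ hr m1 m0 k hfl
    have h3 := (Real.rpow_le_rpow (abs_nonneg _) h2 h0.le).trans (hcR k)
    have h4 : Λ * (1/2)^(k+1) ≤ |Q| * (R * ((1/2)^k / ((k:ℝ)+1)^3)) := by
      refine h1.trans ?_
      calc _ ≤ |Q| * |cS c ((1/2)^(k+1)) - cS c 0| ^ H := by
            gcongr; exact le_abs_self Q
        _ ≤ _ := by gcongr
    have hp : (0:ℝ) < (1/2)^k := by positivity
    have hk0 : (0:ℝ) ≤ k := by positivity
    have hk3 : (k:ℝ) ≤ ((k:ℝ)+1)^3 := by nlinarith [mul_nonneg hk0 hk0, mul_nonneg (mul_nonneg hk0 hk0) hk0]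
    have h5 : Λ * ((k:ℝ)+1)^3 ≤ 2 * (|Q| * R) := by
      have e : |Q| * (R * ((1/2)^k / ((k:ℝ)+1)^3)) = (1/2)^k * (|Q| * R / ((k:ℝ)+1)^3) := by ring
      rw [e, pow_succ] at h4
      have h6 : Λ * (1/2) ≤ |Q| * R / ((k:ℝ)+1)^3 := by
        refine le_of_mul_le_mul_left ?_ hp
        linarith
      rw [le_div_iff₀ (by positivity)] at h6
      linarith
    rw [div_lt_iff₀ hΛ0] at hk
    nlinarith
  · rintro _ ⟨x, hx, rfl⟩
    exact hTab x hx.1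
  · have hF : F n = Metric.closedBall 0 ((n:ℝ)+1) ∩ {v | v i0 = z} := by
      ext v; simp [F, and_comm]
    rw [hF]
    refine (isCompact_closedBall _ _).inter_right ?_
    exact isClosed_eq (EuclideanSpace.proj (𝕜 := ℝ) i0).continuous continuous_const
end

section
/- Let B^H = {B^H(t), t ∈ [0,1]} be a d-dimensional fractional Brownian motion of Hurst index H ∈ (0,1), let I = [a,b] with 0 < a < b ≤ 1, let f : [0,1] → ℝ^d be a bounded Borel measurable function, and let E ⊆ I be a Borel set. Then for any M > 0 there exists a constant c ≥ 1 such that for all x ∈ [−M,M]^d: c^{−1} · C^{d}_{ρ_{d_H}}(Gr_E(f)) ≤ ℙ{∃ t ∈ E : B^H(t) + f(t) = x} ≤ c · ℋ^{d}_{ρ_{d_H}}(Gr_E(f)). -/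
open MeasureTheory Set ENNReal

section Part1
open ProbabilityTheory

structure FB1 {Ω : Type*} [MeasurableSpace Ω] (P : Measure Ω) (H : ℝ) (X : ℝ → Ω → ℝ) : Prop where
  meas : ∀ t, Measurable (X t)
  gaussian : ∀ (n : ℕ) (t : Fin n → ℝ) (a : Fin n → ℝ), (∀ j, t j ∈ Set.Icc (0 : ℝ) 1) →
      ∃ v : NNReal, (v : ℝ) = ∑ j, ∑ k, a j * a k * fbmCov H (t j) (t k) ∧
        P.map (fun ω => ∑ j, a j * X (t j) ω) = gaussianReal 0 v

variable {Ω : Type*} [MeasurableSpace Ω] {P : Measure Ω} {H : ℝ} {X : ℝ → Ω → ℝ}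

lemma FB1.law1 (h : FB1 P H X) {t : ℝ} (ht : t ∈ Icc (0:ℝ) 1) :
    ∃ v : NNReal, (v : ℝ) = fbmCov H t t ∧ P.map (X t) = gaussianReal 0 v := by
  obtain ⟨v, hv, hm⟩ := h.gaussian 1 (fun _ => t) (fun _ => 1) (fun _ => ht)
  refine ⟨v, by simpa using hv, by simpa using hm⟩

lemma FB1.law2 (h : FB1 P H X) {s t : ℝ} (hs : s ∈ Icc (0:ℝ) 1) (ht : t ∈ Icc (0:ℝ) 1)
    (α β : ℝ) :
    ∃ v : NNReal, (v : ℝ) = α^2 * fbmCov H s s + α * β * fbmCov H s t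
        + β * α * fbmCov H t s + β^2 * fbmCov H t t ∧
      P.map (fun ω => α * X s ω + β * X t ω) = gaussianReal 0 v := by
  obtain ⟨v, hv, hm⟩ := h.gaussian 2 ![s, t] ![α, β] (by intro j; fin_cases j <;> simpa)
  refine ⟨v, ?_, ?_⟩
  · rw [hv]; simp [Fin.sum_univ_two]; ring
  · simpa [Fin.sum_univ_two] using hm

lemma FB1.law3 (h : FB1 P H X) {s t u : ℝ} (hs : s ∈ Icc (0:ℝ) 1) (ht : t ∈ Icc (0:ℝ) 1)
    (hu : u ∈ Icc (0:ℝ) 1) (α β γ : ℝ) :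
    ∃ v : NNReal, (v : ℝ) = α^2 * fbmCov H s s + β^2 * fbmCov H t t + γ^2 * fbmCov H u u
        + α * β * (fbmCov H s t + fbmCov H t s) + α * γ * (fbmCov H s u + fbmCov H u s)
        + β * γ * (fbmCov H t u + fbmCov H u t) ∧
      P.map (fun ω => α * X s ω + β * X t ω + γ * X u ω) = gaussianReal 0 v := by
  obtain ⟨v, hv, hm⟩ := h.gaussian 3 ![s, t, u] ![α, β, γ] (by intro j; fin_cases j <;> simpa)
  refine ⟨v, ?_, ?_⟩
  · rw [hv]; simp [Fin.sum_univ_three]; ring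
  · simpa [Fin.sum_univ_three] using hm

lemma FB1.isGP (h : FB1 P H X) :
    IsGaussianProcess (fun (t : Icc (0:ℝ) 1) => X t) P where
  hasGaussianLaw I := by
    constructor
    apply isGaussian_of_map_eq_gaussianReal
    intro L
    obtain ⟨v, -, hm⟩ := h.gaussian I.card (fun j => ((I.equivFin.symm j : I) : Icc (0:ℝ) 1))
      (fun j => L (Pi.single (I.equivFin.symm j) 1)) (fun j => (I.equivFin.symm j).1.2)
    refine ⟨0, v, ?_⟩
    have hmeas : Measurable (fun ω => I.restrict fun (x : Icc (0:ℝ) 1) => X x ω) :=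
      measurable_pi_lambda _ fun i => h.meas _
    rw [← hm, Measure.map_map L.continuous.measurable hmeas]
    congr 1
    ext ω
    simp only [Function.comp]
    have h1 := pi_eq_sum_univ' (I.restrict (fun (t : Icc (0:ℝ) 1) => X t ω))
    rw [h1, map_sum, ← Equiv.sum_comp I.equivFin.symm]
    refine Finset.sum_congr rfl fun j _ => ?_
    rw [map_smul, smul_eq_mul, mul_comm]
    congr 2

lemma var_of_law {Y : Ω → ℝ} (hY : Measurable Y) {v : NNReal}
    (h : P.map Y = gaussianReal 0 v) : Var[Y; P] = v := by
  have := variance_map (μ := P) (X := id) (Y := Y) (by fun_prop) hY.aemeasurable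
  rw [h, variance_id_gaussianReal] at this
  simpa using this.symm

lemma memLp_of_law {Y : Ω → ℝ} (hY : Measurable Y) {v : NNReal}
    (h : P.map Y = gaussianReal 0 v) : MemLp Y 2 P := by
  have := memLp_id_gaussianReal' (μ := 0) (v := v) 2 (by simp)
  rw [← h, memLp_map_measure_iff (by fun_prop) hY.aemeasurable] at this
  simpa using this

lemma FB1.memLp (h : FB1 P H X) {t : ℝ} (ht : t ∈ Icc (0:ℝ) 1) : MemLp (X t) 2 P := by
  obtain ⟨v, -, hm⟩ := h.law1 ht
  exact memLp_of_law (h.meas t) hm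

lemma fbmCov_comm (s t : ℝ) : fbmCov H s t = fbmCov H t s := by
  unfold fbmCov; rw [abs_sub_comm]; ring

lemma FB1.cov [IsProbabilityMeasure P] (h : FB1 P H X) {s t : ℝ} (hs : s ∈ Icc (0:ℝ) 1) (ht : t ∈ Icc (0:ℝ) 1) :
    cov[X s, X t; P] = fbmCov H s t := by
  obtain ⟨v1, hv1, hm1⟩ := h.law1 hs
  obtain ⟨v2, hv2, hm2⟩ := h.law1 ht
  obtain ⟨v, hv, hm⟩ := h.law2 hs ht 1 1
  have e := variance_add (h.memLp hs) (h.memLp ht)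
  simp only [one_mul] at hm
  have : Var[X s + X t; P] = v := var_of_law ((h.meas s).add (h.meas t)) hm
  rw [this, var_of_law (h.meas s) hm1, var_of_law (h.meas t) hm2, hv, hv1, hv2,
    fbmCov_comm t s] at e
  linarith

lemma gp_of_lin {S T Ω : Type*} [MeasurableSpace Ω] {P : Measure Ω} {X : T → Ω → ℝ} {Y : S → Ω → ℝ}
    (hX : IsGaussianProcess X P)
    (h : ∀ s, ∃ I : Finset T, ∃ L : (I → ℝ) →L[ℝ] ℝ, ∀ ω, Y s ω = L (I.restrict (X · ω))) :
    IsGaussianProcess Y P where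
  hasGaussianLaw I := by
    choose J L hL using h
    classical
    let K : (I.biUnion J → ℝ) →L[ℝ] I → ℝ :=
      ContinuousLinearMap.pi fun s => (L s).comp
        (ContinuousLinearMap.pi fun t : J s =>
          ContinuousLinearMap.proj (⟨t.1, Finset.mem_biUnion.2 ⟨s.1, s.2, t.2⟩⟩ : I.biUnion J))
    have : (fun ω ↦ I.restrict (Y · ω)) = K ∘ (fun ω ↦ (I.biUnion J).restrict (X · ω)) := by
      funext ω s
      exact hL s ω
    rw [this]
    exact (hX.hasGaussianLaw _).map _

/-- regression: `X s` is independent of the residual process. -/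
lemma FB1.indep_resid [IsProbabilityMeasure P] (h : FB1 P H X) {s : ℝ} (hs : s ∈ Icc (0:ℝ) 1)
    (hpos : fbmCov H s s ≠ 0) :
    IndepFun (X s) (fun ω (t : Icc (0:ℝ) 1) => X t ω - fbmCov H s t / fbmCov H s s * X s ω) P := by
  classical
  have key : IndepFun (fun ω (_ : Unit) => X s ω)
      (fun ω (t : Icc (0:ℝ) 1) => X t ω - fbmCov H s t / fbmCov H s s * X s ω) P := by
    apply IsGaussianProcess.indepFun_of_covariance_eq_zero (X := fun (_ : Unit) => X s)
      (Y := fun (t : Icc (0:ℝ) 1) ω => X t ω - fbmCov H s t / fbmCov H s s * X s ω)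
    · refine gp_of_lin h.isGP ?_
      rintro (_ | t)
      · refine ⟨{⟨s, hs⟩}, ContinuousLinearMap.proj ⟨⟨s, hs⟩, by simp⟩, fun ω => by simp⟩
      · refine ⟨{⟨s, hs⟩, t}, ContinuousLinearMap.proj ⟨t, by simp⟩ -
          (fbmCov H s t / fbmCov H s s) • ContinuousLinearMap.proj ⟨⟨s, hs⟩, by simp⟩,
          fun ω => by simp⟩
    · intro _; exact (h.meas s).aemeasurable
    · intro t; exact ((h.meas t).sub ((h.meas s).const_mul _)).aemeasurable
    · intro _ t
      have e := covariance_fun_sub_right (h.memLp hs) (h.memLp t.2)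
        ((h.memLp hs).const_mul (fbmCov H s t / fbmCov H s s))
      rw [e, covariance_const_mul_right, h.cov hs t.2, h.cov hs hs]
      field_simp; simp
  exact key.comp (φ := fun g : Unit → ℝ => g ()) (ψ := id) (measurable_pi_apply _) measurable_id

lemma decouple {α β : Type*} [MeasurableSpace α] [MeasurableSpace β] [IsProbabilityMeasure P]
    {Y : Ω → α} {Z : Ω → β} (hY : Measurable Y) (hZ : Measurable Z) (hi : IndepFun Y Z P)
    {Q : Set (α × β)} (hQ : MeasurableSet Q) :
    P {ω | (Y ω, Z ω) ∈ Q} = ∫⁻ ω, P.map Y {y | (y, Z ω) ∈ Q} ∂P := by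
  have h1 : P {ω | (Y ω, Z ω) ∈ Q} = P.map (fun ω => (Y ω, Z ω)) Q := by
    rw [Measure.map_apply (hY.prodMk hZ) hQ]; rfl
  have : IsProbabilityMeasure (P.map Y) := Measure.isProbabilityMeasure_map hY.aemeasurable
  have : IsProbabilityMeasure (P.map Z) := Measure.isProbabilityMeasure_map hZ.aemeasurable
  rw [h1, (indepFun_iff_map_prod_eq_prod_map_map hY.aemeasurable hZ.aemeasurable).1 hi,
    Measure.prod_apply_symm hQ, lintegral_map (measurable_measure_prodMk_right hQ) hZ]
  rfl

end Part1


section Part2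
open ProbabilityTheory

lemma fbmCov_eq {H s t : ℝ} (hs : 0 ≤ s) (ht : 0 ≤ t) :
    fbmCov H s t = ((s ^ H)^2 + (t ^ H)^2 - (|t - s| ^ H)^2) / 2 := by
  have e : ∀ x : ℝ, 0 ≤ x → x ^ (2 * H) = (x ^ H)^2 := fun x hx => by
    rw [mul_comm, Real.rpow_mul hx, Real.rpow_two]
  unfold fbmCov
  rw [abs_of_nonneg hs, abs_of_nonneg ht, e _ hs, e _ ht, e _ (abs_nonneg _)]

lemma fbmCov_self {H s : ℝ} (hH : 0 < H) (hs : 0 ≤ s) : fbmCov H s s = (s ^ H)^2 := by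
  rw [fbmCov_eq hs hs, sub_self, abs_zero, Real.zero_rpow hH.ne']; ring

lemma rpow_tri {H x y : ℝ} (hH : 0 < H) (hH1 : H < 1) (hx : 0 ≤ x) (hy : 0 ≤ y) :
    (x + y) ^ H ≤ x ^ H + y ^ H :=
  Real.rpow_add_le_add_rpow hx hy hH.le hH1.le

lemma rpow_abs_tri {H s t u : ℝ} (hH : 0 < H) (hH1 : H < 1) :
    |s - t| ^ H ≤ |s - u| ^ H + |u - t| ^ H := by
  refine le_trans ?_ (rpow_tri hH hH1 (abs_nonneg _) (abs_nonneg _))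
  exact Real.rpow_le_rpow (abs_nonneg _) (abs_sub_le _ _ _) hH.le

lemma rpow_tri3 {H s t : ℝ} (hH : 0 < H) (hH1 : H < 1) (hs : 0 ≤ s) (ht : 0 ≤ t) :
    t ^ H ≤ s ^ H + |t - s| ^ H ∧ s ^ H ≤ t ^ H + |t - s| ^ H ∧ |t - s| ^ H ≤ s ^ H + t ^ H := by
  have h0 := abs_of_nonneg hs
  have h1 := abs_of_nonneg ht
  refine ⟨?_, ?_, ?_⟩
  · have := rpow_abs_tri (s := t) (t := 0) (u := s) hH hH1
    simp only [sub_zero, h0, h1] at this; linarith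
  · have := rpow_abs_tri (s := s) (t := 0) (u := t) hH hH1
    simp only [sub_zero, h0, h1] at this; rw [abs_sub_comm]; linarith
  · have := rpow_abs_tri (s := t) (t := s) (u := 0) hH hH1
    simp only [sub_zero, zero_sub, abs_neg, h0, h1] at this; linarith

lemma fbmCov_close {H s t : ℝ} (hH : 0 < H) (hH1 : H < 1) (hs : 0 ≤ s) (ht : 0 ≤ t) :
    |fbmCov H s t - (s ^ H)^2| ≤ s ^ H * |t - s| ^ H := by
  obtain ⟨h1, h2, h3⟩ := rpow_tri3 hH hH1 hs ht
  rw [fbmCov_eq hs ht]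
  have a1 : 0 ≤ s ^ H := Real.rpow_nonneg hs _
  have a2 : 0 ≤ t ^ H := Real.rpow_nonneg ht _
  have a3 : 0 ≤ |t - s| ^ H := Real.rpow_nonneg (abs_nonneg _) _
  generalize s ^ H = A at *
  generalize t ^ H = B at *
  generalize |t - s| ^ H = τ at *
  rw [abs_le]; constructor
  · have : |A - τ| ≤ |B| := by rw [abs_of_nonneg a2, abs_le]; constructor <;> linarith
    have := sq_le_sq.2 this
    nlinarith
  · nlinarith

/-- two point nondegeneracy -/
lemma rpow_diff {H a s t : ℝ} (hH : 0 < H) (hH1 : H < 1) (ha : 0 < a)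
    (hs : s ∈ Icc a 1) (ht : t ∈ Icc a 1) :
    (t ^ H - s ^ H)^2 ≤ ((1 - a) ^ (1 - H))^2 * (|t - s| ^ H)^2 := by
  wlog hst : s ≤ t generalizing s t
  · have := this ht hs (le_of_not_ge hst)
    rw [abs_sub_comm] at this; linarith
  have t0 : 0 < t := lt_of_lt_of_le ha ht.1
  have s0 : 0 < s := lt_of_lt_of_le ha hs.1
  set u := s / t with hu
  have u0 : 0 < u := div_pos s0 t0
  have u1 : u ≤ 1 := (div_le_one t0).2 hst
  have ua : a ≤ u := by
    rw [hu, le_div_iff₀ t0]; nlinarith [ht.2, hs.1]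
  have se : s = t * u := by rw [hu]; field_simp
  have h1 : u ≤ u ^ H := by
    simpa using Real.rpow_le_rpow_of_exponent_ge u0 u1 hH1.le
  have h2 : 1 - u = (1 - u) ^ (1 - H) * (1 - u) ^ H := by
    rcases eq_or_lt_of_le u1 with h | h
    · rw [h]; simp [Real.zero_rpow hH.ne']
    · rw [← Real.rpow_add (by linarith)]; simp
  have h3 : (1 - u) ^ (1 - H) ≤ (1 - a) ^ (1 - H) :=
    Real.rpow_le_rpow (by linarith) (by linarith) (by linarith)
  have h4 : 0 ≤ (1 - u) ^ H := Real.rpow_nonneg (by linarith) _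
  have h5 : 1 - u ^ H ≤ (1 - a) ^ (1 - H) * (1 - u) ^ H := by nlinarith
  have h6 : 0 ≤ 1 - u ^ H := by
    have := Real.rpow_le_one u0.le u1 hH.le
    linarith
  have tH : 0 ≤ t ^ H := Real.rpow_nonneg t0.le _
  have e1 : t ^ H - s ^ H = t ^ H * (1 - u ^ H) := by
    rw [se, Real.mul_rpow t0.le u0.le]; ring
  have e2 : |t - s| ^ H = t ^ H * (1 - u) ^ H := by
    rw [abs_of_nonneg (by linarith), ← Real.mul_rpow t0.le (by linarith)]
    congr 1; rw [se]; ring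
  rw [e1, e2, ← mul_pow]
  apply pow_le_pow_left₀ (by positivity)
  nlinarith [mul_le_mul_of_nonneg_left h5 tH]

lemma gauss_le {v : NNReal} (hv : v ≠ 0) {A : Set ℝ} (hA : MeasurableSet A) {K : ℝ}
    (h : ∀ x ∈ A, gaussianPDFReal 0 v x ≤ K) :
    gaussianReal 0 v A ≤ ENNReal.ofReal K * volume A := by
  rw [gaussianReal_apply _ hv, ← setLIntegral_const]
  exact setLIntegral_mono measurable_const fun x hx => ENNReal.ofReal_le_ofReal (h x hx)

lemma pdf_le {v : NNReal} {w : ℝ} (hw : 0 < w) (hv : w^2 ≤ v) (x : ℝ) :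
    gaussianPDFReal 0 v x ≤ w⁻¹ * Real.exp (-x^2 / (2 * v)) := by
  rw [gaussianPDFReal_def]
  simp only [sub_zero]
  gcongr
  apply Real.le_sqrt_of_sq_le
  have : 1 ≤ 2 * Real.pi := by nlinarith [Real.pi_gt_three]
  nlinarith [sq_nonneg w, v.2]

lemma gauss_Icc_le {v : NNReal} {w : ℝ} (hw : 0 < w) (hv : w^2 ≤ v) (z r : ℝ) :
    gaussianReal 0 v (Icc (z - r) (z + r)) ≤ ENNReal.ofReal (w⁻¹ * (2 * r)) := by
  have hv0 : v ≠ 0 := by rintro rfl; simp at hv; nlinarith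
  refine (gauss_le hv0 measurableSet_Icc (K := w⁻¹) ?_).trans ?_
  · intro x _
    refine (pdf_le hw hv x).trans ?_
    have : Real.exp (-x^2 / (2 * v)) ≤ 1 := by
      rw [Real.exp_le_one_iff]; apply div_nonpos_of_nonpos_of_nonneg <;> [nlinarith; positivity]
    nlinarith [inv_pos.2 hw]
  · rw [Real.volume_Icc, ← ENNReal.ofReal_mul (by positivity)]
    apply le_of_eq; congr 2; ring

lemma gauss_ball_le {v : NNReal} {w : ℝ} (hw : 0 < w) (hv : w^2 ≤ v) (z : ℝ) (S : ℝ≥0∞) :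
    gaussianReal 0 v {x | edist x z ≤ S} ≤ ENNReal.ofReal (2 * w⁻¹) * S := by
  rcases eq_or_ne S ⊤ with rfl | hS
  · rw [ENNReal.mul_top (by simp; positivity)]; exact le_top
  · have e : {x | edist x z ≤ S} = Icc (z - S.toReal) (z + S.toReal) := by
      ext x
      rw [mem_ofPred_eq, edist_dist, ENNReal.ofReal_le_iff_le_toReal hS, Real.dist_eq, abs_le]
      simp only [mem_Icc]; constructor <;> rintro ⟨h1, h2⟩ <;> constructor <;> linarith
    rw [e]
    refine (gauss_Icc_le hw hv _ _).trans ?_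
    conv_rhs => rw [← ENNReal.ofReal_toReal hS]
    rw [← ENNReal.ofReal_mul (by positivity)]
    apply le_of_eq; congr 1; ring

lemma gauss_far_le {v : NNReal} {w : ℝ} (hw : 0 < w) (hv : w^2 = v) (z r : ℝ)
    (hr : 2 * r ≤ |z|) :
    gaussianReal 0 v (Icc (z - r) (z + r)) ≤
      ENNReal.ofReal (w⁻¹ * (2 * r) * Real.exp (-z^2 / (8 * w^2))) := by
  have hv0 : v ≠ 0 := by rintro rfl; simp at hv; exact hw.ne' hv
  refine (gauss_le hv0 measurableSet_Icc (K := w⁻¹ * Real.exp (-z^2 / (8 * w^2))) ?_).trans ?_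
  · intro x hx
    refine (pdf_le hw hv.le x).trans ?_
    gcongr ?_ * Real.exp ?_
    rw [← hv, div_le_div_iff₀ (by positivity) (by positivity)]
    have h1 : |z / 2| ≤ |x| := by
      have h2 : |z - x| ≤ r := by rw [abs_le]; constructor <;> linarith [hx.1, hx.2]
      have := abs_sub_abs_le_abs_sub z x
      rw [abs_div, abs_two]; linarith
    have := sq_le_sq.2 h1
    nlinarith [sq_nonneg w, mul_le_mul_of_nonneg_left this (sq_nonneg w)]
  · rw [Real.volume_Icc, ← ENNReal.ofReal_mul (by positivity)]
    apply le_of_eq; congr 1; ring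

lemma gauss_lower {a0 K : ℝ} (ha0 : 0 < a0) (hK : 0 ≤ K) : ∃ c > 0, ∀ v : NNReal, a0 ≤ v → v ≤ 1 →
    ∀ z, |z| ≤ K → ∀ r, 0 < r → r ≤ 1 → ENNReal.ofReal (c * r) ≤
      gaussianReal 0 v (Icc (z - r) (z + r)) := by
  refine ⟨(√(2 * Real.pi))⁻¹ * Real.exp (-(K + 1)^2 / (2 * a0)) * 2, by positivity, ?_⟩
  intro v hv hv1 z hz r hr hr1
  have hvp : 0 < (v:ℝ) := lt_of_lt_of_le ha0 hv
  have hv0 : v ≠ 0 := by rintro rfl; simp at hvp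
  have e : ENNReal.ofReal ((√(2 * Real.pi))⁻¹ * Real.exp (-(K + 1)^2 / (2 * a0)) * 2 * r) =
      ENNReal.ofReal ((√(2 * Real.pi))⁻¹ * Real.exp (-(K + 1)^2 / (2 * a0))) *
        volume (Icc (z - r) (z + r)) := by
    rw [Real.volume_Icc, ← ENNReal.ofReal_mul (by positivity)]; congr 1; ring
  rw [e, gaussianReal_apply _ hv0, ← setLIntegral_const]
  refine setLIntegral_mono (measurable_gaussianPDF _ _) fun x hx => ENNReal.ofReal_le_ofReal ?_
  rw [gaussianPDFReal_def]
  simp only [sub_zero]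
  have hx2 : x^2 ≤ (K+1)^2 := by
    apply sq_le_sq'
    · have := (abs_le.1 hz).1; linarith [hx.1]
    · have := (abs_le.1 hz).2; linarith [hx.2]
  have hv1' : (v:ℝ) ≤ 1 := by exact_mod_cast hv1
  gcongr ?_ * Real.exp ?_
  · exact inv_anti₀ (by positivity) (Real.sqrt_le_sqrt (by nlinarith [Real.pi_pos]))
  · rw [div_le_div_iff₀ (by positivity) (by positivity)]
    nlinarith [sq_nonneg x, sq_nonneg (K+1)]

lemma gauss_moment (p : ℕ) : ∃ C : ℝ, 0 ≤ C ∧ ∀ v : NNReal, ∀ w : ℝ, 0 ≤ w → (v:ℝ) ≤ w^2 →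
    ∫⁻ x, ENNReal.ofReal (|x| ^ p) ∂(gaussianReal 0 v) ≤ ENNReal.ofReal (C * w ^ p) := by
  have hint : Integrable (fun x : ℝ => |x| ^ p) (gaussianReal 0 1) := by
    have := (memLp_id_gaussianReal (μ := 0) (v := 1) (p : NNReal)).integrable_norm_pow'
    simpa using this
  refine ⟨∫ x, |x| ^ p ∂(gaussianReal 0 1), integral_nonneg fun x => by positivity, ?_⟩
  intro v w hw hv
  have hmap : gaussianReal 0 v = (gaussianReal 0 1).map (fun x => √v * x) := by
    rw [gaussianReal_map_const_mul]
    congr 1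
    · simp
    · ext; simp
  rw [hmap, lintegral_map (by fun_prop) (by fun_prop)]
  have : ∀ x : ℝ, ENNReal.ofReal (|√v * x| ^ p) ≤ ENNReal.ofReal (w^p) * ENNReal.ofReal (|x|^p) := by
    intro x
    rw [← ENNReal.ofReal_mul (by positivity), abs_mul, mul_pow, abs_of_nonneg (Real.sqrt_nonneg _)]
    gcongr
    exact Real.sqrt_le_iff.2 ⟨hw, hv⟩
  refine (lintegral_mono this).trans ?_
  rw [lintegral_const_mul _ (by fun_prop), ← ofReal_integral_eq_lintegral_ofReal hint
    (Filter.Eventually.of_forall fun x => by positivity), ← ENNReal.ofReal_mul (by positivity), mul_comm]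

end Part2


section Part3
open ProbabilityTheory

lemma det_lower {H a s t : ℝ} (hH : 0 < H) (hH1 : H < 1) (ha : 0 < a)
    (hs : s ∈ Icc a 1) (ht : t ∈ Icc a 1) (hst : s ≠ t) :
    (1 - ((1 - a) ^ (1 - H))^2) * (a ^ H)^2 / 4 ≤
      (s ^ H)^2 - (((s ^ H)^2 + (t ^ H)^2 - (|t - s| ^ H)^2) / 2 - (s ^ H)^2)^2 / (|t - s| ^ H)^2 := by
  have hd := rpow_diff hH hH1 ha hs ht
  have a1 : a ^ H ≤ s ^ H := Real.rpow_le_rpow ha.le hs.1 hH.le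
  have a2 : a ^ H ≤ t ^ H := Real.rpow_le_rpow ha.le ht.1 hH.le
  have a0 : 0 < a ^ H := Real.rpow_pos_of_pos ha _
  have s0 : 0 < s := lt_of_lt_of_le ha hs.1
  have t0 : 0 < t := lt_of_lt_of_le ha ht.1
  have τ0 : 0 < |t - s| ^ H := Real.rpow_pos_of_pos (abs_pos.2 (sub_ne_zero.2 hst.symm)) _
  have τ1 : |t - s| ^ H ≤ s ^ H ∨ |t - s| ^ H ≤ t ^ H := by
    rcases le_total s t with h | h
    · right; rw [abs_of_nonneg (by linarith)]
      exact Real.rpow_le_rpow (by linarith) (by linarith) hH.le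
    · left; rw [abs_of_nonpos (by linarith)]
      exact Real.rpow_le_rpow (by linarith) (by linarith) hH.le
  obtain ⟨q1, q2, -⟩ := rpow_tri3 hH hH1 s0.le t0.le
  generalize s ^ H = A at *
  generalize t ^ H = B at *
  generalize |t - s| ^ H = τ at *
  generalize a ^ H = α at *
  generalize (1 - a) ^ (1 - H) = κ at *
  have hq : A^2 - ((A^2 + B^2 - τ^2)/2 - A^2)^2 / τ^2 = ((τ^2 - (B - A)^2) * ((A+B)^2 - τ^2)) / (4 * τ^2) := by
    field_simp; ring
  rw [hq, div_le_div_iff₀ (by norm_num) (by positivity)]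
  have h2 : α^2 ≤ (A+B)^2 - τ^2 := by rcases τ1 with h | h <;> nlinarith
  have h1 : (1 - κ^2) * τ^2 ≤ τ^2 - (B-A)^2 := by linarith
  have h3 : 0 ≤ τ^2 - (B-A)^2 := by
    have : |B - A| ≤ |τ| := by rw [abs_of_pos τ0, abs_le]; constructor <;> linarith
    have := sq_le_sq.2 this
    linarith
  nlinarith [mul_le_mul_of_nonneg_left h2 h3, mul_le_mul_of_nonneg_right h1 (sq_nonneg α)]

variable {Ω : Type*} [MeasurableSpace Ω] {P : Measure Ω} [IsProbabilityMeasure P] {H : ℝ}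

lemma one_point {a : ℝ} (hH : 0 < H) (ha : 0 < a) {X : ℝ → Ω → ℝ} (h : FB1 P H X) {s : ℝ}
    (hs : s ∈ Icc a 1) (u ε : ℝ) :
    P {ω | |X s ω - u| ≤ ε} ≤ ENNReal.ofReal (2 * (a ^ H)⁻¹ * ε) := by
  have s0 : 0 < s := lt_of_lt_of_le ha hs.1
  obtain ⟨v, hv, hm⟩ := h.law1 (t := s) ⟨s0.le, hs.2⟩
  have e : {ω | |X s ω - u| ≤ ε} = X s ⁻¹' (Icc (u - ε) (u + ε)) := by
    ext ω; simp only [mem_ofPred_eq, mem_preimage, mem_Icc, abs_le]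
    constructor <;> rintro ⟨h1, h2⟩ <;> constructor <;> linarith
  rw [e, ← Measure.map_apply (h.meas s) measurableSet_Icc, hm]
  have := gauss_Icc_le (v := v) (w := a ^ H) (Real.rpow_pos_of_pos ha _) ?_ u ε
  · refine this.trans (le_of_eq ?_); congr 1; ring
  · rw [hv, fbmCov_self hH s0.le]
    exact pow_le_pow_left₀ (Real.rpow_nonneg ha.le _) (Real.rpow_le_rpow ha.le hs.1 hH.le) 2

lemma one_point_lower {a K : ℝ} (hH : 0 < H) (ha : 0 < a) (hK : 0 ≤ K) :
    ∃ c > 0, ∀ X : ℝ → Ω → ℝ, FB1 P H X → ∀ s ∈ Icc a 1, ∀ u, |u| ≤ K → ∀ ε, 0 < ε → ε ≤ 1 →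
      ENNReal.ofReal (c * ε) ≤ P {ω | |X s ω - u| ≤ ε} := by
  obtain ⟨c, hc, h'⟩ := gauss_lower (a0 := (a ^ H)^2) (K := K)
    (pow_pos (Real.rpow_pos_of_pos ha _) 2) hK
  refine ⟨c, hc, ?_⟩
  intro X h s hs u hu ε hε hε1
  have s0 : 0 < s := lt_of_lt_of_le ha hs.1
  obtain ⟨v, hv, hm⟩ := h.law1 (t := s) ⟨s0.le, hs.2⟩
  have e : {ω | |X s ω - u| ≤ ε} = X s ⁻¹' (Icc (u - ε) (u + ε)) := by
    ext ω; simp only [mem_ofPred_eq, mem_preimage, mem_Icc, abs_le]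
    constructor <;> rintro ⟨h1, h2⟩ <;> constructor <;> linarith
  rw [e, ← Measure.map_apply (h.meas s) measurableSet_Icc, hm]
  rw [fbmCov_self hH s0.le] at hv
  refine h' v ?_ ?_ u hu ε hε hε1
  · rw [hv]
    exact pow_le_pow_left₀ (Real.rpow_nonneg ha.le _) (Real.rpow_le_rpow ha.le hs.1 hH.le) 2
  · rw [← NNReal.coe_le_coe, hv]
    have := Real.rpow_le_one s0.le hs.2 hH.le
    have := Real.rpow_nonneg s0.le H
    rw [NNReal.coe_one]; nlinarith

lemma two_point {a : ℝ} (hH : 0 < H) (hH1 : H < 1) (ha : 0 < a) (ha1 : a < 1) :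
    ∃ C > 0, ∀ X : ℝ → Ω → ℝ, FB1 P H X → ∀ s ∈ Icc a 1, ∀ t ∈ Icc a 1, s ≠ t →
      ∀ u u' ε : ℝ, 0 < ε →
      P {ω | |X s ω - u| ≤ ε ∧ |X t ω - u'| ≤ ε} ≤ ENNReal.ofReal (C * (ε^2 / |s - t| ^ H)) ∧
      (4 * ε ≤ |u - u'| → P {ω | |X s ω - u| ≤ ε ∧ |X t ω - u'| ≤ ε} ≤
        ENNReal.ofReal (C * (ε^2 / |s - t| ^ H) *
          Real.exp (-(u - u')^2 / (8 * (|s - t| ^ H)^2)))) := by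
  set κ := (1 - a) ^ (1 - H) with hκ
  have κ0 : 0 ≤ κ := Real.rpow_nonneg (by linarith) _
  have κ1 : κ < 1 := Real.rpow_lt_one (by linarith) (by linarith) (by linarith)
  have aH : 0 < a ^ H := Real.rpow_pos_of_pos ha _
  set w := √((1 - κ^2) * (a ^ H)^2 / 4) with hw
  have hw2 : 0 < (1 - κ^2) * (a ^ H)^2 / 4 := by
    have : 0 < 1 - κ^2 := by nlinarith
    positivity
  have w0 : 0 < w := Real.sqrt_pos.2 hw2
  refine ⟨8 * w⁻¹, by positivity, ?_⟩
  intro X h s hs t ht hst u u' ε hε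
  have s0 : 0 < s := lt_of_lt_of_le ha hs.1
  have t0 : 0 < t := lt_of_lt_of_le ha ht.1
  have hs' : s ∈ Icc (0:ℝ) 1 := ⟨s0.le, hs.2⟩
  have ht' : t ∈ Icc (0:ℝ) 1 := ⟨t0.le, ht.2⟩
  have hdet := det_lower hH hH1 ha hs ht hst
  rw [abs_sub_comm s t]
  have τ0 : 0 < |t - s| ^ H := Real.rpow_pos_of_pos (abs_pos.2 (sub_ne_zero.2 hst.symm)) _
  set τ := |t - s| ^ H with hτ
  have cst : fbmCov H s t = ((s ^ H)^2 + (t ^ H)^2 - τ^2) / 2 := fbmCov_eq s0.le t0.le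
  have css := fbmCov_self hH s0.le
  have ctt := fbmCov_self hH t0.le
  set β := (fbmCov H s t - fbmCov H s s) / τ^2 with hβ
  obtain ⟨vV, hvV, hmV⟩ := h.law2 hs' ht' (1 + β) (-β)
  obtain ⟨vW, hvW, hmW⟩ := h.law2 hs' ht' (-1) 1
  set V := fun ω => (1 + β) * X s ω + (-β) * X t ω with hV
  set W := fun ω => (-1) * X s ω + 1 * X t ω with hW
  have mV : Measurable V := ((h.meas s).const_mul _).add ((h.meas t).const_mul _)
  have mW : Measurable W := ((h.meas s).const_mul _).add ((h.meas t).const_mul _)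
  have eW : τ^2 = (vW:ℝ) := by
    rw [hvW, fbmCov_comm t s, cst, css, ctt]; ring
  have eV : w^2 ≤ (vV:ℝ) := by
    rw [hw, Real.sq_sqrt hw2.le, hvV, fbmCov_comm t s, hβ, cst, css, ctt]
    refine hdet.trans (le_of_eq ?_)
    field_simp; ring
  have hind : IndepFun V W P := by
    apply HasGaussianLaw.indepFun_of_covariance_eq_zero
    · have := (h.isGP.hasGaussianLaw_prodMk (s := ⟨s, hs'⟩) (t := ⟨t, ht'⟩)).map
        (((1 + β) • ContinuousLinearMap.fst ℝ ℝ ℝ + (-β) • ContinuousLinearMap.snd ℝ ℝ ℝ).prod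
        ((-1 : ℝ) • ContinuousLinearMap.fst ℝ ℝ ℝ + (1 : ℝ) • ContinuousLinearMap.snd ℝ ℝ ℝ))
      refine this.congr (Filter.Eventually.of_forall fun ω => ?_); simp [hV, hW]
    · have ls := h.memLp hs'
      have lt := h.memLp ht'
      have hV' : V = (fun ω => (1 + β) * X s ω) + (fun ω => (-β) * X t ω) := rfl
      have hW' : W = (fun ω => (-1) * X s ω) + (fun ω => 1 * X t ω) := rfl
      rw [hV', hW', covariance_add_left (ls.const_mul _) (lt.const_mul _)
        ((ls.const_mul _).add (lt.const_mul _)),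
        covariance_add_right (ls.const_mul _) (ls.const_mul _) (lt.const_mul _),
        covariance_add_right (lt.const_mul _) (ls.const_mul _) (lt.const_mul _)]
      simp only [covariance_const_mul_left, covariance_const_mul_right]
      rw [h.cov hs' hs', h.cov hs' ht', h.cov ht' hs', h.cov ht' ht', fbmCov_comm t s]
      have : β * τ^2 = fbmCov H s t - fbmCov H s s := by rw [hβ]; field_simp
      have h2 : τ^2 = fbmCov H s s + fbmCov H t t - 2 * fbmCov H s t := by rw [cst, css, ctt]; ring
      rw [h2] at this; linarith
  set Q : Set (ℝ × ℝ) := {q | |q.1 + β * q.2 - u| ≤ ε ∧ |q.2 - (u' - u)| ≤ 2 * ε} with hQ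
  have mQ : MeasurableSet Q := by
    apply MeasurableSet.inter
    · exact measurableSet_le (f := fun q : ℝ × ℝ => |q.1 + β * q.2 - u|) (g := fun _ => ε) (by fun_prop) (by fun_prop)
    · exact measurableSet_le (f := fun q : ℝ × ℝ => |q.2 - (u' - u)|) (g := fun _ => 2 * ε) (by fun_prop) (by fun_prop)
  set J := Icc ((u' - u) - 2 * ε) ((u' - u) + 2 * ε) with hJ
  have hmain : P {ω | |X s ω - u| ≤ ε ∧ |X t ω - u'| ≤ ε} ≤
      ENNReal.ofReal (w⁻¹ * (2 * ε)) * gaussianReal 0 vW J := by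
    calc P {ω | |X s ω - u| ≤ ε ∧ |X t ω - u'| ≤ ε}
        ≤ P {ω | (V ω, W ω) ∈ Q} := by
          apply measure_mono
          rintro ω ⟨h1, h2⟩
          refine ⟨?_, ?_⟩
          · simp only [hV, hW]
            convert h1 using 2; ring
          · simp only [hW]
            rw [abs_le] at *; constructor <;> linarith
      _ = ∫⁻ ω, P.map V {y | (y, W ω) ∈ Q} ∂P := decouple mV mW hind mQ
      _ ≤ ∫⁻ ω, (W ⁻¹' J).indicator (fun _ => ENNReal.ofReal (w⁻¹ * (2 * ε))) ω ∂P := by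
          apply lintegral_mono
          intro ω
          by_cases hω : W ω ∈ J
          · rw [indicator_of_mem (by exact hω), hmV]
            refine le_trans (measure_mono ?_) (gauss_Icc_le w0 eV (u - β * W ω) ε)
            rintro y ⟨hy, -⟩
            simp only at hy
            rw [abs_le] at hy
            constructor <;> linarith
          · rw [indicator_of_notMem (by exact hω)]
            have : {y | (y, W ω) ∈ Q} = ∅ := by
              ext y; simp only [mem_ofPred_eq, mem_empty_iff_false, iff_false]
              rintro ⟨-, hy⟩
              apply hω
              simp only at hy
              rw [abs_le] at hy
              constructor <;> linarith
            show P.map V {y | (y, W ω) ∈ Q} ≤ 0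
            rw [this]; simp
      _ = ENNReal.ofReal (w⁻¹ * (2 * ε)) * gaussianReal 0 vW J := by
          rw [lintegral_indicator_const (mW measurableSet_Icc), ← Measure.map_apply mW measurableSet_Icc, hmW]
  constructor
  · refine hmain.trans ?_
    refine (mul_le_mul_right (gauss_Icc_le τ0 eW.le _ _) _).trans ?_
    rw [← ENNReal.ofReal_mul (by positivity)]
    apply le_of_eq; congr 1; field_simp; ring
  · intro hfar
    refine hmain.trans ?_
    refine (mul_le_mul_right (gauss_far_le τ0 eW _ _ (by rw [abs_sub_comm]; linarith)) _).trans ?_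
    rw [← ENNReal.ofReal_mul (by positivity)]
    apply le_of_eq; congr 1
    rw [show (u' - u)^2 = (u - u')^2 by ring]
    field_simp; ring

end Part3


section Part4
open ProbabilityTheory

lemma chain_det {g : ℝ → ℝ} (hg : Continuous g) {u ℓ : ℝ} (hℓ : 0 < ℓ) (D : ℕ → ℝ≥0∞)
    (hD : ∀ n k : ℕ, k < 2^n → edist (g (u + ℓ * (k / 2^n))) (g (u + ℓ * ((k + 1) / 2^n))) ≤ D n)
    {t : ℝ} (ht : t ∈ Icc u (u + ℓ)) : edist (g u) (g t) ≤ ∑' n, D n := by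
  set θ := (t - u) / ℓ with hθ
  have θ0 : 0 ≤ θ := div_nonneg (by linarith [ht.1]) hℓ.le
  have θ1 : θ ≤ 1 := by rw [hθ, div_le_one hℓ]; linarith [ht.2]
  have ht' : t = u + ℓ * θ := by rw [hθ]; field_simp; ring
  set k : ℕ → ℕ := fun n => ⌊2^n * θ⌋₊ with hk
  have kl : ∀ n, (k n : ℝ) ≤ 2^n * θ := fun n => Nat.floor_le (by positivity)
  have ku : ∀ n, 2^n * θ < k n + 1 := fun n => Nat.lt_floor_add_one _
  have k2 : ∀ n, k n ≤ 2^n := by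
    intro n
    have : (k n : ℝ) ≤ 2^n := (kl n).trans (mul_le_of_le_one_right (by positivity) θ1)
    exact_mod_cast this
  have ind : ∀ n, edist (g u) (g (u + ℓ * (k n / 2^n))) ≤ ∑ m ∈ Finset.range (n+1), D m := by
    intro n
    induction n with
    | zero =>
      have : k 0 ≤ 1 := by simpa using k2 0
      rcases Nat.le_one_iff_eq_zero_or_eq_one.1 this with h | h
      · rw [h]; simp
      · rw [h]; have := hD 0 0 (by simp); simpa using this
    | succ n ih =>
      rw [Finset.sum_range_succ]
      have h1 : (2 * k n : ℝ) < k (n+1) + 1 := by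
        have := kl n; have := ku (n+1); rw [pow_succ] at this; nlinarith
      have h2 : (k (n+1) : ℝ) < 2 * k n + 2 := by
        have := ku n; have := kl (n+1); rw [pow_succ] at this; nlinarith
      have h1' : 2 * k n < k (n+1) + 1 := by exact_mod_cast h1
      have h2' : k (n+1) < 2 * k n + 2 := by exact_mod_cast h2
      have e : u + ℓ * ((k n : ℝ) / 2^n) = u + ℓ * (((2 * k n : ℕ) : ℝ) / 2^(n+1)) := by
        rw [pow_succ]; push_cast; field_simp
      rcases (by omega : k (n+1) = 2 * k n ∨ k (n+1) = 2 * k n + 1) with h | h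
      · rw [h, ← e]; exact ih.trans le_self_add
      · refine (edist_triangle _ (g (u + ℓ * ((k n : ℝ) / 2^n))) _).trans (add_le_add ih ?_)
        have hlt : 2 * k n < 2^(n+1) := by have := k2 (n+1); omega
        have := hD (n+1) (2 * k n) hlt
        rw [e, h]; push_cast at this ⊢; exact this
  have lim : Filter.Tendsto (fun n => u + ℓ * ((k n : ℝ) / 2^n)) Filter.atTop (nhds t) := by
    rw [ht']
    refine (Filter.Tendsto.const_mul ℓ ?_).const_add u
    have h0 : Filter.Tendsto (fun n : ℕ => θ - (1/2:ℝ)^n) Filter.atTop (nhds θ) := by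
      simpa using (tendsto_pow_atTop_nhds_zero_of_lt_one (by norm_num : (0:ℝ) ≤ 1/2) (by norm_num)).const_sub θ
    refine tendsto_of_tendsto_of_tendsto_of_le_of_le h0 tendsto_const_nhds ?_ ?_
    · intro n
      have := ku n
      have p : (0:ℝ) < 2^n := by positivity
      simp only
      rw [le_div_iff₀ p, sub_mul, div_pow, one_pow, div_mul_cancel₀ _ p.ne']
      linarith
    · intro n
      have p : (0:ℝ) < 2^n := by positivity
      simp only
      rw [div_le_iff₀ p]; linarith [kl n]
  have lim2 : Filter.Tendsto (fun n => edist (g u) (g (u + ℓ * ((k n : ℝ) / 2^n)))) Filter.atTop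
      (nhds (edist (g u) (g t))) :=
    ((continuous_const.edist continuous_id).tendsto (g t)).comp ((hg.tendsto t).comp lim)
  exact le_of_tendsto' lim2 fun n => (ind n).trans (ENNReal.sum_le_tsum _)

noncomputable def chainS (r q : ℝ) (p : ℕ) (u ℓ : ℝ) (g : ℝ → ℝ) : ℝ≥0∞ :=
  ∑' n : ℕ, (ENNReal.ofReal (r * q^n) + ∑ k ∈ Finset.range (2^n),
    ENNReal.ofReal (r * q^n * ((r * q^n)⁻¹)^p) * ENNReal.ofReal
      (|g (u + ℓ * ((k:ℝ) / 2^n)) - g (u + ℓ * (((k:ℝ) + 1) / 2^n))| ^ p))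

lemma chainS_meas {α : Type*} [MeasurableSpace α] (r q : ℝ) (p : ℕ) (u ℓ : ℝ) (G : α → ℝ → ℝ)
    (hG : ∀ t, Measurable fun x => G x t) : Measurable fun x => chainS r q p u ℓ (G x) := by
  unfold chainS
  refine Measurable.tsum fun n => ?_
  refine Measurable.const_add (Finset.measurable_fun_sum _ fun k _ => ?_) _
  refine Measurable.const_mul (ENNReal.measurable_ofReal.comp ?_) _
  exact (((hG _).sub (hG _)).abs).pow_const _

lemma chainS_bound {r q : ℝ} {p : ℕ} (hr : 0 < r) (hq : 0 < q) (hp : 1 ≤ p) {u ℓ : ℝ} (hℓ : 0 < ℓ)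
    {g : ℝ → ℝ} (hg : Continuous g) {t : ℝ} (ht : t ∈ Icc u (u + ℓ)) :
    edist (g u) (g t) ≤ chainS r q p u ℓ g := by
  refine chain_det hg hℓ _ ?_ ht
  intro n k hk
  have hl : 0 < r * q^n := by positivity
  set y := |g (u + ℓ * ((k:ℝ) / 2^n)) - g (u + ℓ * (((k:ℝ) + 1) / 2^n))| with hy
  have y0 : 0 ≤ y := abs_nonneg _
  generalize r * q^n = l at *
  have h1 : y ≤ l + l * (l⁻¹)^p * y^p := by
    rw [mul_assoc, ← mul_pow]
    rcases le_total y l with h | h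
    · have : 0 ≤ l * (l⁻¹ * y)^p := by positivity
      linarith
    · have h1 : 1 ≤ l⁻¹ * y := by rw [← div_eq_inv_mul, one_le_div hl]; exact h
      have := le_self_pow₀ h1 (by omega : p ≠ 0)
      have h3 : l * (l⁻¹ * y) = y := by field_simp
      nlinarith
  calc edist (g (u + ℓ * ((k:ℝ) / 2^n))) (g (u + ℓ * (((k:ℝ) + 1) / 2^n)))
      = ENNReal.ofReal y := by rw [edist_dist, Real.dist_eq]
    _ ≤ ENNReal.ofReal (l + l * (l⁻¹)^p * y^p) := ENNReal.ofReal_le_ofReal h1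
    _ = ENNReal.ofReal l + ENNReal.ofReal (l * (l⁻¹)^p) * ENNReal.ofReal (y^p) := by
        rw [ENNReal.ofReal_add hl.le (by positivity), ENNReal.ofReal_mul (by positivity)]
    _ ≤ _ := by
        gcongr
        exact Finset.single_le_sum (f := fun k : ℕ => ENNReal.ofReal (l * (l⁻¹)^p) * ENNReal.ofReal
      (|g (u + ℓ * ((k:ℝ) / 2^n)) - g (u + ℓ * (((k:ℝ) + 1) / 2^n))| ^ p)) (fun _ _ => bot_le) (Finset.mem_range.2 hk)

variable {Ω : Type*} [MeasurableSpace Ω] {P : Measure Ω} [IsProbabilityMeasure P] {H : ℝ}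

/-- expectation of chain functional. -/
lemma chainS_exp {r q A : ℝ} {p : ℕ} (hr : 0 < r) (hq : 0 < q) (hq1 : q < 1) (hp : q^p ≤ 1/2) {u ℓ : ℝ}
    (hA : 0 ≤ A) (G : Ω → ℝ → ℝ) (hG : ∀ t, Measurable fun x => G x t)
    (hm : ∀ n k : ℕ, ∫⁻ ω, ENNReal.ofReal
      (|G ω (u + ℓ * ((k:ℝ) / 2^n)) - G ω (u + ℓ * (((k:ℝ) + 1) / 2^n))| ^ p) ∂P
        ≤ ENNReal.ofReal (A * (2 * r * (q^n)^2)^p)) :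
    ∫⁻ ω, chainS r q p u ℓ (G ω) ∂P ≤ ENNReal.ofReal ((1 + A * 2^p) / (1 - q) * r) := by
  unfold chainS
  have mk : ∀ n k : ℕ, Measurable fun ω => ENNReal.ofReal
      (|G ω (u + ℓ * ((k:ℝ) / 2^n)) - G ω (u + ℓ * (((k:ℝ) + 1) / 2^n))| ^ p) := fun n k =>
    ENNReal.measurable_ofReal.comp ((((hG _).sub (hG _)).abs).pow_const _)
  rw [lintegral_tsum]
  · have : ∀ n : ℕ, ∫⁻ ω, (ENNReal.ofReal (r * q^n) + ∑ k ∈ Finset.range (2^n),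
    ENNReal.ofReal (r * q^n * ((r * q^n)⁻¹)^p) * ENNReal.ofReal
      (|G ω (u + ℓ * ((k:ℝ) / 2^n)) - G ω (u + ℓ * (((k:ℝ) + 1) / 2^n))| ^ p)) ∂P ≤
        ENNReal.ofReal ((1 + A * 2^p) * r * q^n) := by
      intro n
      rw [lintegral_add_left measurable_const, lintegral_const, measure_univ, mul_one,
        lintegral_finsetSum _ (fun k _ => (mk n k).const_mul _)]
      have l0 : 0 < r * q^n := by positivity
      calc _ ≤ ENNReal.ofReal (r * q^n) + ∑ k ∈ Finset.range (2^n),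
            ENNReal.ofReal (r * q^n * ((r * q^n)⁻¹)^p * (A * (2 * r * (q^n)^2)^p)) := by
            gcongr with k hk
            rw [lintegral_const_mul _ (mk n k), ENNReal.ofReal_mul (p := r * q^n * ((r * q^n)⁻¹)^p) (by positivity)]
            exact mul_le_mul_right (hm n k) _
        _ = ENNReal.ofReal (r * q^n + 2^n * (r * q^n * ((r * q^n)⁻¹)^p * (A * (2 * r * (q^n)^2)^p))) := by
            rw [Finset.sum_const, Finset.card_range, nsmul_eq_mul, ENNReal.ofReal_add l0.le (by positivity),
              ENNReal.ofReal_mul (p := 2^n) (by positivity), ENNReal.ofReal_pow (by norm_num)]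
            simp
        _ ≤ _ := by
            apply ENNReal.ofReal_le_ofReal
            have e : ((r * q^n)⁻¹)^p * (A * (2 * r * (q^n)^2)^p) = A * 2^p * (q^p)^n := by
              rw [mul_left_comm, ← mul_pow, show (r * q^n)⁻¹ * (2 * r * (q^n)^2) = 2 * q^n by field_simp,
                mul_pow, ← pow_mul, mul_comm n p, pow_mul]; ring
            rw [mul_assoc (r * q^n), e]
            have h2 : 2^n * (q^p)^n ≤ 1 := by
              rw [← mul_pow]; apply pow_le_one₀ (by positivity); linarith
            have h3 : 0 ≤ r * q^n * (A * 2^p) := by positivity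
            nlinarith
    refine (ENNReal.tsum_le_tsum this).trans ?_
    have hs := (summable_geometric_of_lt_one hq.le hq1).mul_left ((1 + A * 2^p) * r)
    rw [← ENNReal.ofReal_tsum_of_nonneg (fun n => by positivity) hs, tsum_mul_left,
      tsum_geometric_of_lt_one hq.le hq1]
    apply le_of_eq; congr 1; ring
  · intro n
    exact (Measurable.const_add (Finset.measurable_fun_sum _ fun k _ => (mk n k).const_mul _) _).aemeasurable

end Part4


section Part5
open ProbabilityTheory

variable {Ω : Type*} [MeasurableSpace Ω] {P : Measure Ω} [IsProbabilityMeasure P] {H : ℝ}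

noncomputable def pj (t : ℝ) : Icc (0:ℝ) 1 := projIcc 0 1 zero_le_one t

lemma pj_dist (s t : ℝ) : |(pj s : ℝ) - pj t| ≤ |s - t| := by
  have := (LipschitzWith.projIcc (zero_le_one (α := ℝ))).dist_le_mul s t
  simpa [Subtype.dist_eq, Real.dist_eq, pj] using this

/-- moment of the increments of the residual process -/
lemma resid_moment (hH : 0 < H) (p : ℕ) : ∃ C : ℝ, 0 ≤ C ∧ ∀ X : ℝ → Ω → ℝ, FB1 P H X → 
    ∀ s ∈ Icc (0:ℝ) 1, fbmCov H s s ≠ 0 → ∀ t t' : ℝ, 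
    ∫⁻ ω, ENNReal.ofReal (|(X (pj t) ω - fbmCov H s (pj t) / fbmCov H s s * X s ω) -
      (X (pj t') ω - fbmCov H s (pj t') / fbmCov H s s * X s ω)| ^ p) ∂P ≤
      ENNReal.ofReal (C * (|t - t'| ^ H)^p) := by
  obtain ⟨C, hC, hm⟩ := gauss_moment p
  refine ⟨C, hC, ?_⟩
  intro X h s hs hpos t t'
  set c := fbmCov H s (pj t) / fbmCov H s s with hc
  set c' := fbmCov H s (pj t') / fbmCov H s s with hc'
  obtain ⟨v, hv, hl⟩ := h.law3 (pj t).2 (pj t').2 hs 1 (-1) (c' - c)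
  have hle : (v:ℝ) ≤ (|t - t'| ^ H)^2 := by
    have h1 : (|(pj t:ℝ) - pj t'| ^ H)^2 ≤ (|t - t'| ^ H)^2 :=
      pow_le_pow_left₀ (Real.rpow_nonneg (abs_nonneg _) _)
        (Real.rpow_le_rpow (abs_nonneg _) (pj_dist t t') hH.le) 2
    refine le_trans ?_ h1
    have e1 := fbmCov_eq (H := H) (pj t').2.1 (pj t).2.1
    rw [hv, fbmCov_comm (pj t : ℝ) (pj t' : ℝ), e1, fbmCov_self hH (pj t).2.1, fbmCov_self hH (pj t').2.1,
      fbmCov_comm (pj t : ℝ) s, fbmCov_comm (pj t' : ℝ) s]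
    have e2 : fbmCov H s (pj t) = c * fbmCov H s s := by rw [hc]; field_simp
    have e3 : fbmCov H s (pj t') = c' * fbmCov H s s := by rw [hc']; field_simp
    have e4 : 0 ≤ fbmCov H s s := by rw [fbmCov_self hH hs.1]; positivity
    rw [e2, e3]
    nlinarith [mul_nonneg (sq_nonneg (c' - c)) e4]
  have mm : Measurable fun ω => 1 * X (pj t) ω + (-1) * X (pj t') ω + (c' - c) * X s ω :=
    (((h.meas _).const_mul _).add ((h.meas _).const_mul _)).add ((h.meas _).const_mul _)
  have := hm v (|t - t'| ^ H) (Real.rpow_nonneg (abs_nonneg _) _) hle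
  rw [← hl, lintegral_map (by fun_prop) mm] at this
  refine le_trans (le_of_eq ?_) this
  congr 1; ext ω; congr 3; ring

lemma lin_aux {c C1 r K : ℝ} (hc : 0 ≤ c) (hC1 : 0 ≤ C1) (hr : 0 ≤ r) {F : Ω → ℝ≥0∞} (hF : Measurable F)
    (hK : 0 ≤ K) (h : ∫⁻ ω, F ω ∂P ≤ ENNReal.ofReal (K * r)) :
    ∫⁻ ω, ENNReal.ofReal c * (ENNReal.ofReal C1 * (ENNReal.ofReal r + 2 * F ω)) ∂P ≤
      ENNReal.ofReal (c * (C1 * (1 + 2 * K)) * r) := by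
  rw [lintegral_const_mul _ (by fun_prop), lintegral_const_mul _ (by fun_prop),
            lintegral_add_left measurable_const, lintegral_const_mul _ hF, lintegral_const, measure_univ, mul_one]
  calc _ ≤ ENNReal.ofReal c * (ENNReal.ofReal C1 * (ENNReal.ofReal r + 2 * ENNReal.ofReal (K * r))) := by
          gcongr
      _ = _ := by
          have e2 : (2:ℝ≥0∞) = ENNReal.ofReal 2 := by simp
          rw [e2, ← ENNReal.ofReal_mul (by norm_num),
            ← ENNReal.ofReal_add hr (by positivity), ← ENNReal.ofReal_mul hC1, ← ENNReal.ofReal_mul (by positivity)]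
          congr 1; ring

lemma q_aux (n : ℕ) : ((2:ℝ)^n)⁻¹ ^ H = (((2:ℝ) ^ (-(H/2)))^n)^2 := by
  have h2 : (0:ℝ) ≤ 2 := by norm_num
  rw [← pow_mul, ← Real.rpow_natCast _ (n * 2), ← Real.rpow_mul h2, ← Real.rpow_natCast 2 n,
    ← Real.rpow_neg h2, ← Real.rpow_mul h2]
  congr 1; push_cast; ring

set_option maxHeartbeats 1000000 in
lemma upper1 {a M : ℝ} (hH : 0 < H) (hH1 : H < 1) (ha : 0 < a) (hM : 0 ≤ M) :
    ∃ C > 0, ∃ r0 > 0, ∀ s ∈ Icc a 1, ∀ z, |z| ≤ M → ∀ r, 0 < r → r ≤ r0 →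
      ∃ Q : Set (ℝ → ℝ), MeasurableSet Q ∧
        (∀ g : ℝ → ℝ, ContinuousOn g (Icc 0 1) → ∀ t ∈ Icc (0:ℝ) 1, |t - s| ^ H < r → |g t - z| < r → g ∈ Q) ∧
        ∀ X : ℝ → Ω → ℝ, FB1 P H X → P {ω | (fun t => X t ω) ∈ Q} ≤ ENNReal.ofReal (C * r) := by
  set q : ℝ := 2 ^ (-(H/2)) with hq
  have q0 : 0 < q := Real.rpow_pos_of_pos (by norm_num) _
  have q1 : q < 1 := Real.rpow_lt_one_of_one_lt_of_neg (by norm_num) (by linarith)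
  obtain ⟨p, hp⟩ := exists_pow_lt_of_lt_one (by norm_num : (0:ℝ) < 1/2) q1
  have hp1 : 1 ≤ p := by
    rcases Nat.eq_zero_or_pos p with h | h
    · rw [h] at hp; norm_num at hp
    · exact h
  obtain ⟨A, hA, hmom⟩ := resid_moment (Ω := Ω) (P := P) hH p
  have aH : 0 < a ^ H := Real.rpow_pos_of_pos ha _
  set C1 := 2 * (1 + M / a ^ H) with hC1
  have C10 : 0 < C1 := by positivity
  set K := (1 + A * 2^p) / (1 - q) with hK
  have K0 : 0 ≤ K := div_nonneg (by positivity) (by linarith)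
  refine ⟨2 * (a ^ H)⁻¹ * (C1 * (1 + 2 * K)), by positivity, a ^ H / 2, by positivity, ?_⟩
  intro s hs z hz r hr hr0
  have s0 : 0 < s := lt_of_lt_of_le ha hs.1
  have hs' : s ∈ Icc (0:ℝ) 1 := ⟨s0.le, hs.2⟩
  have css := fbmCov_self hH s0.le
  have sH : a ^ H ≤ s ^ H := Real.rpow_le_rpow ha.le hs.1 hH.le
  have hpos : fbmCov H s s ≠ 0 := by rw [css]; positivity
  set ρ := r ^ (1/H) with hρ
  have ρ0 : 0 < ρ := Real.rpow_pos_of_pos hr _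
  have ρH : ρ ^ H = r := by rw [hρ, ← Real.rpow_mul hr.le]; field_simp; simp
  set cc : ℝ → ℝ := fun t => fbmCov H s t / fbmCov H s s with hcc
  have ccont : Continuous cc := by
    simp only [hcc, fbmCov]
    refine Continuous.div_const (Continuous.div_const (((continuous_const).add ?_).sub ?_) _) _
    · exact continuous_abs.rpow_const fun _ => Or.inr (by linarith)
    · exact (continuous_id.sub continuous_const).abs.rpow_const fun _ => Or.inr (by linarith)
  set Z : (ℝ → ℝ) → ℝ → ℝ := fun g t => g (pj t) - cc (pj t) * g s with hZ
  set S : (ℝ → ℝ) → ℝ≥0∞ := fun Y => chainS r q p (s - ρ) (2 * ρ) Y with hS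
  refine ⟨{g | edist (g s) z ≤ ENNReal.ofReal C1 * (ENNReal.ofReal r + 2 * S (Z g))}, ?_, ?_, ?_⟩
  · apply measurableSet_le
    · exact (measurable_pi_apply s).edist measurable_const
    · refine Measurable.const_mul (Measurable.const_add (Measurable.const_mul ?_ _) _) _
      apply chainS_meas
      intro t
      exact (measurable_pi_apply _).sub ((measurable_pi_apply _).const_mul _)
  · intro g hg t ht hts hgt
    have pjt : (pj t : ℝ) = t := by simp [pj, projIcc_of_mem _ ht]
    have pjs : (pj s : ℝ) = s := by simp [pj, projIcc_of_mem _ hs']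
    have Zc : Continuous (Z g) := by
      have hc : Continuous fun t => (pj t : ℝ) := continuous_subtype_val.comp (continuous_projIcc (h := zero_le_one))
      exact (hg.comp_continuous hc fun t => (pj t).2).sub ((ccont.comp hc).mul continuous_const)
    have tin : |t - s| < ρ := by
      by_contra hcon; push Not at hcon
      have := Real.rpow_le_rpow ρ0.le hcon hH.le
      linarith
    rw [abs_lt] at tin
    have b1 := chainS_bound hr q0 hp1 (by positivity : 0 < 2 * ρ) Zc (u := s - ρ) (t := t) (by constructor <;> linarith)
    have b2 := chainS_bound hr q0 hp1 (by positivity : 0 < 2 * ρ) Zc (u := s - ρ) (t := s) (by constructor <;> linarith)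
    have Zs : Z g s = 0 := by simp only [hZ, pjs, hcc]; rw [div_self hpos]; ring
    have b3 : ENNReal.ofReal |Z g t| ≤ 2 * S (Z g) := by
      have e : ENNReal.ofReal |Z g t| = edist (Z g t) (Z g s) := by
        rw [Zs, edist_dist, Real.dist_eq, sub_zero]
      rw [e, two_mul]
      refine (edist_triangle _ (Z g (s - ρ)) _).trans (add_le_add ?_ b2)
      rw [edist_comm]; exact b1
    have hc1 : |cc t - 1| ≤ r / a ^ H := by
      have h1 := fbmCov_close hH hH1 s0.le ht.1
      have e : cc t - 1 = (fbmCov H s t - (s ^ H)^2) / (s ^ H)^2 := by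
        simp only [hcc]; rw [css]; field_simp
      rw [e, abs_div, abs_of_nonneg (sq_nonneg (s ^ H)), div_le_div_iff₀ (by positivity) aH]
      have t0 : 0 ≤ |t - s| ^ H := Real.rpow_nonneg (abs_nonneg _) _
      have sp : 0 < s ^ H := aH.trans_le sH
      calc |fbmCov H s t - (s ^ H)^2| * a ^ H ≤ (s ^ H * |t - s| ^ H) * s ^ H := by gcongr
        _ = |t - s| ^ H * (s ^ H)^2 := by ring
        _ ≤ r * (s ^ H)^2 := by gcongr
    have hr2 : r / a ^ H ≤ 1 / 2 := by rw [div_le_iff₀ aH]; linarith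
    have hmain : |g s - z| ≤ C1 * (r + |Z g t|) := by
      have ez : cc t * (g s - z) = (g t - z) - Z g t - (cc t - 1) * z := by
        simp only [hZ, pjt]; ring
      have h1 : |cc t * (g s - z)| ≤ r + |Z g t| + r / a ^ H * M := by
        rw [ez]
        refine (abs_sub _ _).trans (add_le_add ((abs_sub _ _).trans (add_le_add hgt.le le_rfl)) ?_)
        rw [abs_mul]; gcongr
      have hc2 : 1/2 ≤ cc t := by have := (abs_le.1 hc1).1; linarith
      rw [abs_mul, abs_of_nonneg (by linarith)] at h1
      have h2 : 1/2 * |g s - z| ≤ cc t * |g s - z| := by gcongr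
      have h3 : r / a ^ H * M = M / a ^ H * r := by ring
      have h4 : 0 ≤ M / a ^ H * |Z g t| := by positivity
      rw [hC1]; nlinarith
    show edist (g s) z ≤ _
    rw [edist_dist, Real.dist_eq]
    calc ENNReal.ofReal |g s - z| ≤ ENNReal.ofReal (C1 * (r + |Z g t|)) := ENNReal.ofReal_le_ofReal hmain
      _ = ENNReal.ofReal C1 * (ENNReal.ofReal r + ENNReal.ofReal |Z g t|) := by
        rw [ENNReal.ofReal_mul C10.le, ENNReal.ofReal_add hr.le (abs_nonneg _)]
      _ ≤ _ := by gcongr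
  · intro X h
    obtain ⟨v, hv, hl⟩ := h.law1 hs'
    have hind := h.indep_resid hs' hpos
    set R : Ω → Icc (0:ℝ) 1 → ℝ := fun ω t => X t ω - fbmCov H s t / fbmCov H s s * X s ω with hR
    have mR : Measurable R := measurable_pi_lambda _ fun t => (h.meas _).sub ((h.meas _).const_mul _)
    obtain ⟨T, hT⟩ : ∃ T : (Icc (0:ℝ) 1 → ℝ) → ℝ≥0∞, T = fun Y => S (fun t => Y (pj t)) := ⟨_, rfl⟩
    have mT : Measurable T := by
      rw [hT]; exact chainS_meas _ _ _ _ _ _ fun t => measurable_pi_apply _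
    set Q' : Set (ℝ × (Icc (0:ℝ) 1 → ℝ)) := {y | edist y.1 z ≤ ENNReal.ofReal C1 * (ENNReal.ofReal r + 2 * T y.2)} with hQ'
    have mQ' : MeasurableSet Q' := by
      apply measurableSet_le
      · exact measurable_fst.edist measurable_const
      · exact Measurable.const_mul (Measurable.const_add (Measurable.const_mul (mT.comp measurable_snd) _) _) _
    have ET : ∫⁻ ω, T (R ω) ∂P ≤ ENNReal.ofReal (K * r) := by
      rw [hT]
      refine chainS_exp hr q0 q1 hp.le hA (fun ω t => R ω (pj t)) (fun t => (measurable_pi_apply _).comp mR) ?_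
      intro n k
      refine (hmom X h s hs' hpos _ _).trans (ENNReal.ofReal_le_ofReal ?_)
      gcongr
      have e1 : |s - ρ + 2 * ρ * ((k:ℝ) / 2^n) - (s - ρ + 2 * ρ * (((k:ℝ) + 1) / 2^n))| = ρ * (2 * (2^n)⁻¹) := by
        rw [show s - ρ + 2 * ρ * ((k:ℝ) / 2^n) - (s - ρ + 2 * ρ * (((k:ℝ) + 1) / 2^n)) = -(ρ * (2 * (2^n)⁻¹)) by
          field_simp; ring]
        rw [abs_neg, abs_of_nonneg (by positivity)]
      have e2 : ((2:ℝ)^n)⁻¹ ^ H = (q^n)^2 := by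
        rw [hq]; exact q_aux n
      rw [e1, Real.mul_rpow ρ0.le (by positivity), Real.mul_rpow (by norm_num) (by positivity), e2, ρH]
      have : (2:ℝ) ^ H ≤ 2 := by
        calc (2:ℝ) ^ H ≤ 2 ^ (1:ℝ) := Real.rpow_le_rpow_of_exponent_le (by norm_num) hH1.le
          _ = 2 := by simp
      rw [← mul_assoc, mul_comm r]
      gcongr
    have m1 : Measurable fun ω => T (R ω) := mT.comp mR
    calc P {ω | (fun t => X t ω) ∈ {g : ℝ → ℝ | edist (g s) z ≤ ENNReal.ofReal C1 * (ENNReal.ofReal r + 2 * S (Z g))}}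
        = P {ω | (X s ω, R ω) ∈ Q'} := by rw [hQ', hT]; rfl
      _ = ∫⁻ ω, P.map (X s) {y | (y, R ω) ∈ Q'} ∂P := decouple (h.meas s) mR hind mQ'
      _ ≤ ∫⁻ ω, ENNReal.ofReal (2 * (a ^ H)⁻¹) * (ENNReal.ofReal C1 * (ENNReal.ofReal r + 2 * T (R ω))) ∂P := by
          apply lintegral_mono; intro ω
          simp only
          rw [hl]
          refine gauss_ball_le aH ?_ z _
          rw [hv, css]; gcongr
      _ ≤ _ := lin_aux (by positivity) C10.le hr.le m1 K0 ET

end Part5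


section Part6
open ProbabilityTheory

variable {Ω : Type*} [MeasurableSpace Ω] {P : Measure Ω} [IsProbabilityMeasure P] {H : ℝ} {d : ℕ}
  {B : Ω → ℝ → EuclideanSpace ℝ (Fin d)}

lemma fb1_of (hB : IsFBM P H d B) (i : Fin d) : FB1 P H (fun t ω => B ω t i) where
  meas t := by have := hB.meas t; fun_prop
  gaussian := hB.gaussian i

lemma indep_prod (hB : IsFBM P H d B) (A : Fin d → Set (ℝ → ℝ)) (hA : ∀ i, MeasurableSet (A i)) :
    P {ω | ∀ i, (fun t => B ω t i) ∈ A i} = ∏ i, P {ω | (fun t => B ω t i) ∈ A i} := by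
  have := hB.indep.measure_inter_preimage_eq_mul Finset.univ (sets := A) (fun i _ => hA i)
  rw [← show (⋂ i ∈ Finset.univ, (fun (ω : Ω) => fun t : ℝ => B ω t i) ⁻¹' A i) =
    {ω | ∀ i, (fun t => B ω t i) ∈ A i} by ext ω; simp]
  exact this

lemma coord_le (x y : EuclideanSpace ℝ (Fin d)) (i : Fin d) : |x i - y i| ≤ dist x y := by
  have := PiLp.norm_apply_le (x - y) i
  rw [dist_eq_norm]
  simpa using this

lemma upper_bound (hH : 0 < H) (hH1 : H < 1) (hB : IsFBM P H d B) {a b : ℝ} (ha : 0 < a) (hb : b ≤ 1)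
    (f : ℝ → EuclideanSpace ℝ (Fin d)) 
    (hfb : ∃ M₀ : ℝ, ∀ t ∈ Set.Icc (0 : ℝ) 1, ‖f t‖ ≤ M₀)
    (E : Set ℝ) (hEI : E ⊆ Set.Icc a b) (M : ℝ) (hM : 0 < M) :
    ∃ c : ℝ, 0 < c ∧ ∀ x : EuclideanSpace ℝ (Fin d), (∀ i, |x i| ≤ M) →
        P {ω | ∃ t ∈ E, B ω t + f t = x} ≤
          ENNReal.ofReal c * hMeasure (parabolicDist H) d ((fun t => (t, f t)) '' E) := by
  obtain ⟨M0, hM0⟩ := hfb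
  obtain ⟨C, hC, r0, hr0, hU⟩ := upper1 (Ω := Ω) (P := P) hH hH1 ha (M := M + |M0|) (by positivity)
  refine ⟨C^d, by positivity, ?_⟩
  intro x hx
  have hball : ∀ (c : ℝ × EuclideanSpace ℝ (Fin d)) (r : ℝ), 0 < r → 2 * r ≤ r0 →
      P {ω | ∃ t ∈ E, parabolicDist H (t, f t) c < r ∧ B ω t + f t = x} ≤
        ENNReal.ofReal (C^d) * ENNReal.ofReal ((2 * r) ^ (d:ℝ)) := by
    intro c r hr hrr
    by_cases hne : ∃ t0 ∈ E, parabolicDist H (t0, f t0) c < r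
    · obtain ⟨t0, ht0, hd0⟩ := hne
      have h0 := hEI ht0
      have hdd := max_lt_iff.1 hd0
      have hz : ∀ i, |x i - f t0 i| ≤ M + |M0| := by
        intro i
        have h1 := hM0 t0 ⟨ha.le.trans h0.1, h0.2.trans hb⟩
        have h2 := coord_le (f t0) 0 i
        simp only [dist_zero_right, PiLp.zero_apply, sub_zero] at h2
        have := abs_sub (x i) (f t0 i)
        have := hx i
        have := le_abs_self M0
        linarith
      have hch : ∀ i, ∃ Q : Set (ℝ → ℝ), MeasurableSet Q ∧
          (∀ g : ℝ → ℝ, ContinuousOn g (Icc 0 1) → ∀ t ∈ Icc (0:ℝ) 1, |t - t0| ^ H < 2 * r →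
            |g t - (x i - f t0 i)| < 2 * r → g ∈ Q) ∧
          ∀ X : ℝ → Ω → ℝ, FB1 P H X → P {ω | (fun t => X t ω) ∈ Q} ≤ ENNReal.ofReal (C * (2 * r)) :=
        fun i => hU t0 ⟨h0.1, h0.2.trans hb⟩ _ (hz i) (2 * r) (by linarith) hrr
      choose Q hQm hQ1 hQ2 using hch
      calc _ ≤ P {ω | ∀ i, (fun t => B ω t i) ∈ Q i} := by
            apply measure_mono
            rintro ω ⟨t, ht, hdt, hxt⟩ i
            have h1 := hEI ht
            have hdt' := max_lt_iff.1 hdt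
            simp only at hdt' hdd
            refine hQ1 i _ ?_ t ⟨ha.le.trans h1.1, h1.2.trans hb⟩ ?_ ?_
            · have := hB.cont ω
              exact (by fun_prop : Continuous fun v : EuclideanSpace ℝ (Fin d) => v i).comp_continuousOn this
            · have := rpow_abs_tri (s := t) (t := t0) (u := c.1) hH hH1
              rw [abs_sub_comm c.1 t0] at this
              linarith [hdt'.1, hdd.1]
            · have e : B ω t i - (x i - f t0 i) = f t0 i - f t i := by
                rw [← hxt]; simp; ring
              rw [e]
              refine (coord_le _ _ i).trans_lt ?_
              have := dist_triangle_right (f t0) (f t) c.2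
              linarith [hdt'.2, hdd.2]
        _ = ∏ i, P {ω | (fun t => B ω t i) ∈ Q i} := indep_prod hB Q hQm
        _ ≤ ∏ i : Fin d, ENNReal.ofReal (C * (2 * r)) := 
            Finset.prod_le_prod' fun i _ => hQ2 i _ (fb1_of hB i)
        _ = _ := by
            rw [Finset.prod_const, Finset.card_univ, Fintype.card_fin, ← ENNReal.ofReal_pow (by positivity),
              mul_pow, ENNReal.ofReal_mul (by positivity), Real.rpow_natCast]
    · have : {ω | ∃ t ∈ E, parabolicDist H (t, f t) c < r ∧ B ω t + f t = x} = ∅ := by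
        ext ω; simp only [mem_ofPred_eq, mem_empty_iff_false, iff_false]
        rintro ⟨t, ht, h1, -⟩
        exact hne ⟨t, ht, h1⟩
      rw [this]; simp
  unfold hMeasure
  refine le_trans ?_ (mul_le_mul_right (le_iSup₂ (f := fun (δ : ℝ) (_ : 0 < δ) => ⨅ (c : ℕ → ℝ × EuclideanSpace ℝ (Fin d)) (r : ℕ → ℝ)
    (_ : ∀ n, 0 < r n ∧ r n ≤ δ) (_ : ((fun t => (t, f t)) '' E) ⊆ ⋃ n, {y | parabolicDist H y (c n) < r n}),
    ∑' n, ENNReal.ofReal ((2 * r n) ^ (d:ℝ))) (r0/2) (by positivity)) _)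
  simp only [ENNReal.mul_iInf_of_ne (a := ENNReal.ofReal (C^d)) (by simp; positivity) ENNReal.ofReal_ne_top]
  refine le_iInf fun c => le_iInf fun r => le_iInf fun hr => le_iInf fun hcov => ?_
  calc P {ω | ∃ t ∈ E, B ω t + f t = x} 
      ≤ P (⋃ n, {ω | ∃ t ∈ E, parabolicDist H (t, f t) (c n) < r n ∧ B ω t + f t = x}) := by
        apply measure_mono
        rintro ω ⟨t, ht, hxt⟩
        obtain ⟨n, hn⟩ := mem_iUnion.1 (hcov (mem_image_of_mem _ ht))
        exact mem_iUnion.2 ⟨n, t, ht, hn, hxt⟩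
    _ ≤ ∑' n, P {ω | ∃ t ∈ E, parabolicDist H (t, f t) (c n) < r n ∧ B ω t + f t = x} := measure_iUnion_le _
    _ ≤ ∑' n, ENNReal.ofReal (C^d) * ENNReal.ofReal ((2 * r n) ^ (d:ℝ)) := 
        ENNReal.tsum_le_tsum fun n => hball _ _ (hr n).1 (by linarith [(hr n).2])
    _ = _ := ENNReal.tsum_mul_left

end Part6


section Part7
open ProbabilityTheory

variable {Ω : Type*} [MeasurableSpace Ω] {P : Measure Ω} [IsProbabilityMeasure P] {H : ℝ} {d : ℕ}
  {B : Ω → ℝ → EuclideanSpace ℝ (Fin d)}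

lemma meas_box1 (s u ε : ℝ) : MeasurableSet {g : ℝ → ℝ | |g s - u| ≤ ε} :=
  measurableSet_le (by fun_prop) measurable_const

lemma one_lower_d (hH : 0 < H) (hB : IsFBM P H d B) {a K : ℝ} (ha : 0 < a) (hK : 0 ≤ K) :
    ∃ c > 0, ∀ s ∈ Icc a 1, ∀ u : Fin d → ℝ, (∀ i, |u i| ≤ K) → ∀ ε, 0 < ε → ε ≤ 1 →
      ENNReal.ofReal ((c * ε)^d) ≤ P {ω | ∀ i, |B ω s i - u i| ≤ ε} := by
  obtain ⟨c, hc, h⟩ := one_point_lower (Ω := Ω) (P := P) hH ha hK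
  refine ⟨c, hc, ?_⟩
  intro s hs u hu ε hε hε1
  have := indep_prod hB (fun i => {g : ℝ → ℝ | |g s - u i| ≤ ε}) (fun i => meas_box1 _ _ _)
  simp only [mem_ofPred_eq] at this
  rw [this, ENNReal.ofReal_pow (by positivity)]
  calc ENNReal.ofReal (c * ε) ^ d = ∏ i : Fin d, ENNReal.ofReal (c * ε) := by simp
    _ ≤ _ := Finset.prod_le_prod' fun i _ => h _ (fb1_of hB i) s hs (u i) (hu i) ε hε hε1

lemma big_coord (hd : 0 < d) (y y' : EuclideanSpace ℝ (Fin d)) :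
    ∃ i, dist y y' ≤ d * |y i - y' i| := by
  by_contra hcon
  push Not at hcon
  have hD : 0 < dist y y' := lt_of_le_of_lt (by positivity) (hcon ⟨0, hd⟩)
  have d0 : (0:ℝ) < d := by exact_mod_cast hd
  have d1 : (1:ℝ) ≤ d := by exact_mod_cast hd
  have h1 : dist y y' ^ 2 = ∑ i, (y i - y' i)^2 := by
    rw [EuclideanSpace.dist_eq, Real.sq_sqrt (by positivity)]
    simp [Real.dist_eq]
  have h2 : ∑ i, (y i - y' i)^2 < ∑ i : Fin d, (dist y y' / d)^2 := by
    apply Finset.sum_lt_sum_of_nonempty ⟨⟨0, hd⟩, Finset.mem_univ _⟩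
    intro i _
    rw [← sq_abs]
    apply pow_lt_pow_left₀ _ (abs_nonneg _) (by norm_num)
    rw [lt_div_iff₀ d0]; linarith [hcon i]
  rw [Finset.sum_const, Finset.card_univ, Fintype.card_fin, nsmul_eq_mul, ← h1, div_pow] at h2
  have h3 : (d:ℝ) * (dist y y' ^ 2 / d^2) = dist y y'^2 / d := by field_simp
  rw [h3, lt_div_iff₀ d0] at h2
  nlinarith [sq_nonneg (dist y y')]

lemma exp_aux {w : ℝ} (hw : 1 ≤ w) (hd : 0 < d) :
    w^d * Real.exp (-(w^2 / (8 * d^2))) ≤ (8 * (d:ℝ)^2)^d * d.factorial := by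
  have d0 : (0:ℝ) < d := by exact_mod_cast hd
  have h1 : w^d ≤ (w^2)^d := pow_le_pow_left₀ (by linarith) (by nlinarith) d
  have h2 := Real.pow_div_factorial_le_exp (w^2 / (8 * d^2)) (by positivity) d
  rw [div_le_iff₀ (by positivity)] at h2
  have h3 : (w^2)^d = (8 * (d:ℝ)^2)^d * (w^2 / (8 * d^2))^d := by
    rw [← mul_pow]; congr 1; field_simp
  rw [Real.exp_neg, ← div_eq_mul_inv, div_le_iff₀ (Real.exp_pos _)]
  calc w^d ≤ (8 * (d:ℝ)^2)^d * (w^2 / (8 * d^2))^d := h3 ▸ h1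
    _ ≤ (8 * (d:ℝ)^2)^d * (Real.exp (w^2 / (8 * d^2)) * d.factorial) := by gcongr
    _ = _ := by ring

lemma two_point_d (hH : 0 < H) (hH1 : H < 1) (hd : 0 < d) (hB : IsFBM P H d B) {a : ℝ} (ha : 0 < a)
    (ha1 : a < 1) :
    ∃ C > 0, ∀ s ∈ Icc a 1, ∀ t ∈ Icc a 1, s ≠ t → ∀ (x y y' : EuclideanSpace ℝ (Fin d)) (ε : ℝ), 0 < ε →
      P {ω | ∀ i, |B ω s i - (x i - y i)| ≤ ε ∧ |B ω t i - (x i - y' i)| ≤ ε} ≤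
        ENNReal.ofReal (C * (ε^2)^d / (max (|s - t| ^ H) (dist y y'))^d) := by
  obtain ⟨C, hC, h⟩ := two_point (Ω := Ω) (P := P) hH hH1 ha ha1
  have aH : 0 < a ^ H := Real.rpow_pos_of_pos ha _
  have d0 : (0:ℝ) < d := by exact_mod_cast hd
  set C1 := 2 * (a ^ H)⁻¹ with hC1
  have C10 : 0 < C1 := by positivity
  set K := (8 * (d:ℝ)^2)^d * d.factorial with hK
  have K0 : 0 < K := by positivity
  refine ⟨C^d + C^d * K + (C1 * (4 * d))^d, by positivity, ?_⟩
  intro s hs t ht hst x y y' ε hε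
  have prod := indep_prod hB (fun i => {g : ℝ → ℝ | |g s - (x i - y i)| ≤ ε} ∩ {g : ℝ → ℝ | |g t - (x i - y' i)| ≤ ε})
    (fun i => (meas_box1 _ _ _).inter (meas_box1 _ _ _))
  simp only [mem_inter_iff, mem_ofPred_eq] at prod
  rw [prod]
  have τ0 : 0 < |s - t| ^ H := Real.rpow_pos_of_pos (abs_pos.2 (sub_ne_zero.2 hst)) _
  have h2 := fun i => h _ (fb1_of hB i) s hs t ht hst (x i - y i) (x i - y' i) ε hε
  have h1 : ∀ i, P {ω | |B ω s i - (x i - y i)| ≤ ε ∧ |B ω t i - (x i - y' i)| ≤ ε} ≤ ENNReal.ofReal (C1 * ε) :=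
    fun i => (measure_mono fun ω hω => hω.1).trans (one_point hH ha (fb1_of hB i) hs (x i - y i) ε)
  set τ := |s - t| ^ H with hτ
  set D := dist y y' with hD
  rcases le_or_gt D τ with hDτ | hDτ
  · rw [max_eq_left hDτ]
    calc _ ≤ ∏ i : Fin d, ENNReal.ofReal (C * (ε^2 / τ)) := Finset.prod_le_prod' fun i _ => (h2 i).1
      _ = ENNReal.ofReal (C^d * (ε^2)^d / τ^d) := by
          rw [Finset.prod_const, Finset.card_univ, Fintype.card_fin, ← ENNReal.ofReal_pow (by positivity)]
          congr 1; rw [mul_pow, div_pow]; ring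
      _ ≤ _ := by
          apply ENNReal.ofReal_le_ofReal
          have : 0 ≤ C^d * K := by positivity
          have : 0 ≤ (C1 * (4 * d))^d := by positivity
          gcongr; linarith
  · rw [max_eq_right hDτ.le]
    have D0 : 0 < D := τ0.trans hDτ
    obtain ⟨i, hi⟩ := big_coord hd y y'
    have eu : |x i - y i - (x i - y' i)| = |y i - y' i| := by
      rw [← abs_neg]; congr 1; ring
    rcases le_or_gt (4 * ε) |y i - y' i| with hfar | hnear
    · have hi2 := (h2 i).2 (by rw [eu]; exact hfar)
      calc _ = P {ω | |B ω s i - (x i - y i)| ≤ ε ∧ |B ω t i - (x i - y' i)| ≤ ε} *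
            ∏ j ∈ Finset.univ.erase i, P {ω | |B ω s j - (x j - y j)| ≤ ε ∧ |B ω t j - (x j - y' j)| ≤ ε} := 
              (Finset.mul_prod_erase Finset.univ _ (Finset.mem_univ i)).symm
        _ ≤ ENNReal.ofReal (C * (ε^2 / τ) * Real.exp (-(x i - y i - (x i - y' i))^2 / (8 * τ^2))) *
            ∏ j ∈ Finset.univ.erase i, ENNReal.ofReal (C * (ε^2 / τ)) := 
              mul_le_mul' hi2 (Finset.prod_le_prod' fun j _ => (h2 j).1)
        _ = ENNReal.ofReal ((C * (ε^2 / τ))^d * Real.exp (-(x i - y i - (x i - y' i))^2 / (8 * τ^2))) := by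
            rw [Finset.prod_const, Finset.card_erase_of_mem (Finset.mem_univ i), Finset.card_univ,
              Fintype.card_fin, ← ENNReal.ofReal_pow (by positivity), ← ENNReal.ofReal_mul (by positivity)]
            congr 1
            obtain ⟨n, rfl⟩ : ∃ n, d = n + 1 := ⟨d - 1, by omega⟩
            rw [Nat.add_sub_cancel, pow_succ]; ring
        _ ≤ ENNReal.ofReal (C^d * K * (ε^2)^d / D^d) := by
            apply ENNReal.ofReal_le_ofReal
            have hw : 1 ≤ D / τ := by rw [one_le_div τ0]; exact hDτ.le
            have h3 := exp_aux hw hd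
            rw [← hK] at h3
            have h4 : Real.exp (-(x i - y i - (x i - y' i))^2 / (8 * τ^2)) ≤
                Real.exp (-((D / τ)^2 / (8 * d^2))) := by
              apply Real.exp_le_exp.2
              rw [neg_div, ← sq_abs, eu]
              apply neg_le_neg
              have : D^2 ≤ d^2 * |y i - y' i|^2 := by
                rw [← mul_pow]; exact pow_le_pow_left₀ D0.le hi 2
              rw [div_pow, div_div, div_le_div_iff₀ (by positivity) (by positivity)]
              nlinarith [mul_le_mul_of_nonneg_left this (by positivity : 0 ≤ 8 * τ^2)]
            have h5 : (C * (ε^2 / τ))^d = C^d * (ε^2)^d / D^d * (D/τ)^d := by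
              rw [mul_pow, div_pow, div_pow]; field_simp
            calc _ ≤ (C^d * (ε^2)^d / D^d * (D/τ)^d) * Real.exp (-((D / τ)^2 / (8 * d^2))) := by
                  rw [h5]; gcongr
              _ = C^d * (ε^2)^d / D^d * ((D/τ)^d * Real.exp (-((D / τ)^2 / (8 * d^2)))) := by ring
              _ ≤ C^d * (ε^2)^d / D^d * K := by gcongr
              _ = _ := by ring
        _ ≤ _ := by
            apply ENNReal.ofReal_le_ofReal
            have : 0 ≤ C^d := by positivity
            have : 0 ≤ (C1 * (4 * d))^d := by positivity
            gcongr; linarith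
    · calc _ ≤ ∏ i : Fin d, ENNReal.ofReal (C1 * ε) := Finset.prod_le_prod' fun i _ => h1 i
        _ = ENNReal.ofReal ((C1 * ε)^d) := by
          rw [Finset.prod_const, Finset.card_univ, Fintype.card_fin, ← ENNReal.ofReal_pow (by positivity)]
        _ ≤ ENNReal.ofReal ((C1 * (4 * d))^d * (ε^2)^d / D^d) := by
          apply ENNReal.ofReal_le_ofReal
          rw [← mul_pow, ← div_pow]
          apply pow_le_pow_left₀ (by positivity)
          rw [le_div_iff₀ D0]
          have : D ≤ d * (4 * ε) := hi.trans (by gcongr)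
          nlinarith [mul_le_mul_of_nonneg_left this (by positivity : 0 ≤ C1 * ε)]
        _ ≤ _ := by
            apply ENNReal.ofReal_le_ofReal
            have : 0 ≤ C^d := by positivity
            have : 0 ≤ C^d * K := by positivity
            gcongr; linarith

lemma cauchy_schwarz {X : Ω → ℝ≥0∞} (hX : Measurable X) :
    (∫⁻ ω, X ω ∂P)^2 ≤ (∫⁻ ω, X ω ^ 2 ∂P) * P {ω | X ω ≠ 0} := by
  have mA : MeasurableSet {ω | X ω ≠ 0} := hX (measurableSet_singleton 0).compl
  have h := ENNReal.lintegral_mul_le_Lp_mul_Lq P (p := 2) (q := 2) Real.HolderConjugate.two_two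
    hX.aemeasurable (g := indicator {ω | X ω ≠ 0} 1) ((measurable_one.indicator mA).aemeasurable)
  have e1 : (X * indicator {ω | X ω ≠ 0} 1) = X := by
    ext ω
    by_cases hω : X ω = 0
    · simp [hω]
    · simp [indicator, hω]
  have e2 : ∀ ω, (indicator {ω | X ω ≠ 0} (1 : Ω → ℝ≥0∞) ω) ^ (2:ℝ) = indicator {ω | X ω ≠ 0} 1 ω := by
    intro ω
    by_cases hω : X ω = 0 <;> simp [indicator, hω]
  rw [e1] at h
  simp only [e2] at h
  rw [lintegral_indicator_one mA] at h
  have h2 := pow_le_pow_left' h 2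
  rw [mul_pow, ← ENNReal.rpow_natCast, ← ENNReal.rpow_natCast, ← ENNReal.rpow_natCast, ← ENNReal.rpow_mul, ← ENNReal.rpow_mul] at h2
  simpa using h2

end Part7


section Part8
open ProbabilityTheory

variable {Ω : Type*} [MeasurableSpace Ω] {P : Measure Ω} [IsProbabilityMeasure P] {H : ℝ} {d : ℕ}
  {B : Ω → ℝ → EuclideanSpace ℝ (Fin d)}

lemma joint_meas (hB : IsFBM P H d B) : Measurable fun q : ℝ × Ω => B q.2 (pj q.1) := by
  refine measurable_uncurry_of_continuous_of_measurable (u := fun (t : ℝ) (ω : Ω) => B ω (pj t)) ?_ ?_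
  · intro ω
    have hc : Continuous fun t => (pj t : ℝ) := continuous_subtype_val.comp (continuous_projIcc (h := zero_le_one))
    exact (hB.cont ω).comp_continuous hc fun t => (pj t).2
  · intro t; exact hB.meas _

def boxS (B : Ω → ℝ → EuclideanSpace ℝ (Fin d)) (x : EuclideanSpace ℝ (Fin d)) (ε : ℝ) :
    Set (Ω × (ℝ × EuclideanSpace ℝ (Fin d))) :=
  {q | ∀ i, |B q.1 (pj q.2.1) i - (x i - q.2.2 i)| ≤ ε}

lemma boxS_meas (hB : IsFBM P H d B) (x : EuclideanSpace ℝ (Fin d)) (ε : ℝ) : MeasurableSet (boxS B x ε) := by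
  have h := joint_meas hB
  have h1 : Measurable fun q : Ω × (ℝ × EuclideanSpace ℝ (Fin d)) => B q.1 (pj q.2.1) :=
    h.comp (measurable_snd.fst.prodMk measurable_fst)
  unfold boxS
  rw [ofPred_forall]
  refine MeasurableSet.iInter fun i => measurableSet_le ?_ measurable_const
  have h2 : Measurable fun q : Ω × (ℝ × EuclideanSpace ℝ (Fin d)) => B q.1 (pj q.2.1) i :=
    (by fun_prop : Measurable fun v : EuclideanSpace ℝ (Fin d) => v i).comp h1
  have h3 : Measurable fun q : Ω × (ℝ × EuclideanSpace ℝ (Fin d)) => q.2.2 i := by fun_prop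
  exact (h2.sub (h3.const_sub _)).abs

lemma kernel_eq (hd : 0 < d) {r : ℝ} (hr : 0 < r) : radialKernel d r = ENNReal.ofReal ((r^d)⁻¹) := by
  have d0 : (0:ℝ) < d := by exact_mod_cast hd
  rw [radialKernel, if_pos d0, ENNReal.rpow_neg, ENNReal.rpow_natCast, ENNReal.ofReal_inv_of_pos (by positivity),
    ENNReal.ofReal_pow hr.le]

lemma kernel_zero (hd : 0 < d) : radialKernel d 0 = ⊤ := by
  have d0 : (0:ℝ) < d := by exact_mod_cast hd
  rw [radialKernel, if_pos d0]
  simp [d0]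

lemma lower_bound (hH : 0 < H) (hH1 : H < 1) (hd : 0 < d) (hB : IsFBM P H d B) {a b : ℝ} (ha : 0 < a)
    (hab : a < b) (hb : b ≤ 1)
    (f : ℝ → EuclideanSpace ℝ (Fin d)) (hfm : Measurable f)
    (hfb : ∃ M₀ : ℝ, ∀ t ∈ Set.Icc (0 : ℝ) 1, ‖f t‖ ≤ M₀)
    (E : Set ℝ) (hE : MeasurableSet E) (hEI : E ⊆ Set.Icc a b) (M : ℝ) (hM : 0 < M) :
    ∃ c : ℝ, 0 < c ∧ ∀ x : EuclideanSpace ℝ (Fin d), (∀ i, |x i| ≤ M) →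
      ∀ μ : Measure (ℝ × EuclideanSpace ℝ (Fin d)), IsProbabilityMeasure μ →
        μ ((fun t => (t, f t)) '' E)ᶜ = 0 → energy (parabolicDist H) d μ ≠ ⊤ →
        1 ≤ energy (parabolicDist H) d μ * (ENNReal.ofReal c * P {ω | ∃ t ∈ E, B ω t + f t = x}) := by
  obtain ⟨M0, hM0⟩ := hfb
  obtain ⟨c, hc, h1⟩ := one_lower_d (d := d) hH hB ha (K := M + |M0|) (by positivity)
  obtain ⟨C, hC, h2⟩ := two_point_d hH hH1 hd hB ha (hab.trans_le hb)
  refine ⟨4 * C / (c^2)^d, by positivity, ?_⟩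
  intro x hx μ hμ hμG he
  set G := (fun t => (t, f t)) '' E with hG
  have Gm : MeasurableSet G := by
    have : G = Prod.fst ⁻¹' E ∩ {p | p.2 = f p.1} := by
      ext ⟨t, y⟩
      simp only [hG, mem_image, Prod.mk.injEq, mem_inter_iff, mem_preimage, mem_ofPred_eq]
      constructor
      · rintro ⟨t', ht', rfl, rfl⟩; exact ⟨ht', rfl⟩
      · rintro ⟨ht, rfl⟩; exact ⟨t, ht, rfl, rfl⟩
    rw [this]
    exact (measurable_fst hE).inter (measurableSet_eq_fun measurable_snd (hfm.comp measurable_fst))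
  have μG : μ G = 1 := (prob_compl_eq_zero_iff Gm).1 hμG
  obtain ⟨K, hKG, hKc, hK⟩ := Gm.exists_lt_isCompact (μ := μ) (r := 1/2) (by rw [μG]; exact ENNReal.half_lt_self one_ne_zero one_ne_top)
  have Kin : ∀ p ∈ K, p.1 ∈ E ∧ p.2 = f p.1 ∧ p.1 ∈ Icc a 1 ∧ (pj p.1 : ℝ) = p.1 := by
    intro p hp
    obtain ⟨t, ht, rfl⟩ := hKG hp
    have := hEI ht
    exact ⟨ht, rfl, ⟨this.1, this.2.trans hb⟩, by simp [pj, projIcc_of_mem zero_le_one (⟨ha.le.trans this.1, this.2.trans hb⟩ : t ∈ Icc (0:ℝ) 1)]⟩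
  set ν := μ.restrict K with hν
  have Km : MeasurableSet K := hKc.measurableSet
  set X : ℝ → Ω → ℝ≥0∞ := fun ε ω => ν (Prod.mk ω ⁻¹' boxS B x ε) with hX
  have mX : ∀ ε, Measurable (X ε) := fun ε => measurable_measure_prodMk_left (boxS_meas hB x ε)
  have EX : ∀ ε, 0 < ε → ε ≤ 1 → ENNReal.ofReal ((c * ε)^d) * (1/2) ≤ ∫⁻ ω, X ε ω ∂P := by
    intro ε hε hε1
    rw [← Measure.prod_apply (boxS_meas hB x ε), Measure.prod_apply_symm (boxS_meas hB x ε)]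
    calc ENNReal.ofReal ((c * ε)^d) * (1/2) ≤ ENNReal.ofReal ((c * ε)^d) * μ K := by gcongr
      _ = ∫⁻ p in K, ENNReal.ofReal ((c * ε)^d) ∂μ := by rw [setLIntegral_const]
      _ ≤ _ := by
        apply setLIntegral_mono' Km
        intro p hp
        obtain ⟨q1, q2, q3, q4⟩ := Kin p hp
        refine (h1 p.1 q3 (fun i => x i - p.2 i) ?_ ε hε hε1).trans (le_of_eq ?_)
        · intro i
          have h1 := hM0 p.1 ⟨ha.le.trans q3.1, q3.2⟩
          have h2 := coord_le (f p.1) 0 i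
          simp only [dist_zero_right, PiLp.zero_apply, sub_zero] at h2
          have := abs_sub (x i) (f p.1 i)
          have := hx i
          have := le_abs_self M0
          rw [q2]
          linarith
        · congr 1; ext ω; simp [boxS, q4]
  have EX2 : ∀ ε, 0 < ε → ∫⁻ ω, X ε ω ^ 2 ∂P ≤ ENNReal.ofReal (C * (ε^2)^d) * energy (parabolicDist H) d μ := by
    intro ε hε
    set T : Set (Ω × ((ℝ × EuclideanSpace ℝ (Fin d)) × (ℝ × EuclideanSpace ℝ (Fin d)))) :=
      {q | (q.1, q.2.1) ∈ boxS B x ε ∧ (q.1, q.2.2) ∈ boxS B x ε} with hT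
    have mT : MeasurableSet T := by
      apply MeasurableSet.inter
      · exact (measurable_fst.prodMk measurable_snd.fst) (boxS_meas hB x ε)
      · exact (measurable_fst.prodMk measurable_snd.snd) (boxS_meas hB x ε)
    have e1 : ∀ ω, X ε ω ^ 2 = (ν.prod ν) (Prod.mk ω ⁻¹' T) := by
      intro ω
      rw [sq, hX]
      simp only
      rw [← Measure.prod_prod]
      rfl
    simp only [e1]
    rw [← Measure.prod_apply mT, Measure.prod_apply_symm mT,
      lintegral_prod _ (measurable_measure_prodMk_right mT).aemeasurable]
    unfold energy
    have pw : ∀ p ∈ K, ∀ p' ∈ K, P ((fun ω => (ω, (p, p'))) ⁻¹' T) ≤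
        ENNReal.ofReal (C * (ε^2)^d) * radialKernel d (parabolicDist H p p') := by
      intro p hp p' hp'
      obtain ⟨q1, q2, q3, q4⟩ := Kin p hp
      obtain ⟨r1, r2, r3, r4⟩ := Kin p' hp'
      by_cases hpp : p.1 = p'.1
      · have : parabolicDist H p p' = 0 := by
          rw [parabolicDist, q2, r2, hpp]; simp [Real.zero_rpow hH.ne']
        rw [this, kernel_zero hd, ENNReal.mul_top (by simp; positivity)]
        exact le_top
      · have τ0 : 0 < |p.1 - p'.1| ^ H := Real.rpow_pos_of_pos (abs_pos.2 (sub_ne_zero.2 hpp)) _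
        have h3 := h2 p.1 q3 p'.1 r3 hpp x p.2 p'.2 ε hε
        have ep : parabolicDist H p p' = max (|p.1 - p'.1| ^ H) (dist p.2 p'.2) := rfl
        rw [ep, kernel_eq hd (lt_max_of_lt_left τ0), ← ENNReal.ofReal_mul (by positivity), ← div_eq_mul_inv]
        refine le_trans (le_of_eq ?_) h3
        congr 1; ext ω
        simp only [hT, boxS, mem_preimage, mem_ofPred_eq, q4, r4, forall_and]
    calc _ ≤ ∫⁻ p in K, ∫⁻ p' in K, ENNReal.ofReal (C * (ε^2)^d) * radialKernel d (parabolicDist H p p') ∂μ ∂μ := by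
          apply setLIntegral_mono' Km
          intro p hp
          apply setLIntegral_mono' Km
          intro p' hp'
          exact pw p hp p' hp'
      _ = ENNReal.ofReal (C * (ε^2)^d) * ∫⁻ p in K, ∫⁻ p' in K, radialKernel d (parabolicDist H p p') ∂μ ∂μ := by
          simp_rw [lintegral_const_mul' _ _ ENNReal.ofReal_ne_top]
      _ ≤ _ := by
          gcongr
          · exact Measure.restrict_le_self
          · exact Measure.restrict_le_self
  have key : ∀ ε, 0 < ε → ε ≤ 1 → 1 ≤ energy (parabolicDist H) d μ * (ENNReal.ofReal (4 * C / (c^2)^d) * P {ω | X ε ω ≠ 0}) := by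
    intro ε hε hε1
    have h3 := cauchy_schwarz (P := P) (mX ε)
    have h4 : (ENNReal.ofReal ((c * ε)^d) * (1/2))^2 ≤ ENNReal.ofReal (C * (ε^2)^d) * energy (parabolicDist H) d μ * P {ω | X ε ω ≠ 0} :=
      (pow_le_pow_left' (EX ε hε hε1) 2).trans (h3.trans (by gcongr; exact EX2 ε hε))
    have e1 : (1:ℝ≥0∞)/2 = ENNReal.ofReal (1/2) := by
      rw [ENNReal.ofReal_div_of_pos (by norm_num)]; simp
    rw [e1, ← ENNReal.ofReal_mul (by positivity), ← ENNReal.ofReal_pow (by positivity)] at h4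
    set L := (((c * ε)^d) * (1/2))^2 with hL
    have L0 : 0 < L := by positivity
    have e2 : L⁻¹ * (C * (ε^2)^d) = 4 * C / (c^2)^d := by
      rw [hL]; field_simp; ring
    calc (1:ℝ≥0∞) = ENNReal.ofReal L⁻¹ * ENNReal.ofReal L := by
          rw [← ENNReal.ofReal_mul (by positivity), inv_mul_cancel₀ L0.ne', ENNReal.ofReal_one]
      _ ≤ ENNReal.ofReal L⁻¹ * (ENNReal.ofReal (C * (ε^2)^d) * energy (parabolicDist H) d μ * P {ω | X ε ω ≠ 0}) := by
          gcongr
      _ = (ENNReal.ofReal L⁻¹ * ENNReal.ofReal (C * (ε^2)^d)) * energy (parabolicDist H) d μ * P {ω | X ε ω ≠ 0} := by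
          ring
      _ = _ := by
          rw [← ENNReal.ofReal_mul (by positivity), e2]; ring
  set A : ℕ → Set Ω := fun n => {ω | X (1 / (n + 1)) ω ≠ 0} with hA
  have Am : ∀ n, MeasurableSet (A n) := fun n => (mX _) (measurableSet_singleton 0).compl
  have Aanti : Antitone A := by
    intro m n hmn ω hω
    simp only [hA, mem_ofPred_eq] at hω ⊢
    intro h0
    apply hω
    refine measure_mono_null ?_ h0
    intro p hp i
    refine (hp i).trans ?_
    exact Nat.one_div_le_one_div hmn
  have Asub : (⋂ n, A n) ⊆ {ω | ∃ t ∈ E, B ω t + f t = x} := by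
    intro ω hω
    have hc' : Continuous fun t => (pj t : ℝ) := continuous_subtype_val.comp (continuous_projIcc (h := zero_le_one))
    have hcB : Continuous fun t => B ω (pj t) := (hB.cont ω).comp_continuous hc' fun t => (pj t).2
    have hex : ∀ n : ℕ, ∃ p ∈ K, ∀ i, |B ω (pj p.1) i - (x i - p.2 i)| ≤ 1 / (n + 1) := by
      intro n
      have h := mem_iInter.1 hω n
      simp only [hA, mem_ofPred_eq, hX, hν] at h
      rw [Measure.restrict_apply' Km] at h
      obtain ⟨p, hp1, hp2⟩ := nonempty_of_measure_ne_zero h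
      exact ⟨p, hp2, hp1⟩
    set F : ℝ × EuclideanSpace ℝ (Fin d) → ℝ := fun p => ∑ i, |B ω (pj p.1) i - (x i - p.2 i)| with hF
    have Fc : Continuous F := by
      have := hcB.comp (continuous_fst (X := ℝ) (Y := EuclideanSpace ℝ (Fin d)))
      simp only [Function.comp_def] at this
      refine continuous_finsetSum _ fun i _ => ?_
      have e : Continuous fun v : EuclideanSpace ℝ (Fin d) => v i := by fun_prop
      exact ((e.comp this).sub (continuous_const.sub (e.comp continuous_snd))).abs
    obtain ⟨p0, hp0, -⟩ := hex 0
    obtain ⟨p, hp, hmin⟩ := hKc.exists_isMinOn ⟨p0, hp0⟩ Fc.continuousOn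
    have hF0 : F p ≤ 0 := by
      have lim : Filter.Tendsto (fun n : ℕ => (d:ℝ) * (1 / ((n:ℝ) + 1))) Filter.atTop (nhds 0) := by
        simpa using tendsto_one_div_add_atTop_nhds_zero_nat.const_mul (d:ℝ)
      refine ge_of_tendsto' lim fun n => ?_
      obtain ⟨p', hp', hb'⟩ := hex n
      refine (isMinOn_iff.1 hmin p' hp').trans ?_
      calc F p' ≤ ∑ i : Fin d, (1 / ((n:ℝ) + 1)) := Finset.sum_le_sum fun i _ => hb' i
        _ = _ := by simp
    obtain ⟨q1, q2, q3, q4⟩ := Kin p hp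
    refine ⟨p.1, q1, ?_⟩
    ext i
    have h3 : |B ω (pj p.1) i - (x i - p.2 i)| ≤ F p :=
      Finset.single_le_sum (f := fun i => |B ω (pj p.1) i - (x i - p.2 i)|) (fun _ _ => abs_nonneg _) (Finset.mem_univ i)
    have h4 := abs_nonpos_iff.1 (h3.trans hF0)
    rw [q4, q2] at h4
    simp only [PiLp.add_apply]
    linarith
  have lim := tendsto_measure_iInter_atTop (μ := P) (fun n => (Am n).nullMeasurableSet) Aanti ⟨0, measure_ne_top _ _⟩
  have lim2 := ENNReal.Tendsto.const_mul (ENNReal.Tendsto.const_mul lim (Or.inr (ENNReal.ofReal_ne_top (r := 4 * C / (c^2)^d)))) (Or.inr he)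
    (a := energy (parabolicDist H) d μ)
  have : 1 ≤ energy (parabolicDist H) d μ * (ENNReal.ofReal (4 * C / (c^2)^d) * P (⋂ n, A n)) :=
    ge_of_tendsto' lim2 fun n => key _ (by positivity) (by
      rw [div_le_one (by positivity)]; linarith [(Nat.cast_nonneg n : (0:ℝ) ≤ n)])
  refine this.trans ?_
  gcongr
end Part8

/-- Theorem 5.1: for a bounded Borel measurable drift `f` and a Borel
set `E ⊆ I`, for every `M > 0` there is `c ≥ 1` such that for all `x ∈ [-M,M]^d`,
`c⁻¹ C^d_{ρ_H}(Gr_E(f)) ≤ ℙ(∃ t ∈ E, B^H(t) + f(t) = x) ≤ c ℋ^d_{ρ_H}(Gr_E(f))`. -/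
theorem statement15 {Ω : Type*} [MeasurableSpace Ω] (ℙ : Measure Ω) [IsProbabilityMeasure ℙ]
    (H : ℝ) (hH : H ∈ Set.Ioo (0 : ℝ) 1) (d : ℕ) (hd : 0 < d)
    (B : Ω → ℝ → EuclideanSpace ℝ (Fin d)) (hB : IsFBM ℙ H d B)
    (a b : ℝ) (ha : 0 < a) (hab : a < b) (hb : b ≤ 1)
    (f : ℝ → EuclideanSpace ℝ (Fin d)) (hfm : Measurable f)
    (hfb : ∃ M₀ : ℝ, ∀ t ∈ Set.Icc (0 : ℝ) 1, ‖f t‖ ≤ M₀)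
    (E : Set ℝ) (hE : MeasurableSet E) (hEI : E ⊆ Set.Icc a b)
    (M : ℝ) (hM : 0 < M) :
    ∃ c : ℝ, 1 ≤ c ∧ ∀ x : EuclideanSpace ℝ (Fin d), (∀ i, |x i| ≤ M) →
      (ENNReal.ofReal c)⁻¹ * capacity (parabolicDist H) d ((fun t => (t, f t)) '' E) ≤
          ℙ {ω | ∃ t ∈ E, B ω t + f t = x} ∧
        ℙ {ω | ∃ t ∈ E, B ω t + f t = x} ≤
          ENNReal.ofReal c * hMeasure (parabolicDist H) d ((fun t => (t, f t)) '' E) := by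
  obtain ⟨c1, hc1, h1⟩ := upper_bound hH.1 hH.2 hB ha hb f hfb E hEI M hM
  obtain ⟨c2, hc2, h2⟩ := lower_bound hH.1 hH.2 hd hB ha hab hb f hfm hfb E hE hEI M hM
  refine ⟨max 1 (max c1 c2), le_max_left _ _, fun x hx => ⟨?_, ?_⟩⟩
  · set A := {ω | ∃ t ∈ E, B ω t + f t = x}
    have hcap : capacity (parabolicDist H) d ((fun t => (t, f t)) '' E) ≤ ENNReal.ofReal c2 * ℙ A := by
      unfold capacity
      rw [ENNReal.inv_le_iff_inv_le]
      refine le_iInf fun μ => le_iInf fun hμ => le_iInf fun hμG => ?_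
      by_cases he : energy (parabolicDist H) d μ = ⊤
      · rw [he]; exact le_top
      · have h3 := h2 x hx μ hμ hμG he
        rw [← one_div]
        exact ENNReal.div_le_of_le_mul h3
    have c0 : ENNReal.ofReal (max 1 (max c1 c2)) ≠ 0 := by
      rw [ne_eq, ENNReal.ofReal_eq_zero, not_le]
      exact lt_max_of_lt_left one_pos
    calc _ ≤ (ENNReal.ofReal (max 1 (max c1 c2)))⁻¹ * (ENNReal.ofReal (max 1 (max c1 c2)) * ℙ A) := by
          gcongr
          refine hcap.trans ?_
          gcongr
          exact (le_max_right _ _).trans (le_max_right _ _)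
      _ = ℙ A := by
          rw [← mul_assoc, ENNReal.inv_mul_cancel c0 ENNReal.ofReal_ne_top, one_mul]
  · refine (h1 x hx).trans ?_
    gcongr
    exact (le_max_left _ _).trans (le_max_right _ _)
end
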